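/- arXiv:2512.07106 — 6 statements merged into one kernel-verified Lean document; each statement's English description precedes it below -/
import Mathlib

section
/- Let K be a countably infinite field and let E ⊆ K be a set with positive upper Banach density (with respect to the additive group (K,+)). Then for every Laurent polynomial p(X) = Σ_{k=−N}^{N} p_k X^k with coefficients in K and constant term p₀ = 0, there exists a ∈ K* such that p(a) ∈ E − E. -/
open Filter Topology Pointwise
open scoped Classical

/-- A (additive) Følner sequence in a countable abelian group. -/
def IsAddFolner {A : Type*} [AddCommGroup A] (F : ℕ → Finset A) : Prop :=
  (∀ n, (F n).Nonempty) ∧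
    ∀ a : A, Tendsto
      (fun n => ((F n ∩ (F n).image (· + a)).card : ℝ) / ((F n).card : ℝ)) atTop (𝓝 1)

/-- `E` has positive upper Banach density. -/
def PosUpperBanachDensity {A : Type*} [AddCommGroup A] (E : Set A) : Prop :=
  ∃ F : ℕ → Finset A, IsAddFolner F ∧
    0 < limsup (fun n => (((F n).filter (· ∈ E)).card : ℝ) / ((F n).card : ℝ)) atTop

/-! ### Bounded functions and means -/

def Bdd {X : Type*} (f : X → ℝ) : Prop := ∃ C, ∀ x, |f x| ≤ C

namespace Bdd
variable {X Y : Type*} {f g : X → ℝ}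

lemma const (c : ℝ) : Bdd (fun _ : X => c) := ⟨|c|, fun _ => le_rfl⟩

lemma add (hf : Bdd f) (hg : Bdd g) : Bdd (fun x => f x + g x) := by
  obtain ⟨C, hC⟩ := hf
  obtain ⟨D, hD⟩ := hg
  exact ⟨C + D, fun x => (abs_add_le _ _).trans (add_le_add (hC x) (hD x))⟩

lemma mul (hf : Bdd f) (hg : Bdd g) : Bdd (fun x => f x * g x) := by
  obtain ⟨C, hC⟩ := hf
  obtain ⟨D, hD⟩ := hg
  refine ⟨C * D, fun x => ?_⟩
  rw [abs_mul]
  exact mul_le_mul (hC x) (hD x) (abs_nonneg _) ((abs_nonneg _).trans (hC x))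

lemma cmul (c : ℝ) (hf : Bdd f) : Bdd (fun x => c * f x) := (const c).mul hf

lemma neg (hf : Bdd f) : Bdd (fun x => - f x) := by
  obtain ⟨C, hC⟩ := hf
  exact ⟨C, fun x => by rw [abs_neg]; exact hC x⟩

lemma sub (hf : Bdd f) (hg : Bdd g) : Bdd (fun x => f x - g x) := by
  simpa [sub_eq_add_neg] using hf.add hg.neg

lemma comp (hf : Bdd f) (u : Y → X) : Bdd (fun y => f (u y)) := by
  obtain ⟨C, hC⟩ := hf
  exact ⟨C, fun y => hC _⟩

lemma sum {ι : Type*} (s : Finset ι) {F : ι → X → ℝ} (h : ∀ i, Bdd (F i)) :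
    Bdd (fun x => ∑ i ∈ s, F i x) := by
  choose C hC using h
  exact ⟨∑ i ∈ s, C i, fun x => (Finset.abs_sum_le_sum_abs _ _).trans
    (Finset.sum_le_sum fun i _ => hC i x)⟩

end Bdd

structure IsMean {X : Type*} (M : (X → ℝ) → ℝ) : Prop where
  add : ∀ f g, Bdd f → Bdd g → M (fun x => f x + g x) = M f + M g
  smul : ∀ (c : ℝ) f, Bdd f → M (fun x => c * f x) = c * M f
  nonneg : ∀ f, Bdd f → (∀ x, 0 ≤ f x) → 0 ≤ M f
  one : M (fun _ => 1) = 1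

namespace IsMean
variable {X Y : Type*} {M : (X → ℝ) → ℝ}

lemma const (hM : IsMean M) (c : ℝ) : M (fun _ => c) = c := by
  have := hM.smul c (fun _ => 1) (Bdd.const 1)
  rw [hM.one] at this
  simpa using this

lemma sub (hM : IsMean M) {f g : X → ℝ} (hf : Bdd f) (hg : Bdd g) : M (fun x => f x - g x) = M f - M g := by
  have h1 := hM.add f (fun x => (-1) * g x) hf (hg.cmul _)
  rw [hM.smul _ _ hg] at h1
  have h2 : (fun x => f x - g x) = (fun x => f x + (-1) * g x) := by
    funext x; ring
  rw [h2, h1]; ring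

lemma sum (hM : IsMean M) {ι : Type*} (s : Finset ι) {F : ι → X → ℝ} (h : ∀ i, Bdd (F i)) :
    M (fun x => ∑ i ∈ s, F i x) = ∑ i ∈ s, M (F i) := by
  induction s using Finset.induction_on with
  | empty => simpa using hM.const 0
  | insert a s ha ih =>
    simp only [Finset.sum_insert ha]
    rw [hM.add _ _ (h a) (Bdd.sum s h), ih]

lemma mono (hM : IsMean M) {f g : X → ℝ} (hf : Bdd f) (hg : Bdd g) (h : ∀ x, f x ≤ g x) : M f ≤ M g := by
  have := hM.nonneg _ (hg.sub hf) (fun x => sub_nonneg.2 (h x))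
  rw [hM.sub hg hf] at this
  linarith

lemma abs_le (hM : IsMean M) {f : X → ℝ} {C : ℝ} (h : ∀ x, |f x| ≤ C) : |M f| ≤ C := by
  have hf : Bdd f := ⟨C, h⟩
  rw [_root_.abs_le]
  constructor
  · have := hM.mono (Bdd.const (-C)) hf (fun x => (_root_.abs_le.1 (h x)).1)
    rwa [hM.const] at this
  · have := hM.mono hf (Bdd.const C) (fun x => (_root_.abs_le.1 (h x)).2)
    rwa [hM.const] at this

lemma exists_lt (hM : IsMean M) {f : X → ℝ} (hf : Bdd f) {c : ℝ} (h : M f < c) : ∃ x, f x < c := by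
  by_contra hc
  push Not at hc
  have := hM.mono (Bdd.const c) hf hc
  rw [hM.const] at this
  linarith

lemma comp (hM : IsMean M) {A : X → (Y → ℝ) → ℝ} (hA : ∀ x, IsMean (A x)) :
    IsMean (fun f : Y → ℝ => M (fun x => A x f)) := by
  have hb : ∀ f : Y → ℝ, Bdd f → Bdd (fun x => A x f) := fun f ⟨C, hC⟩ =>
    ⟨C, fun x => (hA x).abs_le hC⟩
  constructor
  · intro f g hf hg
    rw [← hM.add _ _ (hb f hf) (hb g hg)]
    congr 1; funext x; exact (hA x).add f g hf hg
  · intro c f hf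
    rw [← hM.smul _ _ (hb f hf)]
    congr 1; funext x; exact (hA x).smul c f hf
  · intro f hf h0
    exact hM.nonneg _ (hb f hf) (fun x => (hA x).nonneg f hf h0)
  · have : (fun x => A x (fun _ => 1)) = fun _ => (1 : ℝ) := by
      funext x; exact (hA x).one
    show M (fun x => A x (fun _ => 1)) = 1
    rw [this, hM.one]

end IsMean

lemma bdd_ulim {X : Type*} (U : Ultrafilter X) {f : X → ℝ} (hf : Bdd f) :
    Tendsto f U (𝓝 (limUnder (U : Filter X) f)) := by
  obtain ⟨C, hC⟩ := hf
  have hc : IsCompact (Set.Icc (-C) C) := isCompact_Icc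
  have : (Ultrafilter.map f U : Filter ℝ) ≤ 𝓟 (Set.Icc (-C) C) := by
    rw [le_principal_iff]
    rw [Ultrafilter.coe_map, Filter.mem_map]
    exact Filter.mem_of_superset Filter.univ_mem (fun x _ => _root_.abs_le.1 (hC x))
  obtain ⟨y, _, hy⟩ := hc.ultrafilter_le_nhds _ this
  exact tendsto_nhds_limUnder ⟨y, hy⟩

lemma isMean_ulim {X : Type*} (U : Ultrafilter X) :
    IsMean (fun f : X → ℝ => limUnder (U : Filter X) f) := by
  constructor
  · intro f g hf hg
    exact tendsto_nhds_unique (bdd_ulim U (hf.add hg)) ((bdd_ulim U hf).add (bdd_ulim U hg))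
  · intro c f hf
    exact tendsto_nhds_unique (bdd_ulim U (hf.cmul c)) ((bdd_ulim U hf).const_mul c)
  · intro f hf h0
    exact ge_of_tendsto' (bdd_ulim U hf) h0
  · exact tendsto_const_nhds.limUnder_eq

lemma isMean_avg {X ι : Type*} (s : Finset ι) (hs : s.Nonempty) (u : ι → X) :
    IsMean (fun f : X → ℝ => (∑ i ∈ s, f (u i)) / (s.card : ℝ)) := by
  have hc : (0 : ℝ) < s.card := by exact_mod_cast hs.card_pos
  constructor
  · intro f g _ _
    simp only [Finset.sum_add_distrib, add_div]
  · intro c f _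
    simp only [← Finset.mul_sum, mul_div_assoc]
  · intro f _ h0
    exact div_nonneg (Finset.sum_nonneg fun i _ => h0 _) hc.le
  · simp [hc.ne']

/-- limits of the mean along an ultrafilter agree for asymptotically equal sequences -/
lemma ulim_congr {X : Type*} (U : Ultrafilter X) {f g : X → ℝ} (hf : Bdd f) (hg : Bdd g)
    (h : Tendsto (fun x => f x - g x) U (𝓝 0)) :
    limUnder (U : Filter X) f = limUnder (U : Filter X) g := by
  have := tendsto_nhds_unique h ((bdd_ulim U hf).sub (bdd_ulim U hg))
  linarith

/-! ### Invariant means on countable commutative groups -/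

noncomputable def cesaro {G : Type*} [CommGroup G] (g : G) (f : G → ℝ) (x : G) : ℝ :=
  limUnder ((hyperfilter ℕ : Ultrafilter ℕ) : Filter ℕ)
    (fun n : ℕ => (∑ i ∈ Finset.range (n + 1), f (g ^ i * x)) / ((Finset.range (n + 1)).card : ℝ))

lemma cesaro_mean {G : Type*} [CommGroup G] (g x : G) :
    IsMean (fun f : G → ℝ => cesaro g f x) :=
  (isMean_ulim (hyperfilter ℕ)).comp
    (A := fun (n : ℕ) (f : G → ℝ) =>
      (∑ i ∈ Finset.range (n + 1), f (g ^ i * x)) / ((Finset.range (n + 1)).card : ℝ))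
    (fun n => isMean_avg (Finset.range (n + 1)) (by simp) (fun i => g ^ i * x))

lemma cesaro_inv {G : Type*} [CommGroup G] (g : G) {f : G → ℝ} (hf : Bdd f) (x : G) :
    cesaro g f (g * x) = cesaro g f x := by
  obtain ⟨C, hC⟩ := hf
  apply ulim_congr
  · exact ⟨C, fun n => (isMean_avg (Finset.range (n + 1)) (by simp)
      (fun i => g ^ i * (g * x))).abs_le hC⟩
  · exact ⟨C, fun n => (isMean_avg (Finset.range (n + 1)) (by simp)
      (fun i => g ^ i * x)).abs_le hC⟩
  · refine Tendsto.mono_left ?_ Nat.hyperfilter_le_atTop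
    have key : ∀ n : ℕ, (∑ i ∈ Finset.range (n + 1), f (g ^ i * (g * x))) /
          ((Finset.range (n + 1)).card : ℝ) -
        (∑ i ∈ Finset.range (n + 1), f (g ^ i * x)) / ((Finset.range (n + 1)).card : ℝ)
        = (f (g ^ (n + 1) * x) - f x) * (1 / ((n : ℝ) + 1)) := by
      intro n
      have h1 : ∑ i ∈ Finset.range (n + 1), f (g ^ i * (g * x)) =
          ∑ i ∈ Finset.range (n + 1), f (g ^ (i + 1) * x) := by
        apply Finset.sum_congr rfl
        intro i _
        rw [pow_succ, mul_assoc]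
      have h2 := Finset.sum_range_sub (fun i => f (g ^ i * x)) (n + 1)
      rw [Finset.sum_sub_distrib] at h2
      rw [h1, ← sub_div, h2]
      simp [div_eq_mul_inv]
    simp_rw [key]
    apply bdd_le_mul_tendsto_zero' (2 * C)
    · filter_upwards with n
      have h1 := hC (g ^ (n + 1) * x)
      have h2 := hC x
      calc |f (g ^ (n + 1) * x) - f x| ≤ |f (g ^ (n + 1) * x)| + |f x| := abs_sub _ _
        _ ≤ 2 * C := by linarith
    · exact tendsto_one_div_add_atTop_nhds_zero_nat

noncomputable def iterC {G : Type*} [CommGroup G] (γ : ℕ → G) : ℕ → (G → ℝ) → G → ℝ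
  | 0, f => f
  | n + 1, f => cesaro (γ n) (iterC γ n f)

lemma iterC_mean {G : Type*} [CommGroup G] (γ : ℕ → G) (n : ℕ) (x : G) :
    IsMean (fun f : G → ℝ => iterC γ n f x) := by
  induction n generalizing x with
  | zero =>
    constructor <;> intros <;> simp_all [iterC]
  | succ n ih =>
    have := (cesaro_mean (γ n) x).comp (A := fun y f => iterC γ n f y) ih
    exact this

lemma iterC_bdd {G : Type*} [CommGroup G] (γ : ℕ → G) (n : ℕ) {f : G → ℝ} (hf : Bdd f) :
    Bdd (iterC γ n f) := by
  obtain ⟨C, hC⟩ := hf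
  exact ⟨C, fun x => (iterC_mean γ n x).abs_le hC⟩

lemma iterC_trans {G : Type*} [CommGroup G] (γ : ℕ → G) (n : ℕ) (f : G → ℝ) (h x : G) :
    iterC γ n (fun y => f (h * y)) x = iterC γ n f (h * x) := by
  induction n generalizing x with
  | zero => rfl
  | succ n ih =>
    simp only [iterC, cesaro, ih]
    simp only [mul_left_comm]

lemma iterC_inv {G : Type*} [CommGroup G] (γ : ℕ → G) (i n : ℕ) (hn : i < n) {f : G → ℝ}
    (hf : Bdd f) (x : G) : iterC γ n f (γ i * x) = iterC γ n f x := by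
  induction n generalizing x with
  | zero => omega
  | succ n ih =>
    rcases Nat.lt_succ_iff_lt_or_eq.1 hn with h | h
    · simp only [iterC, cesaro]
      have : ∀ j : ℕ, iterC γ n f (γ n ^ j * (γ i * x)) = iterC γ n f (γ n ^ j * x) := by
        intro j
        rw [mul_left_comm, ih h]
      simp only [this]
    · subst h
      exact cesaro_inv _ (iterC_bdd γ i hf) x

lemma exists_inv_mean (G : Type*) [CommGroup G] [Countable G] :
    ∃ M : (G → ℝ) → ℝ, IsMean M ∧
      ∀ (h : G) (f : G → ℝ), Bdd f → M (fun y => f (h * y)) = M f := by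
  obtain ⟨γ, hγ⟩ := exists_surjective_nat G
  refine ⟨fun f => limUnder ((hyperfilter ℕ : Ultrafilter ℕ) : Filter ℕ)
    (fun n => iterC γ n f 1), ?_, ?_⟩
  · exact (isMean_ulim (hyperfilter ℕ)).comp (A := fun n f => iterC γ n f 1)
      (fun n => iterC_mean γ n 1)
  · intro h f hf
    obtain ⟨i, rfl⟩ := hγ h
    obtain ⟨C, hC⟩ := hf
    apply ulim_congr
    · exact ⟨C, fun n => (iterC_mean γ n 1).abs_le (fun x => hC _)⟩
    · exact ⟨C, fun n => (iterC_mean γ n 1).abs_le hC⟩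
    · refine Tendsto.mono_left ?_ Nat.hyperfilter_le_atTop
      refine Tendsto.congr' ?_ tendsto_const_nhds
      filter_upwards [eventually_gt_atTop i] with n hn
      rw [iterC_trans, iterC_inv γ i n hn ⟨C, hC⟩]
      simp

/-! ### Positive definite functions -/

def PD {V : Type*} [AddCommGroup V] (φ : V → ℝ) : Prop :=
  (∀ x, φ (-x) = φ x) ∧
  ∀ (ι : Type) [Fintype ι] (c : ι → ℝ) (x : ι → V), 0 ≤ ∑ i, ∑ j, c i * c j * φ (x i - x j)

namespace PD
variable {V : Type*} [AddCommGroup V] {φ : V → ℝ}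

lemma abs_le (h : PD φ) (x : V) : |φ x| ≤ φ 0 := by
  have h1 := h.2 (Fin 2) ![1, 1] ![x, 0]
  have h2 := h.2 (Fin 2) ![1, -1] ![x, 0]
  simp [Fin.sum_univ_two, h.1] at h1 h2
  rw [_root_.abs_le]
  constructor <;> linarith

lemma bdd (h : PD φ) : Bdd φ := ⟨φ 0, h.abs_le⟩

lemma zero_nonneg (h : PD φ) : 0 ≤ φ 0 := (abs_nonneg _).trans (h.abs_le 0)

lemma sum_range (h : PD φ) (N : ℕ) (x : ℕ → V) :
    0 ≤ ∑ i ∈ Finset.range N, ∑ j ∈ Finset.range N, φ (x i - x j) := by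
  have := h.2 (Fin N) (fun _ => 1) (fun i => x i)
  simpa [Finset.sum_range] using this

/-- the quadratic form with an extra point `0` of weight `l` -/
lemma sum_option (h : PD φ) (N : ℕ) (x : ℕ → V) (l : ℝ) :
    0 ≤ l ^ 2 * φ 0 + 2 * l * ∑ i ∈ Finset.range N, φ (x i)
      + ∑ i ∈ Finset.range N, ∑ j ∈ Finset.range N, φ (x i - x j) := by
  have := h.2 (Option (Fin N)) (fun o => o.elim l (fun _ => 1)) (fun o => o.elim 0 (fun i => x i))
  simp only [Fintype.sum_option, Option.elim_none, Option.elim_some, sub_zero, zero_sub, h.1,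
    one_mul, mul_one, Finset.sum_add_distrib, ← Finset.mul_sum] at this
  simp only [Finset.sum_range]
  linarith

end PD

/-- affine invariant means on a field -/
structure AffMean {K : Type*} [Field K] (M : (K → ℝ) → ℝ) : Prop extends IsMean M where
  trans : ∀ (h : K) (f : K → ℝ), Bdd f → M (fun s => f (s + h)) = M f
  dil : ∀ (t : K), t ≠ 0 → ∀ f : K → ℝ, Bdd f → M (fun s => f (t * s)) = M f

namespace AffMean
variable {K : Type*} [Field K] {M : (K → ℝ) → ℝ}

lemma pd_nonneg (hM : AffMean M) {g : K → ℝ} (hg : PD g) : 0 ≤ M g := by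
  by_contra hq
  push Not at hq
  set q := M g with hqdef
  have key : ∀ N : ℕ, ∃ s : ℕ → K, ∑ i ∈ Finset.range N, ∑ j ∈ Finset.range N, g (s i - s j)
      ≤ N * g 0 + (q / 2) * (N * (N - 1)) := by
    intro N
    induction N with
    | zero => exact ⟨fun _ => 0, by simp⟩
    | succ N ih =>
      obtain ⟨s, hs⟩ := ih
      have hz : ∃ z : K, ∑ i ∈ Finset.range N, g (z - s i) ≤ N * (q / 2) := by
        rcases Nat.eq_zero_or_pos N with rfl | hN
        · exact ⟨0, by simp⟩
        · have hNr : (0 : ℝ) < N := by exact_mod_cast hN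
          have hb : ∀ i, Bdd (fun z => g (z - s i)) := fun i => hg.bdd.comp _
          have hm : M (fun z => ∑ i ∈ Finset.range N, g (z - s i)) < N * (q / 2) := by
            rw [hM.sum _ hb]
            have : ∀ i, M (fun z => g (z - s i)) = q := by
              intro i
              have := hM.trans (-s i) g hg.bdd
              simpa [sub_eq_add_neg] using this
            simp only [this, Finset.sum_const, Finset.card_range, nsmul_eq_mul]
            nlinarith
          obtain ⟨z, hz⟩ := hM.exists_lt (Bdd.sum _ hb) hm
          exact ⟨z, hz.le⟩
      obtain ⟨z, hz⟩ := hz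
      refine ⟨fun n => if n < N then s n else z, ?_⟩
      have e1 : ∀ i ∈ Finset.range N, (fun n => if n < N then s n else z) i = s i := by
        intro i hi
        simp [Finset.mem_range.1 hi]
      have e2 : ∑ i ∈ Finset.range N, ∑ j ∈ Finset.range N,
          g ((fun n => if n < N then s n else z) i - (fun n => if n < N then s n else z) j) =
          ∑ i ∈ Finset.range N, ∑ j ∈ Finset.range N, g (s i - s j) := by
        apply Finset.sum_congr rfl
        intro i hi
        apply Finset.sum_congr rfl
        intro j hj
        rw [e1 i hi, e1 j hj]
      have e3 : ∑ i ∈ Finset.range N,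
          g ((fun n => if n < N then s n else z) i - (fun n => if n < N then s n else z) N) =
          ∑ i ∈ Finset.range N, g (z - s i) := by
        apply Finset.sum_congr rfl
        intro i hi
        rw [e1 i hi]
        simp only [lt_irrefl, if_false]
        rw [← hg.1, neg_sub]
      have e4 : ∑ i ∈ Finset.range N,
          g ((fun n => if n < N then s n else z) N - (fun n => if n < N then s n else z) i) =
          ∑ i ∈ Finset.range N, g (z - s i) := by
        apply Finset.sum_congr rfl
        intro i hi
        rw [e1 i hi]
        simp only [lt_irrefl, if_false]
      rw [Finset.sum_range_succ, Finset.sum_range_succ]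
      simp only [Finset.sum_range_succ (n := N)] 
      rw [Finset.sum_add_distrib, e2, e3, e4, sub_self]
      push_cast
      nlinarith
  obtain ⟨n, hn⟩ := exists_nat_gt (g 0 / (-(q / 2)))
  have hq2 : 0 < -(q / 2) := by linarith
  rw [div_lt_iff₀ hq2] at hn
  obtain ⟨s, hs⟩ := key (n + 1)
  have h0 := hg.sum_range (n + 1) s
  push_cast at hs
  have hn0 : (0 : ℝ) ≤ n := n.cast_nonneg
  nlinarith

lemma const_off [Infinite K] (hM : AffMean M) {f g : K → ℝ} (hf : Bdd f) (hg : Bdd g)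
    (S : Finset K) (h : ∀ s, s ∉ S → f s = g s) : M f = M g := by
  have bp : ∀ p : K, Bdd (fun s => if s = p then (1 : ℝ) else 0) := fun p =>
    ⟨1, fun s => by dsimp only; split_ifs <;> simp⟩
  have hp : ∀ p : K, M (fun s => if s = p then (1 : ℝ) else 0) =
      M (fun s => if s = 0 then (1 : ℝ) else 0) := by
    intro p
    rw [← hM.trans (-p) _ (bp 0)]
    congr 1
    funext s
    simp [← sub_eq_add_neg, sub_eq_zero]
  set m := M (fun s => if s = 0 then (1 : ℝ) else 0) with hm
  have hT : ∀ T : Finset K, M (fun s => ∑ p ∈ T, if s = p then (1 : ℝ) else 0) = T.card * m := by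
    intro T
    rw [hM.sum T bp]
    simp [hp]
  have hm0 : 0 ≤ m := hM.nonneg _ (bp 0) (fun s => by positivity)
  have hm1 : m = 0 := by
    by_contra hne
    have hpos : 0 < m := lt_of_le_of_ne hm0 (Ne.symm hne)
    obtain ⟨n, hn⟩ := exists_nat_gt (1 / m)
    obtain ⟨T, hTc⟩ := Infinite.exists_subset_card_eq K n
    have h1 := hT T
    have h2 : M (fun s => ∑ p ∈ T, if s = p then (1 : ℝ) else 0) ≤ 1 := by
      have := hM.mono (Bdd.sum T bp) (Bdd.const 1)
        (fun s => by rw [Finset.sum_ite_eq]; split_ifs <;> simp)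
      rwa [hM.const] at this
    rw [hTc] at h1
    rw [div_lt_iff₀ hpos] at hn
    linarith
  obtain ⟨C, hC⟩ := hf.sub hg
  have hC0 : 0 ≤ C := (abs_nonneg _).trans (hC 0)
  have bS := Bdd.sum S bp
  have hle : ∀ s, |f s - g s| ≤ C * ∑ p ∈ S, if s = p then (1 : ℝ) else 0 := by
    intro s
    rw [Finset.sum_ite_eq]
    by_cases hs : s ∈ S
    · simpa [hs] using hC s
    · simp [hs, h s hs]
  have h1 := hM.mono (hf.sub hg) (bS.cmul C) (fun s => (_root_.abs_le.1 (hle s)).2)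
  have h2 := hM.mono (hg.sub hf) (bS.cmul C) (fun s => by
    have := (_root_.abs_le.1 (hle s)).1
    linarith)
  rw [hM.sub hf hg, hM.smul _ _ bS, hT, hm1] at h1
  rw [hM.sub hg hf, hM.smul _ _ bS, hT, hm1] at h2
  linarith

/-- van der Corput lemma -/
lemma vdc {V : Type*} [AddCommGroup V] (hM : AffMean M) {φ : V → ℝ} (hφ : PD φ)
    (F : ℕ → K → V) (m : ℝ) (h1 : ∀ n, M (fun s => φ (F n s)) = m)
    (h2 : ∀ n n', n ≠ n' → M (fun s => φ (F n s - F n' s)) = 0) : m = 0 := by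
  have b1 : ∀ n, Bdd (fun s => φ (F n s)) := fun n => hφ.bdd.comp _
  have b2 : ∀ n n', Bdd (fun s => φ (F n s - F n' s)) := fun n n' => 
    hφ.bdd.comp (fun s => F n s - F n' s)
  have key : ∀ (N : ℕ) (l : ℝ), 0 ≤ l ^ 2 * φ 0 + 2 * l * (N * m) + N * φ 0 := by
    intro N l
    have := hM.nonneg _ (((Bdd.const (l ^ 2 * φ 0)).add
      ((Bdd.sum (Finset.range N) b1).cmul (2 * l))).add
        (Bdd.sum (Finset.range N) (fun i => Bdd.sum (Finset.range N) (fun j => b2 i j))))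
        (fun s => hφ.sum_option N (fun n => F n s) l)
    rw [hM.add _ _ ((Bdd.const (l ^ 2 * φ 0)).add
      ((Bdd.sum (Finset.range N) b1).cmul (2 * l)))
        (Bdd.sum (Finset.range N) (fun i => Bdd.sum (Finset.range N) (fun j => b2 i j))),
      hM.add _ _ (Bdd.const (l ^ 2 * φ 0)) ((Bdd.sum (Finset.range N) b1).cmul (2 * l)),
      hM.const, hM.smul _ _ (Bdd.sum (Finset.range N) b1), hM.sum _ b1,
      hM.sum _ (fun i => Bdd.sum (Finset.range N) (fun j => b2 i j))] at this
    have e : ∀ i ∈ Finset.range N, M (fun s => ∑ j ∈ Finset.range N, φ (F i s - F j s)) = φ 0 := by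
      intro i hi
      rw [hM.sum _ (fun j => b2 i j), Finset.sum_eq_single_of_mem i hi]
      · simp only [sub_self]
        exact hM.const _
      · intro j _ hj
        exact h2 i j hj.symm
    rw [Finset.sum_congr rfl e] at this
    simpa [h1] using this
  by_contra hm
  have hm2 : 0 < m ^ 2 := by positivity
  have h0 := hφ.zero_nonneg
  obtain ⟨n, hn⟩ := exists_nat_gt ((φ 0) * (φ 0) / m ^ 2 + 1)
  have hn' : φ 0 * φ 0 < n * m ^ 2 - m ^ 2 := by
    have : φ 0 * φ 0 / m ^ 2 < n - 1 := by linarith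
    rw [div_lt_iff₀ hm2] at this
    linarith
  rcases h0.eq_or_lt with h0 | h0
  · have := key 1 (-m)
    rw [← h0] at this
    norm_num at this
    nlinarith
  · -- choose l = - n m / φ 0
    have := key n (-(n * m / φ 0))
    have e : (-(n * m / φ 0)) ^ 2 * φ 0 + 2 * (-(n * m / φ 0)) * (n * m) + n * φ 0
        = n * (φ 0 * φ 0 - n * m ^ 2) / φ 0 := by
      field_simp
      ring
    rw [e] at this
    have hn0 : (0 : ℝ) < n := by
      have : 0 ≤ φ 0 * φ 0 / m ^ 2 := by positivity
      linarith
    have : n * (φ 0 * φ 0 - n * m ^ 2) / φ 0 < 0 := by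
      apply div_neg_of_neg_of_pos _ h0
      apply mul_neg_of_pos_of_neg hn0
      linarith
    linarith

end AffMean

/-! ### The averaging operator along a coordinate -/

section Qop
variable {K : Type*} [Field K] {M : (K → ℝ) → ℝ} {ι : Type}

noncomputable def Qop (M : (K → ℝ) → ℝ) (k : ι) (φ : (ι → K) → ℝ) (x : ι → K) : ℝ :=
  M (fun s => φ (x + Pi.single k s))

def TInv (e : ι → ℤ) (φ : (ι → K) → ℝ) : Prop :=
  ∀ a : K, a ≠ 0 → ∀ x : ι → K, φ (fun i => a ^ e i * x i) = φ x

lemma pd_aux {φ : (ι → K) → ℝ} (hφ : PD φ) (k : ι) (κ : Type) [Fintype κ] (c : κ → ℝ)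
    (x : κ → ι → K) :
    PD (fun s : K => ∑ i, ∑ j, c i * c j * φ (x i - x j + Pi.single k s)) := by
  constructor
  · intro s
    dsimp only
    rw [Finset.sum_comm]
    refine Finset.sum_congr rfl fun i _ => Finset.sum_congr rfl fun j _ => ?_
    rw [mul_comm (c i), ← hφ.1]
    congr 2
    rw [Pi.single_neg]
    abel
  · intro κ' _ d s
    have := hφ.2 (κ' × κ) (fun p => d p.1 * c p.2) (fun p => x p.2 + Pi.single k (s p.1))
    simp only [Fintype.sum_prod_type] at this
    convert this using 1
    refine Finset.sum_congr rfl fun a _ => ?_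
    rw [Finset.sum_comm]
    refine Finset.sum_congr rfl fun b _ => ?_
    rw [Finset.mul_sum]
    refine Finset.sum_congr rfl fun i _ => ?_
    rw [Finset.mul_sum]
    refine Finset.sum_congr rfl fun j _ => ?_
    rw [show x i + Pi.single k (s a) - (x j + Pi.single k (s b)) =
      x i - x j + Pi.single k (s a - s b) by rw [Pi.single_sub]; abel]
    ring

lemma bdd_line {φ : (ι → K) → ℝ} (hφ : Bdd φ) (k : ι) (x : ι → K) :
    Bdd (fun s : K => φ (x + Pi.single k s)) := hφ.comp (fun s => x + Pi.single k s)

lemma Qop_sum (hM : AffMean M) {φ : (ι → K) → ℝ} (hφ : PD φ) (k : ι) (κ : Type) [Fintype κ]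
    (c : κ → ℝ) (x : κ → ι → K) :
    M (fun s : K => ∑ i, ∑ j, c i * c j * φ (x i - x j + Pi.single k s)) =
      ∑ i, ∑ j, c i * c j * Qop M k φ (x i - x j) := by
  have b : ∀ i j, Bdd (fun s : K => c i * c j * φ (x i - x j + Pi.single k s)) := fun i j =>
    (bdd_line hφ.bdd k (x i - x j)).cmul _
  rw [hM.sum _ (fun i => Bdd.sum _ (b i))]
  refine Finset.sum_congr rfl fun i _ => ?_
  rw [hM.sum _ (b i)]
  refine Finset.sum_congr rfl fun j _ => ?_
  exact hM.smul _ _ (bdd_line hφ.bdd k (x i - x j))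

lemma Qop_symm (hM : AffMean M) {φ : (ι → K) → ℝ} (hφ : PD φ) (k : ι) (x : ι → K) :
    Qop M k φ (-x) = Qop M k φ x := by
  unfold Qop
  rw [← hM.dil (-1) (by simp) _ (bdd_line hφ.bdd k x)]
  congr 1
  funext s
  rw [← hφ.1]
  congr 1
  rw [neg_one_mul, Pi.single_neg]
  abel

lemma Qop_pd (hM : AffMean M) {φ : (ι → K) → ℝ} (hφ : PD φ) (k : ι) : PD (Qop M k φ) := by
  refine ⟨Qop_symm hM hφ k, fun κ _ c x => ?_⟩
  rw [← Qop_sum hM hφ]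
  exact hM.pd_nonneg (pd_aux hφ k κ c x)

lemma Qop_sub_pd (hM : AffMean M) {φ : (ι → K) → ℝ} (hφ : PD φ) (k : ι) :
    PD (fun x => φ x - Qop M k φ x) := by
  refine ⟨fun x => by dsimp only; rw [Qop_symm hM hφ k, hφ.1], fun κ _ c x => ?_⟩
  simp only [mul_sub, Finset.sum_sub_distrib]
  rw [← Qop_sum hM hφ]
  have h := pd_aux hφ k κ c x
  have := (abs_le.1 (hM.abs_le h.abs_le)).2
  simp only [Pi.single_zero, add_zero] at this
  linarith

lemma Qop_inv (hM : AffMean M) {φ : (ι → K) → ℝ} (hφ : PD φ) {e : ι → ℤ} (hi : TInv e φ) (k : ι) :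
    TInv e (Qop M k φ) := by
  intro a ha x
  unfold Qop
  rw [← hM.dil (a ^ e k) (zpow_ne_zero _ ha) _ (bdd_line hφ.bdd k _)]
  congr 1
  funext s
  refine Eq.trans ?_ (hi a ha _)
  congr 1
  funext i
  simp only [Pi.add_apply]
  by_cases h : i = k
  · subst h; simp [mul_add]
  · simp [h]

lemma Qop_sub_inv (hM : AffMean M) {φ : (ι → K) → ℝ} (hφ : PD φ) {e : ι → ℤ} (hi : TInv e φ)
    (k : ι) : TInv e (fun x => φ x - Qop M k φ x) := by
  intro a ha x
  dsimp only
  rw [hi a ha, Qop_inv hM hφ hi k a ha]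

lemma Qop_indep (hM : AffMean M) {φ : (ι → K) → ℝ} (hφ : PD φ) (k : ι) (x : ι → K) (t : K) :
    Qop M k φ (x + Pi.single k t) = Qop M k φ x := by
  unfold Qop
  rw [← hM.trans t _ (bdd_line hφ.bdd k x)]
  congr 1
  funext s
  rw [Pi.single_add]
  congr 1
  abel

/-- `Zc M φ k`: the mean of `φ` along the `k`-th axis vanishes. -/
def Zc (M : (K → ℝ) → ℝ) (φ : (ι → K) → ℝ) (k : ι) : Prop := Qop M k φ 0 = 0

lemma Zc.all (hM : AffMean M) {φ : (ι → K) → ℝ} (hφ : PD φ) {k : ι} (h : Zc M φ k) (x : ι → K) :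
    Qop M k φ x = 0 := by
  have := (Qop_pd hM hφ k).abs_le x
  rw [h] at this
  exact abs_nonpos_iff.1 this

lemma Zc_sub_self (hM : AffMean M) {φ : (ι → K) → ℝ} (hφ : PD φ) (k : ι) :
    Zc M (fun x => φ x - Qop M k φ x) k := by
  unfold Zc
  have : Qop M k (fun x => φ x - Qop M k φ x) 0 = Qop M k φ 0 - Qop M k (Qop M k φ) 0 :=
    hM.sub (bdd_line hφ.bdd k 0) (bdd_line (Qop_pd hM hφ k).bdd k 0)
  rw [this]
  have h2 : Qop M k (Qop M k φ) 0 = M (fun s => Qop M k φ (0 + Pi.single k s)) := rfl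
  simp only [Qop_indep hM hφ] at h2
  rw [h2, hM.const, sub_self]

lemma Zc_both (hM : AffMean M) {φ : (ι → K) → ℝ} (hφ : PD φ) (k k' : ι) (h : Zc M φ k') :
    Zc M (Qop M k φ) k' ∧ Zc M (fun x => φ x - Qop M k φ x) k' := by
  unfold Zc at h ⊢
  have e : Qop M k' (fun x => φ x - Qop M k φ x) 0 = Qop M k' φ 0 - Qop M k' (Qop M k φ) 0 :=
    hM.sub (bdd_line hφ.bdd k' 0) (bdd_line (Qop_pd hM hφ k).bdd k' 0)
  have h1 := (Qop_pd hM (Qop_pd hM hφ k) k').zero_nonneg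
  have h2 := (Qop_pd hM (Qop_sub_pd hM hφ k) k').zero_nonneg
  rw [e, h] at *
  constructor <;> linarith

end Qop

/-! ### Lemma A -/

section LemA
open Polynomial

lemma exists_seq_avoid {K : Type*} [Infinite K] (S : Finset K) (bad : K → Finset K) :
    ∃ t : ℕ → K, (∀ n, t n ∉ S) ∧ ∀ m n, m < n → t n ∉ bad (t m) := by
  apply exists_seq_of_forall_finset_exists (fun x => x ∉ S) (fun x y => y ∉ bad x)
  intro s _
  obtain ⟨y, hy⟩ := Infinite.exists_notMem_finset (S ∪ s.biUnion bad)
  simp only [Finset.mem_union, Finset.mem_biUnion, not_or, not_exists, not_and] at hy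
  exact ⟨y, hy.1, hy.2⟩

variable {K : Type*} [Field K] [Infinite K] {M : (K → ℝ) → ℝ} {ι : Type} [Fintype ι]

lemma polyA (hM : AffMean M) {φ : (ι → K) → ℝ} (hφ : PD φ) {e : ι → ℤ} (he : Function.Injective e)
    (hi : TInv e φ) (i0 : ι) (hZ : Zc M φ i0) :
    ∀ n : ℕ, ∀ f : ι → K[X], (∑ i, (f i).support.card) ≤ n → (f i0).coeff 1 ≠ 0 →
      (∀ i, f i ≠ 0 → 0 < e i ∧ e i ≤ e i0) → M (fun s => φ (fun i => (f i).eval s)) = 0 := by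
  intro n
  induction n with
  | zero =>
    intro f hn h1 _
    exfalso
    have := Finset.sum_eq_zero_iff.1 (Nat.le_zero.1 hn) i0 (Finset.mem_univ _)
    rw [Finset.card_eq_zero, support_eq_empty] at this
    simp [this] at h1
  | succ n ih =>
    intro f hn h1 hpos
    by_cases hex : ∃ i' j, 1 ≤ j ∧ ¬ (i' = i0 ∧ j = 1) ∧ (f i').coeff j ≠ 0
    · obtain ⟨i', j, hj, hne, hc⟩ := hex
      have hfi' : f i' ≠ 0 := fun h => hc (by simp [h])
      obtain ⟨hp', hle'⟩ := hpos i' hfi'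
      have hE : 0 < e i0 * j - e i' := by
        have hj' : (1 : ℤ) ≤ j := by exact_mod_cast hj
        rcases hj.eq_or_lt with h | h
        · subst h
          have : e i' ≠ e i0 := fun h => hne ⟨he h, rfl⟩
          push_cast
          omega
        · have : (2 : ℤ) ≤ j := by exact_mod_cast h
          nlinarith
      obtain ⟨E, hEeq⟩ := Int.eq_ofNat_of_zero_le hE.le
      have hE0 : 0 < E := by omega
      obtain ⟨t, ht0, htb⟩ := exists_seq_avoid ({0} : Finset K)
        (fun x => (nthRoots E (x ^ E)).toFinset)
      simp only [Finset.mem_singleton] at ht0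
      simp only [Multiset.mem_toFinset, mem_nthRoots hE0] at htb
      have htne : ∀ m n, m ≠ n → t m ^ E ≠ t n ^ E := by
        intro m n hmn
        rcases lt_or_gt_of_ne hmn with h | h
        · exact fun h' => htb m n h h'.symm
        · exact htb n m h
      let F : K → ι → K[X] := fun t i => C ((t ^ j) ^ e i) * (f i).comp (C (t ^ (- e i')) * X)
      have hFc : ∀ t i l, (F t i).coeff l = (t ^ j) ^ e i * ((f i).coeff l * (t ^ (-e i')) ^ l) := by
        intro t i l
        simp only [F, coeff_C_mul, comp_C_mul_X_coeff]
      refine hM.vdc hφ (fun n s i => (F (t n) i).eval s) _ ?_ ?_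
      · intro n
        rw [← hM.dil ((t n) ^ (-e i')) (zpow_ne_zero _ (ht0 n)) _
          (hφ.bdd.comp (fun s i => (f i).eval s))]
        congr 1
        funext s
        refine Eq.trans ?_ (hi (t n ^ j) (pow_ne_zero _ (ht0 n)) _)
        simp [F]
      · intro n1 n2 hnn
        have := ih (fun i => F (t n1) i - F (t n2) i) ?_ ?_ ?_
        · simpa [Pi.sub_def] using this
        · rw [← Nat.lt_succ_iff]
          refine lt_of_lt_of_le ?_ hn
          have hsub : ∀ i, (F (t n1) i - F (t n2) i).support ⊆ (f i).support := by
            intro i l hl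
            rw [mem_support_iff] at hl ⊢
            intro h0
            apply hl
            rw [coeff_sub, hFc, hFc, h0]
            simp
          apply Finset.sum_lt_sum
          · intro i _
            exact Finset.card_le_card (hsub i)
          · refine ⟨i', Finset.mem_univ _, Finset.card_lt_card ⟨hsub i', ?_⟩⟩
            intro hs
            have := hs (mem_support_iff.2 hc)
            rw [mem_support_iff] at this
            apply this
            have h' : ∀ t : K, t ≠ 0 → (t ^ j) ^ e i' * ((t ^ (-e i')) ^ j) = 1 := by
              intro t ht
              rw [← zpow_natCast, ← zpow_natCast, ← zpow_mul, ← zpow_mul, ← zpow_add₀ ht]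
              rw [show (j : ℤ) * e i' + -e i' * j = 0 by ring, zpow_zero]
            rw [coeff_sub, hFc, hFc, mul_left_comm, h' _ (ht0 _), mul_left_comm, h' _ (ht0 _),
              sub_self]
        · have h' : ∀ t : K, t ≠ 0 → (t ^ j) ^ e i0 * ((t ^ (-e i')) ^ 1) = t ^ E := by
            intro t ht
            rw [pow_one, ← zpow_natCast, ← zpow_natCast, ← zpow_mul, ← zpow_add₀ ht]
            congr 1
            rw [← hEeq]; ring
          rw [coeff_sub, hFc, hFc, mul_left_comm, h' _ (ht0 _), mul_left_comm, h' _ (ht0 _),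
              ← mul_sub]
          exact mul_ne_zero h1 (sub_ne_zero.2 (htne _ _ hnn))
        · intro i hne0
          apply hpos i
          intro h0
          apply hne0
          simp [F, h0]
    · push Not at hex
      have hf : ∀ s, (fun i => (f i).eval s) =
          (fun i => (f i).coeff 0) + Pi.single i0 ((f i0).coeff 1 * s) := by
        intro s
        funext i
        rw [Pi.add_apply]
        by_cases h : i = i0
        · subst h
          have : f i = C ((f i).coeff 0) + C ((f i).coeff 1) * X := by
            ext l
            rcases l with _ | _ | l
            · simp
            · simp [coeff_C]
            · have := hex i (l + 1 + 1) (by omega) (by omega)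
              rw [this]
              simp [coeff_C]
          conv_lhs => rw [this]
          simp
        · have : f i = C ((f i).coeff 0) := by
            ext l
            rcases l with _ | l
            · simp
            · have := hex i (l + 1) (by omega) (fun h' => absurd h' h)
              rw [this]
              simp
          conv_lhs => rw [this]
          simp [h]
      simp only [hf]
      refine (hM.dil _ h1 _ (bdd_line hφ.bdd i0 (fun i => (f i).coeff 0))).trans ?_
      exact hZ.all hM hφ _

lemma lemA (hM : AffMean M) {φ : (ι → K) → ℝ} (hφ : PD φ) {e : ι → ℤ} (he : Function.Injective e)
    (heK : ∀ i, (e i : K) ≠ 0)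
    (hi : TInv e φ) (x : ι → K) (hx : x ≠ 0) (hpos : ∀ i, x i ≠ 0 → 0 < e i)
    (hZ : ∀ i, x i ≠ 0 → Zc M φ i) : φ x = 0 := by
  obtain ⟨k, hk⟩ := Function.ne_iff.1 hx
  obtain ⟨i0, hi0, hmax⟩ := Finset.exists_max_image (Finset.univ.filter (fun i => x i ≠ 0)) e
    ⟨k, by simpa using hk⟩
  simp only [Finset.mem_filter, Finset.mem_univ, true_and] at hi0 hmax
  have := polyA hM hφ he hi i0 (hZ i0 hi0) _ (fun i => C (x i) * (1 + X) ^ (e i).toNat) le_rfl ?_ ?_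
  · rw [← this, ← hM.const (φ x)]
    apply hM.const_off (Bdd.const _) (hφ.bdd.comp _) {-1}
    intro s hs
    have hs' : 1 + s ≠ 0 := by
      intro h
      apply hs
      rw [Finset.mem_singleton]
      linear_combination h
    rw [← hi (1 + s) hs' x]
    congr 1
    funext i
    simp only [eval_mul, eval_C, eval_pow, eval_add, eval_one, eval_X]
    by_cases h : x i = 0
    · simp [h]
    · have := hpos i h
      rw [mul_comm]
      congr 1
      conv_lhs => rw [← Int.toNat_of_nonneg this.le]
      rw [zpow_natCast]
  · have := hpos i0 hi0
    rw [coeff_C_mul, coeff_one_add_X_pow, Nat.choose_one_right]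
    refine mul_ne_zero hi0 ?_
    have h2 := heK i0
    rw [← Int.toNat_of_nonneg this.le] at h2
    rwa [Int.cast_natCast] at h2
  · intro i hne
    have hxi : x i ≠ 0 := fun h => hne (by simp [h])
    exact ⟨hpos i hxi, hmax i hxi⟩

lemma lemA' (hM : AffMean M) {φ : (ι → K) → ℝ} (hφ : PD φ) {e : ι → ℤ} (he : Function.Injective e)
    (heK : ∀ i, (e i : K) ≠ 0)
    (hi : TInv e φ) (x : ι → K) (hx : x ≠ 0) (hpos : ∀ i, x i ≠ 0 → e i < 0)
    (hZ : ∀ i, x i ≠ 0 → Zc M φ i) : φ x = 0 := by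
  refine lemA (e := fun i => - e i) hM hφ (fun i j h => he (neg_injective h)) (by simpa using heK)
    ?_ x hx (fun i h => by have := hpos i h; omega) hZ
  intro a ha x
  refine Eq.trans ?_ (hi a⁻¹ (inv_ne_zero ha) x)
  simp

end LemA

/-! ### Lemma B and the core theorem -/

section LemB
open Polynomial

variable {K : Type*} [Field K] [Infinite K] {M : (K → ℝ) → ℝ} {ι : Type} [Fintype ι]

lemma rationalB (hM : AffMean M) {φ : (ι → K) → ℝ} (hφ : PD φ) {e : ι → ℤ}
    (he0 : ∀ i, e i ≠ 0) (J : ι → Prop)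
    (hneg : ∀ y : ι → K, y ≠ 0 → (∀ i, y i ≠ 0 → J i ∧ e i < 0) → φ y = 0)
    (i1 : ι) (l : ℕ) (hl : l ≠ 0) :
    ∀ n : ℕ, ∀ f : K → ι → K, (∀ s i, f s i ≠ 0 → J i) →
      (∀ i, 0 < e i → ∃ P : K[X], P.degree < (n : ℕ) ∧ ∀ s, f s i = P.eval s) →
      (∃ ε : K, ε ≠ 0 ∧ ∃ R Q : K[X], Q.eval 0 ≠ 0 ∧ ∀ s, s ≠ 0 → Q.eval s ≠ 0 →
        f s i1 = ε * (s ^ l)⁻¹ + R.eval s / Q.eval s) →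
      M (fun s => φ (f s)) = 0 := by
  intro n
  induction n with
  | zero =>
    rintro f hJ hP ⟨ε, hε, R, Q, hQ, hf⟩
    have hT : (C ε * Q + X ^ l * R) ≠ 0 := by
      intro h
      have := congrArg (eval 0) h
      simp [hl, hε, hQ] at this
    have hQ0 : Q ≠ 0 := by rintro rfl; simp at hQ
    rw [← hM.const 0]
    apply hM.const_off (hφ.bdd.comp _) (Bdd.const _)
      (({0} ∪ Q.roots.toFinset) ∪ (C ε * Q + X ^ l * R).roots.toFinset)
    intro s hs
    simp only [Finset.mem_union, Finset.mem_singleton, Multiset.mem_toFinset, mem_roots hT,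
      mem_roots hQ0, not_or, IsRoot.def] at hs
    obtain ⟨⟨hs0, hsQ⟩, hsT⟩ := hs
    apply hneg
    · intro h
      have h1 := hf s hs0 hsQ
      rw [h, Pi.zero_apply] at h1
      apply hsT
      field_simp at h1
      simp
      linear_combination -h1
    · intro i hi
      refine ⟨hJ s i hi, ?_⟩
      rcases lt_or_gt_of_ne (he0 i) with h | h
      · exact h
      · exfalso
        obtain ⟨P, hPd, hPe⟩ := hP i h
        have : P = 0 := by
          rw [← degree_eq_bot]
          simpa using hPd
        apply hi
        rw [hPe, this, eval_zero]
  | succ n ih =>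
    rintro f hJ hP ⟨ε, hε, R, Q, hQ, hf⟩
    have hQ0 : Q ≠ 0 := by rintro rfl; simp at hQ
    set B : Finset K := {0} ∪ Q.roots.toFinset with hB
    have hBm : ∀ d, d ∉ B → d ≠ 0 ∧ Q.eval d ≠ 0 := by
      intro d hd
      simp only [hB, Finset.mem_union, Finset.mem_singleton, Multiset.mem_toFinset,
        mem_roots hQ0, not_or, IsRoot.def] at hd
      exact hd
    have hd : ∀ d, d ∉ B → M (fun s => φ (f (s + d) - f s)) = 0 := by
      intro d hd
      obtain ⟨hd0, hdQ⟩ := hBm d hd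
      apply ih (fun s => f (s + d) - f s)
      · intro s i hsi
        by_cases h : f s i = 0
        · apply hJ (s + d) i
          intro h'
          simp [h, h'] at hsi
        · exact hJ s i h
      · intro i hi
        obtain ⟨P, hPd, hPe⟩ := hP i hi
        refine ⟨P.comp (X + C d) - P, ?_, fun s => by simp [hPe]⟩
        by_cases hP0 : P = 0
        · simp [hP0]
        · have h1 : (P.comp (X + C d) - P).degree < (P.comp (X + C d)).degree := by
            rw [← taylor_apply]
            apply degree_sub_lt_left (degree_taylor _ _)
            · rwa [Ne, taylor_eq_zero]
            · exact leadingCoeff_taylor _ _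
          refine lt_of_lt_of_le h1 ?_
          rw [← taylor_apply, degree_taylor]
          rw [degree_eq_natDegree hP0] at hPd ⊢
          have : P.natDegree < n + 1 := by exact_mod_cast hPd
          exact_mod_cast Nat.lt_succ_iff.1 this
      · refine ⟨-ε, neg_ne_zero.2 hε,
          C ε * Q.comp (X + C d) * Q + R.comp (X + C d) * (X + C d) ^ l * Q
            - R * (X + C d) ^ l * Q.comp (X + C d), (X + C d) ^ l * Q.comp (X + C d) * Q, ?_, ?_⟩
        · simp [hd0, hdQ, hQ]
        · intro s hs0 hsQ
          simp only [eval_mul, eval_pow, eval_add, eval_X, eval_C, eval_comp] at hsQ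
          have a1 : Q.eval s ≠ 0 := right_ne_zero_of_mul hsQ
          have a2 : Q.eval (s + d) ≠ 0 := right_ne_zero_of_mul (left_ne_zero_of_mul hsQ)
          have a3 : (s + d) ≠ 0 := by
            have := left_ne_zero_of_mul (left_ne_zero_of_mul hsQ)
            exact fun h => this (by rw [h, zero_pow hl])
          rw [Pi.sub_apply, hf _ a3 a2, hf _ hs0 a1]
          simp only [eval_mul, eval_pow, eval_add, eval_sub, eval_X, eval_C, eval_comp]
          field_simp
          ring
    obtain ⟨h, -, hh⟩ := exists_seq_avoid (∅ : Finset K)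
      (fun x => B.image (fun b => b + x))
    have hh' : ∀ m n, m < n → h n - h m ∉ B := by
      intro m n hmn hmem
      apply hh m n hmn
      exact Finset.mem_image.2 ⟨_, hmem, by ring⟩
    have hlt : ∀ m n, m < n → M (fun s => φ (f (s + h n) - f (s + h m))) = 0 := by
      intro m n hmn
      have := hM.trans (h m) (fun s => φ (f (s + (h n - h m)) - f s))
        (hφ.bdd.comp (fun s => f (s + (h n - h m)) - f s))
      rw [hd _ (hh' m n hmn)] at this
      rw [← this]
      congr 1
      funext s
      congr 3
      ring
    refine hM.vdc hφ (fun n s => f (s + h n)) _ ?_ ?_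
    · intro n
      exact hM.trans (h n) (fun s => φ (f s)) (hφ.bdd.comp f)
    · intro n n' hnn
      rcases lt_or_gt_of_ne hnn with h1 | h1
      · rw [← hlt n n' h1]
        congr 1
        funext s
        rw [← hφ.1, neg_sub]
      · exact hlt n' n h1

lemma lemAll (hM : AffMean M) {φ : (ι → K) → ℝ} (hφ : PD φ) {e : ι → ℤ} (he : Function.Injective e)
    (heK : ∀ i, (e i : K) ≠ 0)
    (hi : TInv e φ) (x : ι → K) (hx : x ≠ 0) 
    (hZ : ∀ i, x i ≠ 0 → Zc M φ i) : φ x = 0 := by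
  have he0 : ∀ i, e i ≠ 0 := fun i h => heK i (by simp [h])
  by_cases hpos : ∀ i, x i ≠ 0 → 0 < e i
  · exact lemA hM hφ he heK hi x hx hpos hZ
  · push Not at hpos
    obtain ⟨i1, hx1, hi1⟩ := hpos
    have hi1 : e i1 < 0 := lt_of_le_of_ne hi1 (he0 i1)
    have := rationalB hM hφ he0 (fun i => x i ≠ 0)
      (fun y hy h => lemA' hM hφ he heK hi y hy (fun i h' => (h i h').2)
        (fun i h' => hZ i (h i h').1)) i1 (-e i1).toNat (by omega)
      (∑ i, (e i).toNat + 1) (fun s i => s ^ e i * x i) ?_ ?_ ?_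
    · rw [← this, ← hM.const (φ x)]
      apply hM.const_off (Bdd.const _) (hφ.bdd.comp _) {0}
      intro s hs
      exact (hi s (by simpa using hs) x).symm
    · intro s i h
      exact right_ne_zero_of_mul h
    · intro i hpos
      refine ⟨C (x i) * X ^ (e i).toNat, ?_, ?_⟩
      · refine lt_of_le_of_lt (degree_C_mul_X_pow_le _ _) ?_
        have : (e i).toNat ≤ ∑ i, (e i).toNat :=
          Finset.single_le_sum (f := fun i => (e i).toNat) (fun _ _ => Nat.zero_le _)
            (Finset.mem_univ i)
        exact_mod_cast Nat.lt_succ_iff.2 this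
      · intro s
        simp only [eval_mul, eval_C, eval_pow, eval_X]
        rw [mul_comm]
        congr 1
        conv_lhs => rw [← Int.toNat_of_nonneg hpos.le]
        rw [zpow_natCast]
    · refine ⟨x i1, hx1, 0, 1, by simp, ?_⟩
      intro s hs _
      have : e i1 = -((-e i1).toNat : ℤ) := by omega
      conv_lhs => rw [this]
      rw [zpow_neg, zpow_natCast]
      simp [mul_comm]

theorem core (hM : AffMean M) {e : ι → ℤ} (he : Function.Injective e)
    (heK : ∀ i, (e i : K) ≠ 0) : ∀ n : ℕ, ∀ (φ : (ι → K) → ℝ) (_ : PD φ)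
    (_ : TInv e φ) (x : ι → K),
    (Finset.univ.filter (fun i => x i ≠ 0 ∧ ¬ Zc M φ i)).card ≤ n → 0 ≤ φ x := by
  intro n
  induction n with
  | zero =>
    intro φ hφ hi x hn
    by_cases hx : x = 0
    · rw [hx]; exact hφ.zero_nonneg
    · apply le_of_eq
      symm
      apply lemAll hM hφ he heK hi x hx
      intro i hxi
      by_contra hz
      have h0 := Finset.card_eq_zero.1 (Nat.le_zero.1 hn)
      have : i ∈ Finset.univ.filter (fun i => x i ≠ 0 ∧ ¬ Zc M φ i) := by simp [hxi, hz]
      rw [h0] at this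
      simp at this
  | succ n ih =>
    intro φ hφ hi x hn
    by_cases hem : (Finset.univ.filter (fun i => x i ≠ 0 ∧ ¬ Zc M φ i)) = ∅
    · exact ih φ hφ hi x (by rw [hem]; simp)
    · obtain ⟨k, hk⟩ := Finset.nonempty_iff_ne_empty.2 hem
      have hk' := hk
      simp only [Finset.mem_filter, Finset.mem_univ, true_and] at hk'
      have h1 : 0 ≤ Qop M k φ x := by
        rw [← Qop_indep hM hφ k x (-x k)]
        apply ih _ (Qop_pd hM hφ k) (Qop_inv hM hφ hi k)
        rw [← Nat.lt_succ_iff]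
        refine lt_of_lt_of_le (Finset.card_lt_card ?_) hn
        rw [Finset.ssubset_iff_of_subset]
        · refine ⟨k, hk, ?_⟩
          simp
        · intro i hmem
          simp only [Finset.mem_filter, Finset.mem_univ, true_and] at hmem ⊢
          refine ⟨?_, fun h => hmem.2 (Zc_both hM hφ k i h).1⟩
          by_cases hik : i = k
          · subst hik; exact hk'.1
          · simpa [hik] using hmem.1
      have h2 : 0 ≤ φ x - Qop M k φ x := by
        apply ih _ (Qop_sub_pd hM hφ k) (Qop_sub_inv hM hφ hi k)
        rw [← Nat.lt_succ_iff]
        refine lt_of_lt_of_le (Finset.card_lt_card ?_) hn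
        rw [Finset.ssubset_iff_of_subset]
        · refine ⟨k, hk, ?_⟩
          simp [Zc_sub_self hM hφ k]
        · intro i hmem
          simp only [Finset.mem_filter, Finset.mem_univ, true_and] at hmem ⊢
          exact ⟨hmem.1, fun h => hmem.2 (Zc_both hM hφ k i h).2⟩
      linarith

end LemB

/-! ### The reduction -/

lemma exists_M0 {A : Type*} [AddCommGroup A] (E : Set A) (hE : PosUpperBanachDensity E) :
    ∃ M0 : (A → ℝ) → ℝ, IsMean M0 ∧
      (∀ (h : A) (f : A → ℝ), Bdd f → M0 (fun s => f (s + h)) = M0 f) ∧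
      0 < M0 (fun z => if z ∈ E then (1 : ℝ) else 0) := by
  obtain ⟨F, ⟨hne, hF⟩, hlim⟩ := hE
  obtain ⟨δ, hδ0, hδ⟩ := exists_between hlim
  have hcob : IsCoboundedUnder (· ≤ ·) atTop
      (fun n => (((F n).filter (· ∈ E)).card : ℝ) / ((F n).card : ℝ)) := by
    apply IsBoundedUnder.isCoboundedUnder_le
    exact isBoundedUnder_of ⟨0, fun n => by positivity⟩
  have hfr := frequently_lt_of_lt_limsup hcob hδ
  have hnb : NeBot (atTop ⊓ 𝓟 {n | δ < (((F n).filter (· ∈ E)).card : ℝ) / ((F n).card : ℝ)}) :=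
    frequently_mem_iff_neBot.1 hfr
  let U := Ultrafilter.of (atTop ⊓ 𝓟 {n | δ < (((F n).filter (· ∈ E)).card : ℝ) / ((F n).card : ℝ)})
  have hU := Ultrafilter.of_le (atTop ⊓ 𝓟 {n | δ < (((F n).filter (· ∈ E)).card : ℝ) / ((F n).card : ℝ)})
  have hmean : ∀ n, IsMean (fun f : A → ℝ => (∑ i ∈ F n, f i) / ((F n).card : ℝ)) :=
    fun n => isMean_avg (F n) (hne n) id
  refine ⟨fun f => limUnder (U : Filter ℕ) (fun n => (∑ i ∈ F n, f i) / ((F n).card : ℝ)), ?_, ?_, ?_⟩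
  · exact (isMean_ulim U).comp hmean
  · intro h f hf
    obtain ⟨C, hC⟩ := hf
    apply ulim_congr
    · exact ⟨C, fun n => (hmean n).abs_le (fun x => hC _)⟩
    · exact ⟨C, fun n => (hmean n).abs_le hC⟩
    · refine Tendsto.mono_left ?_ (hU.trans inf_le_left)
      have h1 : Tendsto (fun n => 2 * C * (1 - ((F n ∩ (F n).image (· + h)).card : ℝ) /
          ((F n).card : ℝ))) atTop (𝓝 0) := by
        have := ((hF h).const_sub 1).const_mul (2 * C)
        simpa using this
      refine squeeze_zero_norm (fun n => ?_) h1
      have hc : (0 : ℝ) < (F n).card := by exact_mod_cast (hne n).card_pos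
      set G := (F n).image (· + h) with hG
      have e1 : ∑ i ∈ F n, f (i + h) = ∑ i ∈ G, f i := by
        rw [hG, Finset.sum_image]
        intro a _ b _ hab
        exact add_right_cancel hab
      have hGc : G.card = (F n).card :=
        Finset.card_image_of_injective _ (add_left_injective h)
      have c1 : (((G \ F n).card : ℝ)) = (F n).card - (F n ∩ G).card := by
        have := Finset.card_sdiff_add_card_inter G (F n)
        rw [hGc, Finset.inter_comm] at this
        rw [← this]; push_cast; ring
      have c2 : (((F n \ G).card : ℝ)) = (F n).card - (F n ∩ G).card := by
        have := Finset.card_sdiff_add_card_inter (F n) G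
        rw [← this]; push_cast; ring
      have hb : ∀ S : Finset A, |∑ i ∈ S, f i| ≤ S.card * C := by
        intro S
        refine (Finset.abs_sum_le_sum_abs _ _).trans ?_
        refine (Finset.sum_le_card_nsmul _ _ C (fun i _ => hC i)).trans ?_
        rw [nsmul_eq_mul]
      rw [e1, ← sub_div, ← Finset.sum_sdiff_sub_sum_sdiff, Real.norm_eq_abs, abs_div,
        abs_of_pos hc, div_le_iff₀ hc]
      refine (abs_sub _ _).trans ?_
      have b1 := hb (G \ F n)
      have b2 := hb (F n \ G)
      rw [c1] at b1
      rw [c2] at b2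
      have : 2 * C * (1 - ((F n ∩ G).card : ℝ) / (F n).card) * (F n).card =
        2 * C * ((F n).card - (F n ∩ G).card) := by field_simp
      rw [this]
      linarith
  · refine lt_of_lt_of_le hδ0 ?_
    refine ge_of_tendsto (bdd_ulim U (f := fun n => (∑ i ∈ F n, if i ∈ E then (1 : ℝ) else 0) /
      ((F n).card : ℝ)) ⟨1, fun n => (hmean n).abs_le (fun x => by split_ifs <;> simp)⟩) ?_
    have hmem : {n | δ < (((F n).filter (· ∈ E)).card : ℝ) / ((F n).card : ℝ)} ∈ (U : Filter ℕ) :=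
      hU (mem_inf_of_right (mem_principal_self _))
    filter_upwards [hmem] with n hn
    have : (∑ i ∈ F n, if i ∈ E then (1 : ℝ) else 0) = ((F n).filter (· ∈ E)).card := by
      rw [Finset.sum_boole]
    rw [this]
    exact hn.le

lemma affMean_of {K : Type*} [Field K] {M0 : (K → ℝ) → ℝ} (h0 : IsMean M0)
    (ht : ∀ (h : K) (f : K → ℝ), Bdd f → M0 (fun s => f (s + h)) = M0 f)
    {M1 : (Kˣ → ℝ) → ℝ} (h1 : IsMean M1)
    (hi : ∀ (h : Kˣ) (f : Kˣ → ℝ), Bdd f → M1 (fun y => f (h * y)) = M1 f) :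
    AffMean (fun g => M1 (fun t => M0 (fun s => g ((t : K) * s)))) := by
  have hA : ∀ t : Kˣ, IsMean (fun g : K → ℝ => M0 (fun s => g ((t : K) * s))) := by
    intro t
    constructor
    · intro f g hf hg
      exact h0.add _ _ (hf.comp _) (hg.comp _)
    · intro c f hf
      exact h0.smul _ _ (hf.comp _)
    · intro f hf hn
      exact h0.nonneg _ (hf.comp _) (fun x => hn _)
    · exact h0.one
  refine { toIsMean := h1.comp hA, trans := ?_, dil := ?_ }
  · intro h f hf
    congr 1
    funext t
    rw [← ht ((t : K)⁻¹ * h) (fun s => f (t * s)) (hf.comp _)]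
    congr 1
    funext s
    rw [mul_add, mul_inv_cancel_left₀ t.ne_zero]
  · intro u hu f hf
    obtain ⟨C, hC⟩ := hf
    have := hi (Units.mk0 u hu) (fun t => M0 (fun s => f ((t : K) * s)))
      ⟨C, fun t => (hA t).abs_le hC⟩
    rw [← this]
    simp [mul_assoc]

lemma psi0_pd {A : Type*} [AddCommGroup A] {M0 : (A → ℝ) → ℝ} (h0 : IsMean M0)
    (ht : ∀ (h : A) (f : A → ℝ), Bdd f → M0 (fun s => f (s + h)) = M0 f) {b : A → ℝ}
    (hb : Bdd b) : PD (fun y => M0 (fun z => b z * b (z + y))) := by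
  have hbb : ∀ x y : A, Bdd (fun z => b (z + x) * b (z + y)) := fun x y =>
    (hb.comp _).mul (hb.comp _)
  constructor
  · intro y
    dsimp only
    rw [← ht y _ (hb.mul (hb.comp (fun z => z + -y)))]
    congr 1
    funext z
    rw [add_neg_cancel_right, mul_comm]
  · intro ι _ c x
    have e : ∀ i j, M0 (fun z => b z * b (z + (x i - x j))) =
        M0 (fun z => b (z + x i) * b (z + x j)) := by
      intro i j
      rw [← ht (x j) _ (hb.mul (hb.comp (fun z => z + (x i - x j))))]
      congr 1
      funext z
      rw [add_assoc, add_sub_cancel, mul_comm]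
    simp only [e]
    have : ∑ i, ∑ j, c i * c j * M0 (fun z => b (z + x i) * b (z + x j)) =
        M0 (fun z => ∑ i, ∑ j, c i * c j * (b (z + x i) * b (z + x j))) := by
      rw [h0.sum _ (fun i => Bdd.sum _ (fun j => (hbb (x i) (x j)).cmul _))]
      refine Finset.sum_congr rfl fun i _ => ?_
      rw [h0.sum _ (fun j => (hbb (x i) (x j)).cmul _)]
      refine Finset.sum_congr rfl fun j _ => ?_
      rw [h0.smul _ _ (hbb (x i) (x j))]
    rw [this]
    apply h0.nonneg _ (Bdd.sum _ (fun i => Bdd.sum _ (fun j => (hbb (x i) (x j)).cmul _)))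
    intro z
    have : ∑ i, ∑ j, c i * c j * (b (z + x i) * b (z + x j)) = (∑ i, c i * b (z + x i)) ^ 2 := by
      rw [sq, Finset.sum_mul_sum]
      refine Finset.sum_congr rfl fun i _ => Finset.sum_congr rfl fun j _ => by ring
    rw [this]
    positivity

lemma psi0_val {A : Type*} [AddCommGroup A] {M0 : (A → ℝ) → ℝ} (h0 : IsMean M0)
    (ht : ∀ (h : A) (f : A → ℝ), Bdd f → M0 (fun s => f (s + h)) = M0 f) (E : Set A) (d : ℝ)
    (hd : d = M0 (fun z => if z ∈ E then (1 : ℝ) else 0)) (y : A) (hy : y ∉ E - E) :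
    M0 (fun z => ((if z ∈ E then (1 : ℝ) else 0) - d) * ((if z + y ∈ E then (1 : ℝ) else 0) - d))
      = - d ^ 2 := by
  have hb : Bdd (fun z => if z ∈ E then (1 : ℝ) else 0) :=
    ⟨1, fun z => by dsimp only; split_ifs <;> simp⟩
  have hb' : Bdd (fun z => if z + y ∈ E then (1 : ℝ) else 0) := hb.comp (fun z => z + y)
  have e : (fun z => ((if z ∈ E then (1 : ℝ) else 0) - d) *
      ((if z + y ∈ E then (1 : ℝ) else 0) - d)) = fun z =>
      d ^ 2 - d * ((if z ∈ E then (1 : ℝ) else 0) + (if z + y ∈ E then (1 : ℝ) else 0)) := by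
    funext z
    by_cases h1 : z ∈ E
    · by_cases h2 : z + y ∈ E
      · exact absurd (Set.mem_sub.2 ⟨z + y, h2, z, h1, by abel⟩) hy
      · simp [h1, h2]; ring
    · by_cases h2 : z + y ∈ E
      · simp [h1, h2]; ring
      · simp [h1, h2]; ring
  rw [e, h0.sub (Bdd.const _) ((hb.add hb').cmul d), h0.const, h0.smul _ _ (hb.add hb'),
    h0.add _ _ hb hb', ht y _ hb, ← hd]
  ring

lemma expChar_decomp (K : Type*) [Field K] (q : ℕ) [hq : ExpChar K q] (k : ℤ) (hk : k ≠ 0) :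
    ∃ (m : ℤ) (j : ℕ), k = m * (q ^ j : ℕ) ∧ (m : K) ≠ 0 := by
  cases hq with
  | zero => exact ⟨k, 0, by simp, by exact_mod_cast hk⟩
  | prime hp =>
    have hfin : FiniteMultiplicity (q : ℤ) k := by
      rw [Int.finiteMultiplicity_iff]
      refine ⟨?_, hk⟩
      simpa using hp.ne_one
    obtain ⟨c, hc, hnd⟩ := hfin.exists_eq_pow_mul_and_not_dvd
    refine ⟨c, multiplicity (q : ℤ) k, ?_, ?_⟩
    · push_cast
      rw [mul_comm]; exact hc
    · rwa [Ne, CharP.intCast_eq_zero_iff K q]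

theorem main_aux {K : Type*} [Field K] [Countable K] [Infinite K]
    (E : Set K) (hE : PosUpperBanachDensity E) (N : ℕ) (p : ℤ → K) (hp0 : p 0 = 0) :
    ∃ a : K, a ≠ 0 ∧ (∑ k ∈ Finset.Icc (-(N : ℤ)) (N : ℤ), p k * a ^ k) ∈ E - E := by
  by_contra hcon
  push Not at hcon
  obtain ⟨M0, h0, ht, hd⟩ := exists_M0 E hE
  have : Countable Kˣ := Units.val_injective.countable
  obtain ⟨M1, h1, hi⟩ := exists_inv_mean Kˣ
  have hM := affMean_of h0 ht h1 hi
  obtain ⟨q, hq⟩ := ExpChar.exists K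
  have hdec : ∀ k : ℤ, ∃ (m : ℤ) (j : ℕ), k ≠ 0 → (k = m * (q ^ j : ℕ) ∧ (m : K) ≠ 0) := by
    intro k
    by_cases hk : k = 0
    · exact ⟨0, 0, fun h => absurd hk h⟩
    · obtain ⟨m, j, h⟩ := expChar_decomp K q k hk
      exact ⟨m, j, fun _ => h⟩
  choose m j hmj using hdec
  set S := (Finset.Icc (-(N : ℤ)) (N : ℤ)).erase 0 with hS
  let ι : Type := {i : ℤ // i ∈ S.image m}
  let e : ι → ℤ := Subtype.val
  have he : Function.Injective e := Subtype.val_injective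
  have heK : ∀ i, (e i : K) ≠ 0 := by
    rintro ⟨i, hi⟩
    obtain ⟨k, hk, rfl⟩ := Finset.mem_image.1 hi
    exact (hmj k (Finset.ne_of_mem_erase hk)).2
  let mk : {k // k ∈ S} → ι := fun k => ⟨m k, Finset.mem_image_of_mem m k.2⟩
  let L : (ι → K) →+ K := AddMonoidHom.mk'
    (fun x => ∑ k ∈ S.attach, p k * (x (mk k)) ^ (q ^ j k)) (by
      intro x y
      rw [← Finset.sum_add_distrib]
      refine Finset.sum_congr rfl fun k _ => ?_
      rw [Pi.add_apply, add_pow_expChar_pow, mul_add])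
  have hL : ∀ a : K, a ≠ 0 → L (fun i => a ^ e i) = ∑ k ∈ Finset.Icc (-(N : ℤ)) (N : ℤ), p k * a ^ k := by
    intro a ha
    have e1 : L (fun i => a ^ e i) = ∑ k ∈ S.attach, p k * (a ^ (m k)) ^ (q ^ j k) := rfl
    have e2 : ∑ k ∈ Finset.Icc (-(N : ℤ)) (N : ℤ), p k * a ^ k = ∑ k ∈ S, p k * a ^ k := by
      rw [hS]
      symm
      apply Finset.sum_erase
      simp [hp0]
    rw [e1, e2, ← Finset.sum_attach S]
    refine Finset.sum_congr rfl fun k _ => ?_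
    congr 1
    conv_rhs => rw [(hmj k (Finset.ne_of_mem_erase k.2)).1]
    rw [zpow_mul, zpow_natCast]
  set d := M0 (fun z => if z ∈ E then (1 : ℝ) else 0) with hd'
  have hb : Bdd (fun z => (if z ∈ E then (1 : ℝ) else 0) - d) :=
    Bdd.sub ⟨1, fun z => by dsimp only; split_ifs <;> simp⟩ (Bdd.const d)
  have hpd := psi0_pd h0 ht hb
  set ψ0 : K → ℝ := fun y => M0 (fun z => ((if z ∈ E then (1 : ℝ) else 0) - d) *
    ((if z + y ∈ E then (1 : ℝ) else 0) - d)) with hψ0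
  let ψ : (ι → K) → ℝ := fun x => M1 (fun a => ψ0 (L (fun i => (a : K) ^ e i * x i)))
  have hψb : ∀ x : ι → K, Bdd (fun a : Kˣ => ψ0 (L (fun i => (a : K) ^ e i * x i))) := fun x =>
    hpd.bdd.comp _
  have hψ : PD ψ := by
    constructor
    · intro x
      show M1 _ = M1 _
      congr 1
      funext a
      rw [← hpd.1, ← map_neg]
      congr 2
      funext i
      simp
    · intro κ _ c x
      have : ∑ i, ∑ j, c i * c j * ψ (x i - x j) = M1 (fun a => ∑ i, ∑ j, c i * c j *
          ψ0 (L (fun l => (a : K) ^ e l * (x i - x j) l))) := by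
        rw [h1.sum _ (fun i => Bdd.sum _ (fun j => (hψb (x i - x j)).cmul _))]
        refine Finset.sum_congr rfl fun i _ => ?_
        rw [h1.sum _ (fun j => (hψb (x i - x j)).cmul _)]
        refine Finset.sum_congr rfl fun j _ => ?_
        rw [h1.smul _ _ (hψb (x i - x j))]
      rw [this]
      apply h1.nonneg _ (Bdd.sum _ (fun i => Bdd.sum _ (fun j => (hψb (x i - x j)).cmul _)))
      intro a
      have := hpd.2 κ c (fun i => L (fun l => (a : K) ^ e l * x i l))
      convert this using 7
      rw [← map_sub]
      congr 1
      funext l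
      simp [mul_sub]
  have hinv : TInv e ψ := by
    intro a ha x
    have := hi (Units.mk0 a ha) _ (hψb x)
    refine Eq.trans ?_ this
    show M1 _ = M1 _
    congr 1
    funext b
    congr 2
    funext i
    rw [Units.val_mul, Units.val_mk0, mul_comm a, mul_zpow, mul_assoc]
  have hneg : ψ (fun _ => 1) = - d ^ 2 := by
    have : (fun a : Kˣ => ψ0 (L (fun i => (a : K) ^ e i * 1))) = fun _ => - d ^ 2 := by
      funext a
      simp only [mul_one]
      rw [hL a a.ne_zero]
      exact psi0_val h0 ht E d hd' _ (hcon a a.ne_zero)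
    show M1 _ = _
    rw [this, h1.const]
  have := core hM he heK _ ψ hψ hinv (fun _ => 1) le_rfl
  rw [hneg] at this
  nlinarith

theorem statement13
    {K : Type*} [Field K] [Countable K] [Infinite K]
    (E : Set K) (hE : PosUpperBanachDensity E)
    (N : ℕ) (p : ℤ → K) (hp0 : p 0 = 0) :
    ∃ a : K, a ≠ 0 ∧ (∑ k ∈ Finset.Icc (-(N : ℤ)) (N : ℤ), p k * a ^ k) ∈ E - E :=
  main_aux E hE N p hp0
end

section
/- Let K be a countable field and suppose there exists a Følner sequence (F_n) in the additive group (K,+) such that ((F_n \ {0})^{-1}) is also a Følner sequence in (K,+). Then the projective linear group PGL₂(K) = GL₂(K)/center is amenable, i.e., it admits a (left) Følner sequence. -/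
open Filter Topology
open scoped Classical MatrixGroups

/-- A left Følner sequence in a (countable, multiplicative) group. -/
def IsMulFolner {G : Type*} [Group G] (F : ℕ → Finset G) : Prop :=
  (∀ n, (F n).Nonempty) ∧
    ∀ g : G, Tendsto
      (fun n => ((F n ∩ (F n).image (g * ·)).card : ℝ) / ((F n).card : ℝ)) atTop (𝓝 1)

/-- The projective linear group `PGL₂(K) = GL₂(K)/center`. -/
abbrev PGL2 (K : Type*) [Field K] : Type _ :=
  GL (Fin 2) K ⧸ Subgroup.center (GL (Fin 2) K)


/-- If three cosets of `V` are disjoint, `V` has density at most `2/5` along a Folner sequence. -/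
lemma density_aux {A : Type*} [AddCommGroup A] (F : ℕ → Finset A) (hF : IsAddFolner F)
    (V : AddSubgroup A) (x y : A) (hx : x ∉ V) (hy : y ∉ V) (hxy : x - y ∉ V) :
    ∀ᶠ n in atTop, (((F n).filter (· ∈ V)).card : ℝ) ≤ 2 / 5 * (F n).card := by
  have h1 := (hF.2 x).eventually (lt_mem_nhds (show (19/20 : ℝ) < 1 by norm_num))
  have h2 := (hF.2 y).eventually (lt_mem_nhds (show (19/20 : ℝ) < 1 by norm_num))
  filter_upwards [h1, h2] with n h1 h2
  have hpos : (0 : ℝ) < (F n).card := by exact_mod_cast (hF.1 n).card_pos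
  rw [lt_div_iff₀ hpos] at h1 h2
  have key : ∀ a : A, ((F n).filter (· ∈ V)).card + (F n ∩ (F n).image (· + a)).card ≤
      ((F n).filter (fun v => v - a ∈ V)).card + (F n).card := by
    intro a
    have e1 : (F n ∩ (F n).image (· + a)).card ≤ ((F n).filter (fun v => v + a ∈ F n)).card := by
      refine Finset.card_le_card_of_injOn (fun v => v - a) ?_ ?_
      · intro v hv
        simp only [Finset.coe_inter, Set.mem_inter_iff, Finset.mem_coe, Finset.mem_image] at hv
        obtain ⟨hv, w, hw, rfl⟩ := hv
        simp [hw, hv]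
      · intro v _ w _ h
        simpa using h
    have e2 : ((F n).filter (· ∈ V) ∩ (F n).filter (fun v => v + a ∈ F n)).card ≤
        ((F n).filter (fun v => v - a ∈ V)).card := by
      refine Finset.card_le_card_of_injOn (fun v => v + a) ?_ ?_
      · intro v hv
        simp only [Finset.coe_inter, Set.mem_inter_iff, Finset.mem_coe, Finset.mem_filter] at hv
        simp [hv.1.2, hv.2.2]
      · intro v _ w _ h
        simpa using h
    have e3 := Finset.card_union_add_card_inter ((F n).filter (· ∈ V))
      ((F n).filter (fun v => v + a ∈ F n))
    have e4 : ((F n).filter (· ∈ V) ∪ (F n).filter (fun v => v + a ∈ F n)).card ≤ (F n).card :=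
      Finset.card_le_card (Finset.union_subset (Finset.filter_subset _ _)
        (Finset.filter_subset _ _))
    omega
  have d1 : Disjoint ((F n).filter (· ∈ V)) ((F n).filter (fun v => v - x ∈ V)) := by
    rw [Finset.disjoint_filter]
    intro v _ h h'
    exact hx (by simpa using V.sub_mem h h')
  have d2 : Disjoint ((F n).filter (· ∈ V) ∪ (F n).filter (fun v => v - x ∈ V))
      ((F n).filter (fun v => v - y ∈ V)) := by
    rw [Finset.disjoint_union_left, Finset.disjoint_filter, Finset.disjoint_filter]
    constructor
    · intro v _ h h'
      exact hy (by simpa using V.sub_mem h h')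
    · intro v _ h h'
      exact hxy (by simpa using V.sub_mem h' h)
  have tot : ((F n).filter (· ∈ V)).card + ((F n).filter (fun v => v - x ∈ V)).card +
      ((F n).filter (fun v => v - y ∈ V)).card ≤ (F n).card := by
    rw [← Finset.card_union_of_disjoint d1, ← Finset.card_union_of_disjoint d2]
    apply Finset.card_le_card
    intro v hv
    simp only [Finset.mem_union, Finset.mem_filter] at hv
    tauto
  have k1 := key x
  have k2 := key y
  have k1' : (((F n).filter (· ∈ V)).card : ℝ) + (F n ∩ (F n).image (· + x)).card ≤
      ((F n).filter (fun v => v - x ∈ V)).card + (F n).card := by exact_mod_cast k1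
  have k2' : (((F n).filter (· ∈ V)).card : ℝ) + (F n ∩ (F n).image (· + y)).card ≤
      ((F n).filter (fun v => v - y ∈ V)).card + (F n).card := by exact_mod_cast k2
  have tot' : (((F n).filter (· ∈ V)).card : ℝ) + ((F n).filter (fun v => v - x ∈ V)).card +
      ((F n).filter (fun v => v - y ∈ V)).card ≤ (F n).card := by exact_mod_cast tot
  linarith

/-- Under the hypothesis, every valuation subring is trivial. -/
lemma valuation_trivial {K : Type*} [Field K]
    (F : ℕ → Finset K) (hF : IsAddFolner F)
    (hFinv : IsAddFolner (fun n => ((F n).erase 0).image (·⁻¹)))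
    (V : ValuationSubring K) (x : K) : x ∈ V := by
  by_contra hx
  have hx0 : x ≠ 0 := fun h => hx (h ▸ V.zero_mem)
  have hxi : x⁻¹ ∈ V := (V.mem_or_inv_mem x).resolve_left hx
  have hx2 : x ^ 2 ∉ V := fun h => hx (by
    have := V.mul_mem _ _ h hxi
    rwa [pow_two, mul_assoc, mul_inv_cancel₀ hx0, mul_one] at this)
  have hxx : x - x ^ 2 ∉ V := fun h => hx (by
    have := V.mul_mem _ _ h hxi
    rw [pow_two, sub_mul, mul_assoc, mul_inv_cancel₀ hx0, mul_one] at this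
    have h2 := sub_mem V.one_mem this
    simpa using h2)
  have h1 := density_aux F hF V.toSubring.toAddSubgroup x (x ^ 2) hx hx2 hxx
  have h2 := density_aux _ hFinv V.toSubring.toAddSubgroup x (x ^ 2) hx hx2 hxx
  obtain ⟨n, h1, h2⟩ := (h1.and h2).exists
  have hpos : (0 : ℝ) < (F n).card := by exact_mod_cast (hF.1 n).card_pos
  set V' := V.toSubring.toAddSubgroup with hV'
  have hmem : ∀ z, z ∈ V' ↔ z ∈ V := fun z => Iff.rfl
  have c1 : (((F n).erase 0).image (·⁻¹)).card ≤ (F n).card :=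
    Finset.card_image_le.trans (Finset.card_le_card (Finset.erase_subset _ _))
  have c2 : (F n).card ≤ ((F n).filter (· ∈ V')).card +
      ((((F n).erase 0).image (·⁻¹)).filter (· ∈ V')).card := by
    have : F n ⊆ (F n).filter (· ∈ V') ∪
        ((((F n).erase 0).image (·⁻¹)).filter (· ∈ V')).image (·⁻¹) := by
      intro v hv
      by_cases hvV : v ∈ V
      · exact Finset.mem_union_left _ (Finset.mem_filter.2 ⟨hv, hvV⟩)
      · apply Finset.mem_union_right
        have hv0 : v ≠ 0 := fun h => hvV (h ▸ V.zero_mem)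
        refine Finset.mem_image.2 ⟨v⁻¹, Finset.mem_filter.2 ⟨?_, ?_⟩, inv_inv v⟩
        · exact Finset.mem_image.2 ⟨v, Finset.mem_erase.2 ⟨hv0, hv⟩, rfl⟩
        · exact (V.mem_or_inv_mem v).resolve_left hvV
    calc _ ≤ _ := Finset.card_le_card this
      _ ≤ _ := Finset.card_union_le _ _
      _ ≤ _ := Nat.add_le_add_left Finset.card_image_le _
  have c1' : ((((F n).erase 0).image (·⁻¹)).card : ℝ) ≤ (F n).card := by exact_mod_cast c1
  have c2' : ((F n).card : ℝ) ≤ ((F n).filter (· ∈ V')).card +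
      ((((F n).erase 0).image (·⁻¹)).filter (· ∈ V')).card := by exact_mod_cast c2
  linarith

lemma isIntegral_of_valuation_trivial {K : Type*} [Field K]
    (h : ∀ (V : ValuationSubring K) (x : K), x ∈ V) (x : K) : IsIntegral ℤ x := by
  have h1 : x ∈ (integralClosure (Subring.closure (∅ : Set K)) K).toSubring := by
    rw [← iInf_valuationSubring_superset]
    simp only [Subring.mem_iInf]
    exact fun V => h V.1 x
  have h2 : IsIntegral (Subring.closure (∅ : Set K)) x := h1
  have : Algebra.IsIntegral ℤ (Subring.closure (∅ : Set K)) := by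
    constructor
    rintro ⟨y, hy⟩
    rw [Subring.closure_empty, Subring.mem_bot] at hy
    obtain ⟨m, rfl⟩ := hy
    have : IsIntegral ℤ (algebraMap ℤ (Subring.closure (∅ : Set K)) m) := isIntegral_algebraMap
    convert this using 1
    ext
    simp
  exact isIntegral_trans x h2

lemma not_charZero_of_isIntegral {K : Type*} [Field K]
    (h : ∀ x : K, IsIntegral ℤ x) : ¬ CharZero K := by
  intro hc
  have h1 : IsIntegral ℤ (algebraMap ℚ K (1/2)) := h _
  rw [isIntegral_algebraMap_iff (algebraMap ℚ K).injective] at h1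
  obtain ⟨m, hm⟩ := IsIntegrallyClosed.isIntegral_iff.1 h1
  simp only [eq_intCast] at hm
  have : ((2 * m : ℤ) : ℚ) = (1 : ℤ) := by push_cast; rw [hm]; norm_num
  have := Int.cast_injective this
  omega

lemma finite_adjoin {K : Type*} [Field K]
    (h : ∀ x : K, IsIntegral ℤ x) (s : Set K) (hs : s.Finite) :
    Finite (Algebra.adjoin ℤ s) := by
  have hfg := fg_adjoin_of_finite (R := ℤ) hs (fun x _ => h x)
  have : Module.Finite ℤ (Algebra.adjoin ℤ s) := Module.Finite.iff_fg.2 hfg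
  have hc := not_charZero_of_isIntegral h
  obtain ⟨p, hp⟩ := CharP.exists K
  have hp0 : p ≠ 0 := by
    rintro rfl
    exact hc (CharP.charP_to_charZero K)
  apply Module.finite_of_fg_torsion
  intro z
  refine ⟨⟨(p : ℤ), mem_nonZeroDivisors_of_ne_zero (by exact_mod_cast hp0)⟩, ?_⟩
  ext
  simp [Submonoid.smul_def]

lemma folner_of_locallyFinite {G : Type*} [Group G] [Countable G]
    (h : ∀ s : Set G, s.Finite → ∃ H : Subgroup G, Finite H ∧ s ⊆ H) :
    ∃ F : ℕ → Finset G, IsMulFolner F := by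
  obtain ⟨e, he⟩ := exists_surjective_nat G
  choose H hH hs using fun n : ℕ => h (e '' Set.Iic n) ((Set.finite_Iic n).image e)
  have hfin : ∀ n, (H n : Set G).Finite := fun n => Set.toFinite _
  refine ⟨fun n => (hfin n).toFinset, fun n => ⟨1, by simp⟩, fun g => ?_⟩
  obtain ⟨k, rfl⟩ := he g
  refine tendsto_const_nhds.congr' ?_
  filter_upwards [eventually_ge_atTop k] with n hn
  have hg : e k ∈ H n := hs n ⟨k, hn, rfl⟩
  have himg : (hfin n).toFinset.image (e k * ·) = (hfin n).toFinset := by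
    ext z
    simp only [Finset.mem_image, Set.Finite.mem_toFinset, SetLike.mem_coe]
    constructor
    · rintro ⟨w, hw, rfl⟩
      exact (H n).mul_mem hg hw
    · intro hz
      exact ⟨(e k)⁻¹ * z, (H n).mul_mem ((H n).inv_mem hg) hz, by simp⟩
  have hne : ((hfin n).toFinset.card : ℝ) ≠ 0 := by
    have : 0 < (hfin n).toFinset.card := Finset.card_pos.2 ⟨1, by simp⟩
    positivity
  rw [himg, Finset.inter_self, div_self hne]

lemma gl_locallyFinite {K : Type*} [Field K]
    (h : ∀ x : K, IsIntegral ℤ x) (s : Set (GL (Fin 2) K)) (hs : s.Finite) :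
    ∃ H : Subgroup (GL (Fin 2) K), Finite H ∧ s ⊆ H := by
  let t : Set K := ⋃ g ∈ s, ((Set.range fun ij : Fin 2 × Fin 2 => g.1 ij.1 ij.2) ∪
    (Set.range fun ij : Fin 2 × Fin 2 => g⁻¹.1 ij.1 ij.2))
  have ht : t.Finite := hs.biUnion fun g _ => (Set.finite_range _).union (Set.finite_range _)
  let R := Algebra.adjoin ℤ t
  have hR : Finite R := finite_adjoin h t ht
  have hM : Finite (Matrix (Fin 2) (Fin 2) R) := inferInstanceAs (Finite (Fin 2 → Fin 2 → R))
  have hGL : Finite (GL (Fin 2) R) := Finite.of_injective (fun g => g.1) Units.val_injective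
  let f : R →+* K := R.val.toRingHom
  refine ⟨(Matrix.GeneralLinearGroup.map (n := Fin 2) f).range, ?_, ?_⟩
  · exact Finite.of_surjective _ (MonoidHom.rangeRestrict_surjective _)
  · intro g hg
    have h1 : ∀ i j, g.1 i j ∈ R := fun i j => Algebra.subset_adjoin
      (Set.mem_biUnion hg (Or.inl ⟨(i, j), rfl⟩))
    have h2 : ∀ i j, g⁻¹.1 i j ∈ R := fun i j => Algebra.subset_adjoin
      (Set.mem_biUnion hg (Or.inr ⟨(i, j), rfl⟩))
    let A : Matrix (Fin 2) (Fin 2) R := Matrix.of fun i j => ⟨g.1 i j, h1 i j⟩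
    let B : Matrix (Fin 2) (Fin 2) R := Matrix.of fun i j => ⟨g⁻¹.1 i j, h2 i j⟩
    have hf : Function.Injective f := Subtype.val_injective
    have hA : A.map f = g.1 := rfl
    have hB : B.map f = g⁻¹.1 := rfl
    have hAB : A * B = 1 := by
      apply Matrix.map_injective hf
      show Matrix.map _ f = Matrix.map _ f
      rw [Matrix.map_mul, hA, hB, Matrix.map_one f f.map_zero f.map_one]
      exact g.mul_inv
    have hBA : B * A = 1 := by
      apply Matrix.map_injective hf
      show Matrix.map _ f = Matrix.map _ f
      rw [Matrix.map_mul, hA, hB, Matrix.map_one f f.map_zero f.map_one]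
      exact g.inv_mul
    exact ⟨⟨A, B, hAB, hBA⟩, Units.ext hA⟩

/-- If a countable field `K` admits an additive Følner sequence `(F_n)` such that
`((F_n \ {0})⁻¹)` is also an additive Følner sequence, then `PGL₂(K)` is amenable, i.e.,
admits a left Følner sequence. -/
theorem statement14
    {K : Type*} [Field K] [Countable K]
    (F : ℕ → Finset K) (hF : IsAddFolner F)
    (hFinv : IsAddFolner (fun n => ((F n).erase 0).image (·⁻¹))) :
    ∃ G : ℕ → Finset (PGL2 K), IsMulFolner G := by
  have hint : ∀ x : K, IsIntegral ℤ x :=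
    isIntegral_of_valuation_trivial (valuation_trivial F hF hFinv)
  have hM : Countable (Matrix (Fin 2) (Fin 2) K) :=
    inferInstanceAs (Countable (Fin 2 → Fin 2 → K))
  have hGL : Countable (GL (Fin 2) K) :=
    Function.Injective.countable (f := fun g : GL (Fin 2) K => g.1) Units.val_injective
  have hP : Countable (PGL2 K) :=
    Function.Surjective.countable (QuotientGroup.mk'_surjective (Subgroup.center (GL (Fin 2) K)))
  apply folner_of_locallyFinite
  intro s hs
  obtain ⟨H, hH, hsub⟩ := gl_locallyFinite hint (Quotient.out '' s) (hs.image _)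
  refine ⟨H.map (QuotientGroup.mk' _), ?_, ?_⟩
  · exact (Set.Finite.image _ (Set.toFinite (H : Set (GL (Fin 2) K)))).to_subtype
  · intro z hz
    exact ⟨Quotient.out z, hsub ⟨z, hz, rfl⟩, Quotient.out_eq z⟩
end

section
/- Let K be a countably infinite field and let n₁,…,n_r be distinct nonzero integers, none divisible by the characteristic of K. Then the subgroup Γ = {(a^{n₁},…,a^{n_r}) : a ∈ K*} of (K*)^r is coupling-resistant: the only Γ-invariant probability measure on K̂^r (for the coordinatewise dual actions) whose marginal on each factor is the Haar measure m_{K̂} is the product measure m_{K̂} ⊗ ⋯ ⊗ m_{K̂}. -/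
open MeasureTheory Filter

noncomputable section

/-- The Pontryagin dual of the additive group of `K`. -/
abbrev AddDual (K : Type*) [AddCommGroup K] [TopologicalSpace K] : Type _ :=
  PontryaginDual (Multiplicative K)

/-- Precomposition of a character with an additive homomorphism. -/
def dualComp {A B : Type*} [AddCommGroup A] [AddCommGroup B]
    [TopologicalSpace A] [DiscreteTopology A] [TopologicalSpace B]
    (f : A →+ B) (ξ : AddDual B) : AddDual A :=
  ξ.comp ⟨AddMonoidHom.toMultiplicative f, continuous_of_discreteTopology⟩

/-- The dual action of multiplication by `a`: `(dualSmul a ξ) b = ξ (a * b)`. -/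
def dualSmul {K : Type*} [Field K] [TopologicalSpace K] [DiscreteTopology K]
    (a : K) (ξ : AddDual K) : AddDual K :=
  dualComp (AddMonoidHom.mulLeft a) ξ

namespace CR

/-! ### Iterated averages and the box inequality -/

/-- Iterated average of `F` over the sums `z + ∑ Y j`. -/
def avg {K : Type*} [Add K] {N : ℕ} : List (Fin N → K) → (K → ℂ) → K → ℂ
  | [], F, z => F z
  | Y :: X, F, z => ∑ j, (N : ℂ)⁻¹ * avg X F (z + Y j)

/-- Iterated box average. -/
def avg2 {K : Type*} [Add K] {N : ℕ} : List (Fin N → K) → (K → ℂ) → K → ℂ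
  | [], F, z => F z
  | Y :: X, F, z => ∑ p : Fin N × Fin N, ((N : ℂ)⁻¹ * (N : ℂ)⁻¹) *
      avg2 X (fun x => F (x + Y p.1) * (starRingEnd ℂ) (F (x + Y p.2))) z

/-- Mixed differences. -/
def mdiff {K G : Type*} [Add K] [AddCommGroup G] : List (K × K) → (K → G) → K → G
  | [], f, z => f z
  | s :: l, f, z => mdiff l (fun x => f (x + s.1) - f (x + s.2)) z

/-- Nondegenerate configurations. -/
def Strict {K : Type*} {N : ℕ} : List (Fin N → K) → Set (List (K × K))
  | [] => {[]}
  | Y :: X => {c | ∃ i j, i ≠ j ∧ ∃ l ∈ Strict X, c = (Y i, Y j) :: l}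

/-- All sums are nonzero. -/
def SumNZ {K : Type*} [AddCommGroup K] {N : ℕ} : List (Fin N → K) → K → Prop
  | [], z => z ≠ 0
  | Y :: X, z => ∀ j, SumNZ X (z + Y j)

section box
variable {K : Type*} [AddCommGroup K] {N : ℕ}

lemma avg_shift (X : List (Fin N → K)) (F : K → ℂ) (a z : K) :
    avg X (fun x => F (x + a)) z = avg X F (z + a) := by
  induction X generalizing z with
  | nil => rfl
  | cons Y X ih => simp only [avg, ih]; simp only [add_right_comm]

lemma avg_sum {ι : Type*} (s : Finset ι) (X : List (Fin N → K)) (F : ι → K → ℂ) (c : ℂ) (z : K) :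
    avg X (fun x => ∑ i ∈ s, c * F i x) z = ∑ i ∈ s, c * avg X (F i) z := by
  induction X generalizing z with
  | nil => rfl
  | cons Y X ih =>
    simp only [avg, ih, Finset.mul_sum]
    rw [Finset.sum_comm]
    refine Finset.sum_congr rfl fun _ _ => Finset.sum_congr rfl fun _ _ => by ring

lemma mean_pow {ι : Type*} [Fintype ι] (c : ℝ) (hc : 0 ≤ c)
    (h1 : ∑ _i : ι, c = 1) (f : ι → ℝ) (hf : ∀ i, 0 ≤ f i) (n : ℕ) :
    (∑ i, c * f i) ^ n ≤ ∑ i, c * f i ^ n :=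
  Real.pow_arith_mean_le_arith_mean_pow Finset.univ (fun _ => c) f (fun _ _ => hc) h1
    (fun i _ => hf i) n

lemma avg_cs (hN : 0 < N) (X : List (Fin N → K)) (G : K → ℂ) (z : K) :
    ‖avg X G z‖ ^ 2 ≤ (avg X (fun x => G x * (starRingEnd ℂ) (G x)) z).re := by
  induction X generalizing z with
  | nil =>
    simp only [avg, Complex.mul_conj, Complex.ofReal_re, Complex.normSq_eq_norm_sq]; exact le_rfl
  | cons Y X ih =>
    simp only [avg]
    have hN' : (0 : ℝ) < N := by exact_mod_cast hN
    calc ‖∑ j, (N : ℂ)⁻¹ * avg X G (z + Y j)‖ ^ 2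
        ≤ (∑ j, (N : ℝ)⁻¹ * ‖avg X G (z + Y j)‖) ^ 2 := by
          gcongr
          refine (norm_sum_le _ _).trans (le_of_eq ?_)
          simp
      _ ≤ ∑ j, (N : ℝ)⁻¹ * ‖avg X G (z + Y j)‖ ^ 2 :=
          mean_pow _ (by positivity) (by simp; field_simp) _ (fun _ => norm_nonneg _) 2
      _ ≤ ∑ j, (N : ℝ)⁻¹ * (avg X (fun x => G x * (starRingEnd ℂ) (G x)) (z + Y j)).re := by
          gcongr with j; exact ih _
      _ = _ := by
          rw [Complex.re_sum]
          refine Finset.sum_congr rfl fun j _ => ?_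
          rw [show (N : ℂ)⁻¹ = ((N : ℝ)⁻¹ : ℝ) by push_cast; rfl, Complex.re_ofReal_mul]

lemma box_step (hN : 0 < N) (Y : Fin N → K) (X : List (Fin N → K)) (F : K → ℂ) (z : K) :
    ‖avg (Y :: X) F z‖ ^ 2 ≤ ∑ p : Fin N × Fin N, ((N : ℝ)⁻¹ * (N : ℝ)⁻¹) *
      (avg X (fun x => F (x + Y p.1) * (starRingEnd ℂ) (F (x + Y p.2))) z).re := by
  have h1 : avg (Y :: X) F z = avg X (fun x => ∑ j, (N : ℂ)⁻¹ * F (x + Y j)) z := by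
    rw [avg_sum]
    simp only [avg, avg_shift]
  have h2 : (fun x => (∑ j, (N : ℂ)⁻¹ * F (x + Y j)) *
      (starRingEnd ℂ) (∑ j, (N : ℂ)⁻¹ * F (x + Y j))) = fun x => ∑ p : Fin N × Fin N,
        ((N : ℂ)⁻¹ * (N : ℂ)⁻¹) * (F (x + Y p.1) * (starRingEnd ℂ) (F (x + Y p.2))) := by
    funext x
    rw [map_sum, Finset.sum_mul_sum, Fintype.sum_prod_type]
    refine Finset.sum_congr rfl fun _ _ => Finset.sum_congr rfl fun _ _ => ?_
    simp only [map_mul, map_inv₀, Complex.conj_natCast]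
    ring
  rw [h1]
  refine (avg_cs hN X _ z).trans (le_of_eq ?_)
  rw [h2, avg_sum, Complex.re_sum]
  refine Finset.sum_congr rfl fun p _ => ?_
  rw [show (N : ℂ)⁻¹ * (N : ℂ)⁻¹ = (((N : ℝ)⁻¹ * (N : ℝ)⁻¹ : ℝ) : ℂ) by push_cast; rfl,
    Complex.re_ofReal_mul]

lemma box_ineq (hN : 0 < N) (Y : Fin N → K) (X : List (Fin N → K)) (F : K → ℂ) (z : K) :
    ‖avg (Y :: X) F z‖ ^ (2 ^ (Y :: X).length) ≤ (avg2 (Y :: X) F z).re := by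
  have hN' : (0 : ℝ) < N := by exact_mod_cast hN
  have hre : (avg2 (Y :: X) F z).re = ∑ p : Fin N × Fin N, ((N : ℝ)⁻¹ * (N : ℝ)⁻¹) *
      (avg2 X (fun x => F (x + Y p.1) * (starRingEnd ℂ) (F (x + Y p.2))) z).re := by
    simp only [avg2]
    rw [Complex.re_sum]
    refine Finset.sum_congr rfl fun p _ => ?_
    rw [show (N : ℂ)⁻¹ * (N : ℂ)⁻¹ = (((N : ℝ)⁻¹ * (N : ℝ)⁻¹ : ℝ) : ℂ) by push_cast; rfl,
      Complex.re_ofReal_mul]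
  have hs := box_step hN Y X F z
  induction X generalizing F Y with
  | nil => rw [hre]; simpa [avg, avg2] using hs
  | cons Y' X ih =>
    rw [hre, List.length_cons, pow_succ', pow_mul]
    have hs' : ‖avg (Y :: Y' :: X) F z‖ ^ 2 ≤ ∑ p : Fin N × Fin N, ((N : ℝ)⁻¹ * (N : ℝ)⁻¹) *
      ‖avg (Y' :: X) (fun x => F (x + Y p.1) * (starRingEnd ℂ) (F (x + Y p.2))) z‖ := by
      refine hs.trans ?_
      gcongr with p
      exact Complex.re_le_norm _
    calc _ ≤ (∑ p : Fin N × Fin N, ((N : ℝ)⁻¹ * (N : ℝ)⁻¹) *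
      ‖avg (Y' :: X) (fun x => F (x + Y p.1) * (starRingEnd ℂ) (F (x + Y p.2))) z‖)
        ^ (2 ^ (Y' :: X).length) := by gcongr
      _ ≤ _ := mean_pow _ (by positivity) (by simp; field_simp) _ (fun _ => norm_nonneg _) _
      _ ≤ _ := by
        gcongr with p
        refine ih _ _ ?_ (box_step hN _ _ _ _)
        simp only [avg2]
        rw [Complex.re_sum]
        refine Finset.sum_congr rfl fun p _ => ?_
        rw [show (N : ℂ)⁻¹ * (N : ℂ)⁻¹ = (((N : ℝ)⁻¹ * (N : ℝ)⁻¹ : ℝ) : ℂ) by push_cast; rfl,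
          Complex.re_ofReal_mul]
end box

/-! ### Mixed differences -/
section md
variable {K : Type*} [AddCommGroup K] {N : ℕ}

lemma mdiff_cons' {G : Type*} [AddCommGroup G] (s : K × K) (l : List (K × K)) (f : K → G) (z : K) :
    mdiff (s :: l) f z = mdiff l f (z + s.1) - mdiff l f (z + s.2) := by
  induction l generalizing f s z with
  | nil => rfl
  | cons t l ih =>
    rw [mdiff, ih, ih t f, ih t f]
    have e1 := ih s (fun x => f x) (z + t.1)
    have e2 := ih s (fun x => f x) (z + t.2)
    rw [mdiff] at e1 e2
    rw [e1, e2]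
    simp only [add_right_comm z s.1, add_right_comm z s.2]
    abel

lemma mdiff_hom {G H : Type*} [AddCommGroup G] [AddCommGroup H] (φ : G →+ H)
    (l : List (K × K)) (f : K → G) (z : K) :
    mdiff l (fun x => φ (f x)) z = φ (mdiff l f z) := by
  induction l generalizing z with
  | nil => rfl
  | cons s l ih => rw [mdiff_cons', mdiff_cons', ih, ih, map_sub]

lemma strict_finite (X : List (Fin N → K)) : (Strict X).Finite := by
  induction X with
  | nil => simp [Strict]
  | cons Y X ih =>
    refine ((Set.finite_range (fun p : Fin N × Fin N => (Y p.1, Y p.2))).image2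
      (fun a b => a :: b) ih).subset ?_
    rintro c ⟨i, j, -, l, hl, rfl⟩
    exact ⟨_, ⟨(i, j), rfl⟩, l, hl, rfl⟩

lemma strict_length {X : List (Fin N → K)} {c} (h : c ∈ Strict X) : c.length = X.length := by
  induction X generalizing c with
  | nil => simp_all [Strict]
  | cons Y X ih =>
    obtain ⟨i, j, -, l, hl, rfl⟩ := h
    simp [ih hl]

lemma sumNZ_cofinite (X : List (Fin N → K)) : {z : K | ¬ SumNZ X z}.Finite := by
  induction X with
  | nil => simp [SumNZ]
  | cons Y X ih =>
    have : {z : K | ¬ SumNZ (Y :: X) z} ⊆ ⋃ j, (fun z => z + Y j) ⁻¹' {z | ¬ SumNZ X z} := by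
      intro z hz
      simpa [SumNZ] using hz
    refine (Set.finite_iUnion fun j => ?_).subset this
    exact ih.preimage (add_left_injective _).injOn

lemma exists_avoid [Infinite K] (N : ℕ) (B : Set K) (hB : B.Finite) :
    ∃ Y : Fin N → K, ∀ i j, i ≠ j → Y i - Y j ∉ B := by
  obtain ⟨f, -, hf⟩ := exists_seq_of_forall_finset_exists (fun _ : K => True)
    (fun x y => x - y ∉ B ∧ y - x ∉ B) (fun s _ => by
      have hfin : (⋃ x ∈ s, ((fun y => x - y) ⁻¹' B ∪ (fun y => y - x) ⁻¹' B)).Finite := by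
        refine s.finite_toSet.biUnion fun x _ => ?_
        exact (hB.preimage sub_right_injective.injOn).union
          (hB.preimage sub_left_injective.injOn)
      obtain ⟨y, hy⟩ := hfin.exists_notMem
      refine ⟨y, trivial, fun x hx => ?_⟩
      simp only [Set.mem_iUnion, not_exists] at hy
      have := hy x hx
      simpa using this)
  refine ⟨fun i => f i, fun i j hij => ?_⟩
  rcases lt_or_gt_of_ne hij with h | h
  · exact (hf _ _ h).1
  · exact (hf _ _ h).2

end md

/-! ### Differences of negative powers -/
section neg
variable {K : Type*} [Field K] {N : ℕ}

/-- `x ↦ ∑ c_y (x+y)^{-m}` -/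
def Lc (m : ℕ) (u : K →₀ K) (x : K) : K := u.sum fun y a => a * ((x + y) ^ m)⁻¹

lemma Lc_shift (m : ℕ) (u : K →₀ K) (a z : K) :
    Lc m (u.mapDomain (fun y => y + a)) z = Lc m u (z + a) := by
  unfold Lc
  rw [Finsupp.sum_mapDomain_index (by simp) (by intros; ring)]
  simp only [add_assoc, add_comm a]

lemma Lc_sub (m : ℕ) (u v : K →₀ K) (z : K) : Lc m (u - v) z = Lc m u z - Lc m v z := by
  unfold Lc
  exact Finsupp.sum_sub_index (by intros; ring)

lemma Lc_zeros (m : ℕ) (hm : 0 < m) (u : K →₀ K) (hu : u ≠ 0) : {z | Lc m u z = 0}.Finite := by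
  classical
  obtain ⟨y0, hy0⟩ := Finsupp.ne_iff.mp hu
  simp only [Finsupp.coe_zero, Pi.zero_apply] at hy0
  let G : Polynomial K := ∑ y ∈ u.support, Polynomial.C (u y) *
    ∏ y' ∈ u.support.erase y, (Polynomial.X + Polynomial.C y') ^ m
  have hG : G ≠ 0 := by
    intro h
    have h1 : G.eval (-y0) = 0 := by rw [h]; simp
    simp only [G, Polynomial.eval_finsetSum, Polynomial.eval_mul, Polynomial.eval_C,
      Polynomial.eval_prod, Polynomial.eval_pow, Polynomial.eval_add, Polynomial.eval_X] at h1
    rw [Finset.sum_eq_single y0] at h1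
    · rcases mul_eq_zero.mp h1 with h | h
      · exact hy0 h
      · obtain ⟨y, hy, h⟩ := Finset.prod_eq_zero_iff.mp h
        have := eq_zero_of_pow_eq_zero h
        exact (Finset.ne_of_mem_erase hy) (by linear_combination this)
    · intro y _ hne
      refine mul_eq_zero_of_right _ (Finset.prod_eq_zero (i := y0) ?_ ?_)
      · exact Finset.mem_erase.mpr ⟨hne.symm, Finsupp.mem_support_iff.mpr hy0⟩
      · simp [hm.ne']
    · intro h; exact absurd (Finsupp.mem_support_iff.mpr hy0) h
  refine ((G.rootSet_finite K).union (u.support.finite_toSet.image (fun y => -y))).subset ?_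
  intro z hz
  by_contra hcon
  simp only [Set.mem_union, Set.mem_image, not_or, not_exists, not_and] at hcon
  obtain ⟨h1, h2⟩ := hcon
  apply h1
  rw [Polynomial.mem_rootSet]
  refine ⟨hG, ?_⟩
  have key : G.eval z = Lc m u z * ∏ y ∈ u.support, (z + y) ^ m := by
    simp only [G, Lc, Finsupp.sum, Polynomial.eval_finsetSum, Polynomial.eval_mul,
      Polynomial.eval_C, Polynomial.eval_prod, Polynomial.eval_pow, Polynomial.eval_add,
      Polynomial.eval_X, Finset.sum_mul]
    refine Finset.sum_congr rfl fun y hy => ?_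
    rw [← Finset.mul_prod_erase _ _ hy]
    have : z + y ≠ 0 := fun h => h2 y hy (by linear_combination -h)
    field_simp
  rw [Polynomial.coe_aeval_eq_eval, key, hz, zero_mul]

lemma neg_top [Infinite K] (m N d : ℕ) : ∃ X : List (Fin N → K), X.length = d ∧
    ∀ c ∈ Strict X, ∃ u : K →₀ K, u ≠ 0 ∧ ∀ z, mdiff c (fun x : K => (x ^ m)⁻¹) z = Lc m u z := by
  classical
  induction d with
  | zero =>
    refine ⟨[], rfl, fun c hc => ⟨Finsupp.single 0 1, by simp, fun z => ?_⟩⟩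
    simp only [Strict, Set.mem_singleton_iff] at hc
    subst hc
    simp [mdiff, Lc]
  | succ d ih =>
    obtain ⟨X, hX, h⟩ := ih
    choose! u hu0 hu using h
    obtain ⟨Y, hY⟩ := exists_avoid N (⋃ c ∈ Strict X, Set.image2 (fun a b => a - b)
      ((u c).support : Set K) ((u c).support : Set K))
      ((strict_finite X).biUnion fun c _ => (Finset.finite_toSet _).image2 _
        (Finset.finite_toSet _))
    refine ⟨Y :: X, by simp [hX], ?_⟩
    rintro c ⟨i, j, hij, l, hl, rfl⟩
    refine ⟨(u l).mapDomain (fun y => y + Y i) - (u l).mapDomain (fun y => y + Y j), ?_, ?_⟩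
    · obtain ⟨y0, hy0⟩ := Finsupp.ne_iff.mp (hu0 l hl)
      simp only [Finsupp.coe_zero, Pi.zero_apply] at hy0
      intro h0
      have h1 := DFunLike.congr_fun h0 (y0 + Y i)
      rw [Finsupp.sub_apply, Finsupp.mapDomain_apply (add_left_injective _)] at h1
      have h2 : y0 + Y i = (y0 + (Y i - Y j)) + Y j := by ring
      rw [h2, Finsupp.mapDomain_apply (add_left_injective (Y j))] at h1
      have h3 : u l (y0 + (Y i - Y j)) ≠ 0 := by
        intro h3; rw [h3] at h1; simp at h1; exact hy0 h1
      apply hY i j hij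
      simp only [Set.mem_iUnion]
      refine ⟨l, hl, y0 + (Y i - Y j), ?_, y0, ?_, by ring⟩
      · simpa using h3
      · simpa using hy0
    · intro z
      rw [mdiff_cons', Lc_sub, Lc_shift, Lc_shift, hu l hl, hu l hl]

end neg

/-! ### Differences of positive powers -/
section pos
variable {K : Type*} [Field K] {N : ℕ}

/-- product of Frobenius powers -/
def fM (q : ℕ) (M : Multiset ℕ) (x : K) : K := (M.map fun J => x ^ (q ^ J)).prod

lemma fM_eq (q : ℕ) (M : Multiset ℕ) (x : K) :
    fM q M x = x ^ (M.map fun J => q ^ J).sum := by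
  unfold fM
  induction M using Multiset.induction_on with
  | empty => simp
  | cons J M ih => simp [ih, pow_add]

lemma fM_cons (q : ℕ) (J : ℕ) (M : Multiset ℕ) (x : K) :
    fM q (J ::ₘ M) x = x ^ (q ^ J) * fM q M x := by simp [fM]

/-- iterated difference as a linear functional -/
def mdL (l : List (K × K)) (z : K) : (K → K) →ₗ[K] K where
  toFun f := mdiff l f z
  map_add' f g := by
    induction l generalizing z with
    | nil => rfl
    | cons s l ih => rw [mdiff_cons', mdiff_cons', mdiff_cons', ih, ih]; ring
  map_smul' a f := by
    induction l generalizing z with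
    | nil => rfl
    | cons s l ih =>
      rw [mdiff_cons', mdiff_cons', ih, ih]; simp only [RingHom.id_apply, smul_eq_mul]; ring

lemma mdL_apply (l : List (K × K)) (z : K) (f : K → K) : mdL l z f = mdiff l f z := rfl

/-- span of low weight functions -/
def Ws (K : Type*) [Field K] (q n : ℕ) : Submodule K (K → K) :=
  Submodule.span K {g | ∃ M : Multiset ℕ, M.card + 2 ≤ n ∧ g = fM q M}

lemma Ws_mono {q n n' : ℕ} (h : n ≤ n') : Ws K q n ≤ Ws K q n' :=
  Submodule.span_mono fun _ ⟨M, hM, hg⟩ => ⟨M, hM.trans h, hg⟩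

lemma Ws_mul {q n : ℕ} (J : ℕ) {r : K → K} (hr : r ∈ Ws K q n) :
    (fun x => x ^ (q ^ J) * r x) ∈ Ws K q (n + 1) := by
  induction hr using Submodule.span_induction with
  | mem g hg =>
    obtain ⟨M, hM, rfl⟩ := hg
    refine Submodule.subset_span ⟨J ::ₘ M, by simp; omega, ?_⟩
    funext x; rw [fM_cons]
  | zero => 
    have : (fun x : K => x ^ (q ^ J) * (0 : K → K) x) = 0 := by funext x; simp
    rw [this]; exact Submodule.zero_mem _
  | add g g' _ _ h h' =>
    have := Submodule.add_mem _ h h'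
    convert this using 1
    funext x; simp [mul_add]
  | smul a g _ h =>
    have := Submodule.smul_mem _ a h
    convert this using 1
    funext x; simp; ring

/-- first order term -/
def Sm (q : ℕ) (M : Multiset ℕ) (a : K) : K → K :=
  (M.map fun J => (a ^ (q ^ J)) • fM q (M.erase J)).sum

lemma Sm_mem (q : ℕ) (M : Multiset ℕ) (a : K) : Sm q M a ∈ Ws K q (M.card + 1) := by
  refine multiset_sum_mem _ fun g hg => ?_
  obtain ⟨J, hJ, rfl⟩ := Multiset.mem_map.mp hg
  refine Submodule.smul_mem _ _ (Submodule.subset_span ⟨M.erase J, ?_, rfl⟩)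
  have := Multiset.card_erase_add_one hJ
  omega

lemma Sm_cons (q : ℕ) (J : ℕ) (M : Multiset ℕ) (a : K) (x : K) :
    Sm q (J ::ₘ M) a x = x ^ (q ^ J) * Sm q M a x + a ^ (q ^ J) * fM q M x := by
  have h1 : Sm q (J ::ₘ M) a = (a ^ (q ^ J)) • fM q M +
      (M.map fun J' => (a ^ (q ^ J')) • fM q (J ::ₘ M.erase J')).sum := by
    unfold Sm
    rw [Multiset.map_cons, Multiset.sum_cons, Multiset.erase_cons_head]
    congr 2
    refine Multiset.map_congr rfl fun J' hJ' => ?_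
    congr 2
    by_cases h : J = J'
    · subst h
      rw [Multiset.erase_cons_head, Multiset.cons_erase hJ']
    · rw [Multiset.erase_cons_tail _ h]
  rw [h1]
  have h2 : (M.map fun J' => (a ^ (q ^ J')) • fM q (J ::ₘ M.erase J')).sum x =
      x ^ (q ^ J) * Sm q M a x := by
    unfold Sm
    have e : ∀ (s : Multiset (K → K)), s.sum x = (s.map fun f => f x).sum := by
      intro s
      induction s using Multiset.induction_on with
      | empty => rfl
      | cons f s ih => simp [ih]
    rw [e, e, Multiset.map_map, Multiset.map_map, ← Multiset.sum_map_mul_left]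
    congr 1
    refine Multiset.map_congr rfl fun J' _ => ?_
    simp [fM_cons]; ring
  rw [Pi.add_apply, h2]; simp; ring

lemma fM_expand (q : ℕ) [ExpChar K q] (M : Multiset ℕ) (a : K) :
    ∃ r ∈ Ws K q M.card, ∀ x, fM q M (x + a) = fM q M x + Sm q M a x + r x := by
  induction M using Multiset.induction_on with
  | empty => exact ⟨0, Submodule.zero_mem _, fun x => by simp [fM, Sm]⟩
  | cons J M ih =>
    obtain ⟨r, hr, h⟩ := ih
    refine ⟨(fun x => x ^ (q ^ J) * r x) + (a ^ (q ^ J)) • Sm q M a + (a ^ (q ^ J)) • r, ?_, ?_⟩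
    · rw [Multiset.card_cons]
      exact Submodule.add_mem _ (Submodule.add_mem _ (Ws_mul J hr)
        (Submodule.smul_mem _ _ (Sm_mem q M a)))
        (Submodule.smul_mem _ _ (Ws_mono (Nat.le_succ _) hr))
    · intro x
      rw [fM_cons, fM_cons, h, Sm_cons, add_pow_expChar_pow]
      simp only [Pi.add_apply, Pi.smul_apply, smul_eq_mul]
      ring

lemma fM_diff (q : ℕ) [ExpChar K q] (M : Multiset ℕ) (a b : K) :
    ∃ r ∈ Ws K q M.card, (fun x => fM q M (x + a) - fM q M (x + b)) = Sm q M (a - b) + r := by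
  obtain ⟨r, hr, h⟩ := fM_expand q M a
  obtain ⟨r', hr', h'⟩ := fM_expand q M b
  refine ⟨r - r', Submodule.sub_mem _ hr hr', ?_⟩
  have h3 : Sm q M (a - b) = Sm q M a - Sm q M b := by
    unfold Sm
    rw [← Multiset.sum_map_sub]
    congr 1
    refine Multiset.map_congr rfl fun J' _ => ?_
    rw [sub_pow_expChar_pow, sub_smul]
  funext x
  rw [h, h', h3]
  simp only [Pi.add_apply, Pi.sub_apply]
  ring

lemma mdL_Ws (q : ℕ) (l : List (K × K)) (z : K) (n : ℕ)
    (h : ∀ M : Multiset ℕ, M.card + 2 ≤ n → mdiff l (fM q M) z = 0)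
    {r : K → K} (hr : r ∈ Ws K q n) : mdL l z r = 0 := by
  have : Ws K q n ≤ LinearMap.ker (mdL l z) := by
    refine Submodule.span_le.mpr ?_
    rintro g ⟨M, hM, rfl⟩
    exact h M hM
  exact this hr

lemma kill (q : ℕ) [ExpChar K q] (l : List (K × K)) (M : Multiset ℕ) (h : M.card < l.length)
    (z : K) : mdiff l (fM q M) z = 0 := by
  induction l generalizing M with
  | nil => simp at h
  | cons s l ih =>
    rw [mdiff]
    obtain ⟨r, hr, e⟩ := fM_diff q M s.1 s.2
    rw [e, ← mdL_apply]
    refine mdL_Ws q l z (M.card + 1) (fun M' hM' => ih M' ?_)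
      (Submodule.add_mem _ (Sm_mem q M _) (Ws_mono (Nat.le_succ _) hr))
    simp at h; omega

lemma top_const (q : ℕ) [ExpChar K q] (l : List (K × K)) (M : Multiset ℕ) (h : M.card = l.length)
    (z : K) : mdiff l (fM q M) z = mdiff l (fM q M) 0 := by
  have := kill q ((z, 0) :: l) M (by simp [h]) 0
  rw [mdiff_cons'] at this
  simpa using sub_eq_zero.mp this

lemma top_step (q : ℕ) [ExpChar K q] (s : K × K) (l : List (K × K)) (M : Multiset ℕ)
    (h : M.card = l.length + 1) (z : K) : mdiff (s :: l) (fM q M) z =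
      ∑ J ∈ M.toFinset, ((M.count J : K) * mdiff l (fM q (M.erase J)) 0) *
        (s.1 - s.2) ^ (q ^ J) := by
  rw [mdiff]
  obtain ⟨r, hr, e⟩ := fM_diff q M s.1 s.2
  rw [e, ← mdL_apply, map_add, mdL_Ws q l z M.card (fun M' hM' => kill q l M' (by omega) z) hr,
    add_zero, Sm, map_multiset_sum, Multiset.map_map, Finset.sum_multiset_map_count]
  refine Finset.sum_congr rfl fun J hJ => ?_
  have hJ' := Multiset.mem_toFinset.mp hJ
  have := Multiset.card_erase_add_one hJ'
  simp only [Function.comp, map_smul, mdL_apply, smul_eq_mul, nsmul_eq_mul]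
  rw [top_const q l (M.erase J) (by omega) z]
  ring

lemma pos_top [Infinite K] (q : ℕ) [ExpChar K q] (M0 : Multiset ℕ)
    (hinj : ∀ J ∈ M0, ∀ J' ∈ M0, q ^ J = q ^ J' → J = J')
    (hc : ∀ J, ∀ c, 0 < c → c ≤ M0.count J → (c : K) ≠ 0) (N d : ℕ) :
    ∃ X : List (Fin N → K), X.length = d ∧ ∀ M ≤ M0, M.card = d → ∀ c ∈ Strict X,
      ∀ z, mdiff c (fM q M) z ≠ 0 := by
  classical
  induction d with
  | zero =>
    refine ⟨[], rfl, fun M _ hM c hc z => ?_⟩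
    simp only [Strict, Set.mem_singleton_iff] at hc
    subst hc
    rw [Multiset.card_eq_zero] at hM
    subst hM
    simp [mdiff, fM]
  | succ d ih =>
    obtain ⟨X, hX, h⟩ := ih
    let P : Multiset ℕ → List (K × K) → Polynomial K := fun M l =>
      ∑ J ∈ M.toFinset, Polynomial.C ((M.count J : K) * mdiff l (fM q (M.erase J)) 0) *
        Polynomial.X ^ (q ^ J)
    obtain ⟨Y, hY⟩ := exists_avoid N (⋃ M ∈ (M0.powerset.toFinset : Set (Multiset ℕ)),
      ⋃ l ∈ Strict X, (P M l).rootSet K)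
      ((Finset.finite_toSet _).biUnion fun M _ => (strict_finite X).biUnion fun c _ =>
        Polynomial.rootSet_finite _ _)
    refine ⟨Y :: X, by simp [hX], ?_⟩
    rintro M hM hMd c ⟨i, j, hij, l, hl, rfl⟩ z h0
    have hlen := strict_length hl
    apply hY i j hij
    simp only [Set.mem_iUnion]
    refine ⟨M, by simpa using hM, l, hl, ?_⟩
    rw [Polynomial.mem_rootSet]
    refine ⟨?_, ?_⟩
    · obtain ⟨J0, hJ0⟩ := Multiset.card_pos_iff_exists_mem.mp (show 0 < M.card by omega)
      intro hP
      have h1 : (P M l).coeff (q ^ J0) = 0 := by rw [hP]; simp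
      simp only [P, Polynomial.finsetSum_coeff, Polynomial.coeff_C_mul,
        Polynomial.coeff_X_pow] at h1
      rw [Finset.sum_eq_single J0] at h1
      · simp only [if_true, mul_one] at h1
        rcases mul_eq_zero.mp h1 with h2 | h2
        · exact hc J0 (M.count J0) (Multiset.count_pos.mpr hJ0) (Multiset.count_le_of_le _ hM) h2
        · have := Multiset.card_erase_add_one hJ0
          exact h (M.erase J0) ((Multiset.erase_le _ _).trans hM) (by omega) l hl 0 h2
      · intro J hJ hne
        rw [if_neg, mul_zero]
        intro he
        exact hne (hinj J0 (Multiset.mem_of_le hM hJ0) J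
          (Multiset.mem_of_le hM (Multiset.mem_toFinset.mp hJ)) he).symm
      · intro h; exact absurd (Multiset.mem_toFinset.mpr hJ0) h
    · rw [top_step q _ l M (by omega)] at h0
      simpa [P, Polynomial.eval_finsetSum] using h0

end pos

/-! ### Digits -/

lemma digits_aux (p : ℕ) (hp : 1 < p) (m : ℕ) : ∀ e < p ^ m, ∃ M : Multiset ℕ,
    (M.map fun J => p ^ J).sum = e ∧ M.card ≤ m * (p - 1) ∧
      (M.card = m * (p - 1) → e = p ^ m - 1) := by
  induction m with
  | zero => intro e he; exact ⟨0, by simp at he ⊢; omega, by simp, by simp at he ⊢; omega⟩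
  | succ m ih =>
    intro e he
    have h1 : e / p < p ^ m := Nat.div_lt_of_lt_mul (by rwa [pow_succ'] at he)
    obtain ⟨M, hs, hcard, heq⟩ := ih (e / p) h1
    have hmod := Nat.mod_lt e (show 0 < p by omega)
    have hdm := Nat.div_add_mod e p
    refine ⟨M.map (· + 1) + Multiset.replicate (e % p) 0, ?_, ?_, ?_⟩
    · rw [Multiset.map_add, Multiset.sum_add, Multiset.map_map]
      have : (M.map ((fun J => p ^ J) ∘ fun x => x + 1)).sum = p * (e / p) := by
        rw [← hs, ← Multiset.sum_map_mul_left]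
        congr 1
        refine Multiset.map_congr rfl fun J _ => by simp [pow_succ']
      rw [this]; simpa using hdm
    · simp only [Multiset.card_add, Multiset.card_map, Multiset.card_replicate, Nat.succ_mul]
      omega
    · simp only [Multiset.card_add, Multiset.card_map, Multiset.card_replicate, Nat.succ_mul]
      intro h
      have h2 : M.card = m * (p - 1) := by omega
      have h3 : e % p = p - 1 := by omega
      have h4 := heq h2
      have h5 : 1 ≤ p ^ m := Nat.one_le_pow _ _ (by omega)
      rw [h3, h4] at hdm
      rw [← hdm, pow_succ']
      have : p ≤ p * p ^ m := Nat.le_mul_of_pos_right _ h5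
      rw [Nat.mul_sub]
      omega

/-- choice of `k` and digit expansions separating the maximal exponent -/
lemma exists_k {K : Type*} [Field K] (q : ℕ) [ExpChar K q] (n : ℕ) (hn : 0 < n)
    (hnc : (n : K) ≠ 0) : ∃ k : ℕ, 0 < k ∧ ∃ M0 : Multiset ℕ,
      (M0.map fun J => q ^ J).sum = k * n ∧ 0 < M0.card ∧
      (∀ J ∈ M0, ∀ J' ∈ M0, q ^ J = q ^ J' → J = J') ∧
      (∀ J, ∀ c, 0 < c → c ≤ M0.count J → (c : K) ≠ 0) ∧
      ∀ n' < n, ∃ M : Multiset ℕ, (M.map fun J => q ^ J).sum = k * n' ∧ M.card < M0.card := by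
  rcases ‹ExpChar K q› with _ | ⟨hp⟩
  · refine ⟨1, one_pos, Multiset.replicate n 0, by simp, by simpa, ?_, ?_, ?_⟩
    · intro J hJ J' hJ' _
      rw [Multiset.eq_of_mem_replicate hJ, Multiset.eq_of_mem_replicate hJ']
    · intro J c hc _
      exact_mod_cast hc.ne'
    · intro n' hn'
      exact ⟨Multiset.replicate n' 0, by simp, by simpa⟩
  · have hp1 := hp.one_lt
    have hcop : Nat.Coprime q n := by
      rw [hp.coprime_iff_not_dvd]
      intro h
      exact hnc ((CharP.cast_eq_zero_iff K q n).mpr h)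
    have hm : 0 < n.totient := Nat.totient_pos.mpr hn
    set m := n.totient
    have h1 : n ∣ q ^ m - 1 := by
      refine (Nat.modEq_iff_dvd' (Nat.one_le_pow _ _ (by omega))).mp ?_
      exact (Nat.ModEq.pow_totient hcop).symm
    obtain ⟨k, hk⟩ := h1
    have hqm : 1 < q ^ m := Nat.one_lt_pow hm.ne' hp1
    have hk0 : 0 < k := by
      rcases Nat.eq_zero_or_pos k with h | h
      · subst h; simp at hk; omega
      · exact h
    have hcount : ∀ J, ((q - 1) • Multiset.range m).count J ≤ q - 1 := by
      intro J
      rw [Multiset.count_nsmul]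
      have := Multiset.nodup_iff_count_le_one.mp (Multiset.nodup_range m) J
      nlinarith
    have hcard : ((q - 1) • Multiset.range m).card = m * (q - 1) := by
      simp [mul_comm]
    refine ⟨k, hk0, (q - 1) • Multiset.range m, ?_, ?_, ?_, ?_, ?_⟩
    · rw [Multiset.map_nsmul, Multiset.sum_nsmul, mul_comm, ← hk]
      have : ((Multiset.range m).map fun J => q ^ J).sum = ∑ J ∈ Finset.range m, q ^ J := rfl
      rw [this, smul_eq_mul, Nat.geomSum_eq hp1, Nat.mul_div_cancel']
      exact Nat.sub_one_dvd_pow_sub_one q m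
    · rw [hcard]; exact Nat.mul_pos hm (by omega)
    · intro J _ J' _ h
      exact Nat.pow_right_injective hp1 h
    · intro J c hc hle h0
      have := Nat.le_of_dvd hc ((CharP.cast_eq_zero_iff K q c).mp h0)
      have := hcount J
      omega
    · intro n' hn'
      have hlt : k * n' < q ^ m - 1 := by rw [hk, mul_comm n]; exact Nat.mul_lt_mul_of_pos_left hn' hk0
      obtain ⟨M, hs, hle, he⟩ := digits_aux q hp1 m (k * n') (by omega)
      refine ⟨M, hs, ?_⟩
      rw [hcard]
      refine lt_of_le_of_ne hle fun h => ?_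
      have := he h
      omega

end CR

namespace CR

section meas
variable {K : Type*} [Field K] [TopologicalSpace K] [DiscreteTopology K] {r : ℕ}

/-- the character of `K̂^r` attached to `w ∈ K^r` -/
def chr (w : Fin r → K) (ξ : Fin r → AddDual K) : ℂ :=
  ∏ i, ((ξ i (Multiplicative.ofAdd (w i)) : Circle) : ℂ)

lemma chr_zero (ξ : Fin r → AddDual K) : chr 0 ξ = 1 := by
  simp [chr]

lemma chr_sub (u v : Fin r → K) (ξ : Fin r → AddDual K) :
    chr (u - v) ξ = chr u ξ * (starRingEnd ℂ) (chr v ξ) := by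
  simp only [chr, map_prod, ← Finset.prod_mul_distrib]
  refine Finset.prod_congr rfl fun i _ => ?_
  rw [Pi.sub_apply, ofAdd_sub, map_div, Circle.coe_div, div_eq_mul_inv, ← Circle.coe_inv,
    Circle.coe_inv_eq_conj]

lemma norm_chr (w : Fin r → K) (ξ : Fin r → AddDual K) : ‖chr w ξ‖ = 1 := by
  simp only [chr, norm_prod]
  exact Finset.prod_eq_one fun i _ => Circle.norm_coe _

lemma continuous_ev (b : K) :
    Continuous fun ξ : AddDual K => ((ξ (Multiplicative.ofAdd b) : Circle) : ℂ) := by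
  refine continuous_subtype_val.comp ?_
  exact continuous_eval_const (F := ContinuousMonoidHom (Multiplicative K) Circle)
    (Multiplicative.ofAdd b)

lemma continuous_chr (w : Fin r → K) : Continuous (chr w : (Fin r → AddDual K) → ℂ) :=
  continuous_finsetProd _ fun i _ => (continuous_ev (w i)).comp (continuous_apply i)

variable [MeasurableSpace (AddDual K)] [BorelSpace (AddDual K)]

lemma measurable_chr (w : Fin r → K) : Measurable (chr w : (Fin r → AddDual K) → ℂ) :=
  Finset.measurable_fun_prod _ fun i _ => (continuous_ev (w i)).measurable.comp (measurable_pi_apply i)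

/-- Fourier transform -/
def phi (θ : Measure (Fin r → AddDual K)) (w : Fin r → K) : ℂ := ∫ ξ, chr w ξ ∂θ

lemma meas_avg {Ω : Type*} [MeasurableSpace Ω] {N : ℕ} (X : List (Fin N → K)) (F : K → Ω → ℂ)
    (hF : ∀ x, Measurable (F x)) (z : K) : Measurable fun ω => avg X (fun x => F x ω) z := by
  induction X generalizing z with
  | nil => exact hF z
  | cons Y X ih => exact Finset.measurable_fun_sum _ fun j _ => (ih _).const_mul _

lemma norm_avg {N : ℕ} (hN : 0 < N) (X : List (Fin N → K)) (F : K → ℂ)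
    (hF : ∀ x, ‖F x‖ ≤ 1) (z : K) : ‖avg X F z‖ ≤ 1 := by
  have hN' : (0 : ℝ) < N := by exact_mod_cast hN
  induction X generalizing z with
  | nil => exact hF z
  | cons Y X ih =>
    refine (norm_sum_le _ _).trans ?_
    calc _ ≤ ∑ j : Fin N, (N : ℝ)⁻¹ * 1 := by
          gcongr with j
          rw [norm_mul, norm_inv, Complex.norm_natCast]
          gcongr; exact ih _
      _ = 1 := by simp; field_simp

lemma norm_avg2 {N : ℕ} (hN : 0 < N) (X : List (Fin N → K)) (F : K → ℂ)
    (hF : ∀ x, ‖F x‖ ≤ 1) (z : K) : ‖avg2 X F z‖ ≤ 1 := by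
  have hN' : (0 : ℝ) < N := by exact_mod_cast hN
  induction X generalizing F with
  | nil => exact hF z
  | cons Y X ih =>
    refine (norm_sum_le _ _).trans ?_
    calc _ ≤ ∑ p : Fin N × Fin N, ((N : ℝ)⁻¹ * (N : ℝ)⁻¹) * 1 := by
          gcongr with j
          rw [norm_mul, norm_mul, norm_inv, Complex.norm_natCast]
          gcongr; refine ih _ fun x => ?_
          rw [norm_mul, RCLike.norm_conj]
          exact mul_le_one₀ (hF _) (norm_nonneg _) (hF _)
      _ = 1 := by simp; field_simp

lemma meas_avg2 {Ω : Type*} [MeasurableSpace Ω] {N : ℕ} (X : List (Fin N → K)) (F : K → Ω → ℂ)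
    (hF : ∀ x, Measurable (F x)) (z : K) : Measurable fun ω => avg2 X (fun x => F x ω) z := by
  induction X generalizing F with
  | nil => exact hF z
  | cons Y X ih =>
    refine Finset.measurable_fun_sum _ fun p _ => Measurable.const_mul ?_ _
    exact ih (fun x ω => F (x + Y p.1) ω * (starRingEnd ℂ) (F (x + Y p.2) ω))
      fun x => (hF _).mul (Complex.continuous_conj.measurable.comp (hF _))

variable (θ : Measure (Fin r → AddDual K)) [IsProbabilityMeasure θ]

lemma int_avg2 {N : ℕ} (hN : 0 < N) (X : List (Fin N → K)) (v : K → Fin r → K) (z : K) :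
    Integrable (fun ξ => avg2 X (fun x => chr (v x) ξ) z) θ :=
  Integrable.of_bound (meas_avg2 X _ (fun _ => measurable_chr _) z).aestronglyMeasurable 1
    (Eventually.of_forall fun ξ => norm_avg2 hN X _ (fun x => (norm_chr _ _).le) z)

lemma avg2_bound {N : ℕ} (hN : 0 < N) (X : List (Fin N → K)) (v : K → Fin r → K) (z : K)
    (h : ∀ c ∈ Strict X, phi θ (mdiff c v z) = 0) :
    ‖∫ ξ, avg2 X (fun x => chr (v x) ξ) z ∂θ‖ ≤ X.length / N := by
  have hN' : (0 : ℝ) < N := by exact_mod_cast hN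
  induction X generalizing v with
  | nil => 
    have := h [] rfl
    simp only [phi, mdiff] at this
    simp [avg2, this]
  | cons Y X ih =>
    simp only [avg2, ← chr_sub]
    rw [integral_finsetSum _ (fun p _ => (int_avg2 θ hN X (fun x => v (x + Y p.1) - v (x + Y p.2))
      z).const_mul _)]
    simp only [integral_const_mul]
    refine (norm_sum_le _ _).trans ?_
    calc _ ≤ ∑ p : Fin N × Fin N, ((N : ℝ)⁻¹ * (N : ℝ)⁻¹) *
          (X.length / N + if p.1 = p.2 then 1 else 0) := by
          gcongr with p
          rw [norm_mul, norm_mul, norm_inv, Complex.norm_natCast]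
          gcongr
          split_ifs with hp
          · refine le_trans ?_ (le_add_of_nonneg_left (by positivity))
            refine (norm_integral_le_of_norm_le_const (C := 1) (Eventually.of_forall fun ξ =>
              norm_avg2 hN X _ (fun x => (norm_chr _ _).le) z)).trans ?_
            simp
          · rw [add_zero]
            exact ih (fun x => v (x + Y p.1) - v (x + Y p.2))
              fun c hc => h _ ⟨p.1, p.2, hp, c, hc, rfl⟩
      _ = _ := by
          rw [Fintype.sum_prod_type]
          simp [mul_add, Finset.sum_add_distrib]
          field_simp

lemma avg_const {N : ℕ} (hN : 0 < N) (X : List (Fin N → K)) (v : K → Fin r → K) (z : K) (C : ℂ)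
    (hz : SumNZ X z) (h : ∀ x, x ≠ 0 → phi θ (v x) = C) :
    ∫ ξ, avg X (fun x => chr (v x) ξ) z ∂θ = C := by
  have hN' : (N : ℂ) ≠ 0 := by exact_mod_cast hN.ne'
  induction X generalizing z with
  | nil => exact h z hz
  | cons Y X ih =>
    simp only [avg]
    rw [integral_finsetSum _ (fun j _ => Integrable.const_mul (Integrable.of_bound
      (meas_avg X _ (fun _ => measurable_chr _) _).aestronglyMeasurable 1
      (Eventually.of_forall fun ξ => norm_avg hN X _ (fun x => (norm_chr _ _).le) _)) _)]
    simp only [integral_const_mul]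
    rw [Finset.sum_congr rfl (fun j _ => by rw [ih _ (hz j)])]
    simp; field_simp

lemma core_bound {N : ℕ} (hN : 0 < N) (X : List (Fin N → K)) (hX : X ≠ []) (v : K → Fin r → K)
    (z : K) (C : ℂ) (hz : SumNZ X z) (hC : ∀ x, x ≠ 0 → phi θ (v x) = C)
    (h : ∀ c ∈ Strict X, phi θ (mdiff c v z) = 0) : ‖C‖ ^ (2 ^ X.length) ≤ X.length / N := by
  obtain ⟨Y, X', rfl⟩ := List.exists_cons_of_ne_nil hX
  set X := Y :: X' with hXdef
  have hb : ∀ ξ, ‖avg X (fun x => chr (v x) ξ) z‖ ≤ 1 := fun ξ =>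
    norm_avg hN X _ (fun x => (norm_chr _ _).le) _
  have hm := meas_avg X (fun x => (chr (v x) : (Fin r → AddDual K) → ℂ))
    (fun _ => measurable_chr _) z
  have hi2 := int_avg2 θ hN X v z
  have hip : ∀ n : ℕ, Integrable (fun ξ => ‖avg X (fun x => chr (v x) ξ) z‖ ^ n) θ := fun n =>
    Integrable.of_bound (hm.norm.pow_const n).aestronglyMeasurable 1
      (Eventually.of_forall fun ξ => by
        rw [norm_pow, norm_norm]; exact pow_le_one₀ (norm_nonneg _) (hb ξ))
  calc ‖C‖ ^ (2 ^ X.length) = ‖∫ ξ, avg X (fun x => chr (v x) ξ) z ∂θ‖ ^ (2 ^ X.length) := by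
        rw [avg_const θ hN X v z C hz hC]
    _ ≤ (∫ ξ, ‖avg X (fun x => chr (v x) ξ) z‖ ∂θ) ^ (2 ^ X.length) := by
        gcongr; exact norm_integral_le_integral_norm _
    _ ≤ ∫ ξ, ‖avg X (fun x => chr (v x) ξ) z‖ ^ (2 ^ X.length) ∂θ := by
        have h1 := hip 1
        simp only [pow_one] at h1
        exact ConvexOn.map_integral_le (convexOn_pow (2 ^ X.length))
          (continuous_pow _).continuousOn isClosed_Ici
          (Eventually.of_forall fun ξ => norm_nonneg _) h1 (hip _)
    _ ≤ ∫ ξ, (avg2 X (fun x => chr (v x) ξ) z).re ∂θ :=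
        integral_mono (hip _) hi2.re fun ξ => box_ineq hN Y X' _ z
    _ = (∫ ξ, avg2 X (fun x => chr (v x) ξ) z ∂θ).re := integral_re hi2
    _ ≤ ‖∫ ξ, avg2 X (fun x => chr (v x) ξ) z ∂θ‖ := Complex.re_le_norm _
    _ ≤ _ := avg2_bound θ hN X v z h

lemma core (d : ℕ) (hd : 0 < d) (v : K → Fin r → K) (C : ℂ)
    (hC : ∀ x, x ≠ 0 → phi θ (v x) = C)
    (h : ∀ N : ℕ, ∃ X : List (Fin N → K), X.length = d ∧ ∃ z, SumNZ X z ∧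
      ∀ c ∈ Strict X, phi θ (mdiff c v z) = 0) : C = 0 := by
  by_contra hne
  have hpos : 0 < ‖C‖ ^ (2 ^ d) := by positivity
  obtain ⟨N, hN⟩ := exists_nat_gt ((d : ℝ) / ‖C‖ ^ (2 ^ d))
  have hN0 : (0 : ℝ) < N := lt_of_le_of_lt (by positivity) hN
  obtain ⟨X, hX, z, hz, hc⟩ := h N
  have := core_bound θ (by exact_mod_cast hN0) X (by rintro rfl; simp at hX; omega) v z C hz hC hc
  rw [hX] at this
  rw [div_lt_iff₀ hpos] at hN
  rw [le_div_iff₀ hN0] at this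
  linarith

end meas
end CR

namespace CR

section steps
variable {K : Type*} [Field K] [TopologicalSpace K] [DiscreteTopology K] {r : ℕ}
  [MeasurableSpace (AddDual K)] [BorelSpace (AddDual K)]
  (θ : Measure (Fin r → AddDual K)) [IsProbabilityMeasure θ]

lemma mdiff_coord (w : Fin r → K) (f : K → Fin r → K) (i : Fin r) (c : List (K × K)) (z : K) :
    (mdiff c (fun x i => w i * f x i) z) i = w i * mdiff c (fun x => f x i) z := by
  have h1 := mdiff_hom (Pi.evalAddMonoidHom (fun _ : Fin r => K) i) c
    (fun x i => w i * f x i) z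
  have h2 := mdiff_hom (AddMonoidHom.mulLeft (w i)) c (fun x => f x i) z
  exact h1.symm.trans h2

lemma pos_step [Infinite K] (n : Fin r → ℤ) (hninj : Function.Injective n)
    (hchar : ∀ i, ¬ ((ringChar K : ℤ) ∣ n i))
    (hinv : ∀ (w : Fin r → K) (x : K), x ≠ 0 → phi θ (fun i => w i * x ^ (n i)) = phi θ w)
    (hsing : ∀ (w : Fin r → K) (i₀ : Fin r), w i₀ ≠ 0 → (∀ i, i ≠ i₀ → w i = 0) → phi θ w = 0)
    (w : Fin r → K) (hw : w ≠ 0) (hp : ∀ i, w i ≠ 0 → 0 < n i) : phi θ w = 0 := by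
  classical
  obtain ⟨i1, hi1⟩ := Function.ne_iff.1 hw
  obtain ⟨i₀, hi₀, hmax⟩ := (Finset.univ.filter fun i => w i ≠ 0).exists_max_image n
    ⟨i1, by simpa using hi1⟩
  simp only [Finset.mem_filter, Finset.mem_univ, true_and] at hi₀ hmax
  obtain ⟨q, hq⟩ := ExpChar.exists K
  have hn0 := hp i₀ hi₀
  have hnc : (((n i₀).toNat : ℕ) : K) ≠ 0 := by
    intro h
    rw [ringChar.spec] at h
    apply hchar i₀
    rw [← Int.toNat_of_nonneg hn0.le]
    exact_mod_cast h
  obtain ⟨k, hk, M0, hM0, hcard, hinj, hc, hlow⟩ := exists_k (K := K) q (n i₀).toNat (by omega) hnc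
  refine core θ M0.card hcard (fun x i => w i * (x ^ k) ^ (n i)) _
    (fun x hx => hinv w (x ^ k) (pow_ne_zero _ hx)) fun N => ?_
  obtain ⟨X, hX, hXc⟩ := pos_top (K := K) q M0 hinj hc N M0.card
  obtain ⟨z, hz⟩ := (sumNZ_cofinite X).infinite_compl.nonempty
  refine ⟨X, hX, z, by simpa using hz, fun c hcX => ?_⟩
  refine hsing _ i₀ ?_ ?_
  · rw [mdiff_coord w (fun x i => (x ^ k) ^ (n i))]
    refine mul_ne_zero hi₀ ?_
    have : (fun x : K => (x ^ k) ^ (n i₀)) = fM q M0 := by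
      funext x
      rw [fM_eq, hM0, pow_mul]
      conv_lhs => rw [← Int.toNat_of_nonneg hn0.le, zpow_natCast]
    rw [this]
    exact hXc M0 le_rfl rfl c hcX z
  · intro i hi
    rw [mdiff_coord w (fun x i => (x ^ k) ^ (n i))]
    by_cases hwi : w i = 0
    · rw [hwi, zero_mul]
    have hlt : n i < n i₀ := lt_of_le_of_ne (hmax i hwi) fun h => hi (hninj h)
    have hni := hp i hwi
    obtain ⟨M, hM, hMc⟩ := hlow (n i).toNat (by omega)
    have : (fun x : K => (x ^ k) ^ (n i)) = fM q M := by
      funext x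
      rw [fM_eq, hM, pow_mul]
      conv_lhs => rw [← Int.toNat_of_nonneg hni.le, zpow_natCast]
    rw [this, kill q c M (by rw [strict_length hcX, hX]; exact hMc), mul_zero]

lemma all_step [Infinite K] (n : Fin r → ℤ) (hninj : Function.Injective n)
    (hn0 : ∀ i, n i ≠ 0)
    (hchar : ∀ i, ¬ ((ringChar K : ℤ) ∣ n i))
    (hinv : ∀ (w : Fin r → K) (x : K), x ≠ 0 → phi θ (fun i => w i * x ^ (n i)) = phi θ w)
    (hsing : ∀ (w : Fin r → K) (i₀ : Fin r), w i₀ ≠ 0 → (∀ i, i ≠ i₀ → w i = 0) → phi θ w = 0)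
    (w : Fin r → K) (hw : w ≠ 0) : phi θ w = 0 := by
  classical
  by_cases hp : ∀ i, w i ≠ 0 → 0 < n i
  · exact pos_step θ n hninj hchar hinv hsing w hw hp
  push Not at hp
  obtain ⟨i₀, hi₀, hni₀⟩ := hp
  obtain ⟨q, hq⟩ := ExpChar.exists K
  set d : ℕ := ∑ i, (n i).natAbs + 1 with hd
  refine core θ d (by omega) (fun x i => w i * x ^ (n i)) _ (fun x hx => hinv w x hx) fun N => ?_
  obtain ⟨X, hX, hXc⟩ := neg_top (K := K) (n i₀).natAbs N d
  have hfin : ({z : K | ¬ SumNZ X z} ∪ ⋃ c ∈ Strict X,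
      {z | mdiff c (fun x : K => (x ^ (n i₀).natAbs)⁻¹) z = 0}).Finite := by
    refine (sumNZ_cofinite X).union ((strict_finite X).biUnion fun c hc => ?_)
    obtain ⟨u, hu, hz⟩ := hXc c hc
    simp only [hz]
    exact Lc_zeros _ (Int.natAbs_pos.2 (hn0 i₀)) u hu
  obtain ⟨z, hz⟩ := hfin.infinite_compl.nonempty
  simp only [Set.mem_compl_iff, Set.mem_union, Set.mem_ofPred_eq, Set.mem_iUnion, not_or, not_not,
    not_exists] at hz
  refine ⟨X, hX, z, hz.1, fun c hcX => ?_⟩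
  refine pos_step θ (fun i => - n i) (fun a b h => hninj (neg_injective h))
    (fun i h => hchar i ((dvd_neg).1 h)) ?_ hsing _ ?_ ?_
  · intro w x hx
    rw [← hinv w x⁻¹ (inv_ne_zero hx)]
    simp only [inv_zpow', zpow_neg]
  · intro h
    have h2 := congrFun h i₀
    rw [mdiff_coord w (fun x i => x ^ (n i))] at h2
    refine (mul_ne_zero hi₀ ?_) h2
    have h3 : (fun x : K => x ^ (n i₀)) = fun x => (x ^ (n i₀).natAbs)⁻¹ := by
      funext x
      rw [← zpow_natCast, ← zpow_neg]
      congr 1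
      omega
    rw [h3]
    exact hz.2 c hcX
  · intro i hi
    rw [mdiff_coord w (fun x i => x ^ (n i))] at hi
    by_contra hni
    apply hi
    have h3 : (fun x : K => x ^ (n i)) = fM q (Multiset.replicate (n i).natAbs 0) := by
      funext x
      rw [fM_eq]
      simp only [Multiset.map_replicate, pow_zero, Multiset.sum_replicate, smul_eq_mul, mul_one]
      rw [← zpow_natCast]
      congr 1
      omega
    rw [h3, kill, mul_zero]
    rw [strict_length hcX, hX, Multiset.card_replicate, hd]
    have := Finset.single_le_sum (f := fun i => (n i).natAbs) (fun _ _ => Nat.zero_le _)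
      (Finset.mem_univ i)
    have this' : (n i).natAbs ≤ ∑ i, (n i).natAbs := this
    omega

end steps

section haar
variable {K : Type*} [Field K] [TopologicalSpace K] [DiscreteTopology K] {r : ℕ}

lemma exists_char (b : K) (hb : b ≠ 0) : ∃ ξ : AddDual K, ξ (Multiplicative.ofAdd b) ≠ 1 := by
  obtain ⟨c, hc⟩ := CharacterModule.exists_character_apply_ne_zero_of_ne_zero (A := K) hb
  let ι : AddCircle (1 : ℚ) →+ AddCircle (1 : ℝ) :=
    QuotientAddGroup.map _ _ (Rat.castHom ℝ : ℚ →+* ℝ).toAddMonoidHom (by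
      intro x hx
      obtain ⟨k, rfl⟩ := AddSubgroup.mem_zmultiples_iff.1 hx
      exact AddSubgroup.mem_zmultiples_iff.2 ⟨k, by simp⟩)
  have hι : ∀ y, ι y = 0 → y = 0 := by
    intro y hy
    induction y using QuotientAddGroup.induction_on with
    | H y =>
      have h1 : (((y : ℝ) : ℝ) : AddCircle (1 : ℝ)) = 0 := hy
      rw [AddCircle.coe_eq_zero_iff] at h1
      obtain ⟨k, hk⟩ := h1
      refine (AddCircle.coe_eq_zero_iff (1 : ℚ)).2 ⟨k, ?_⟩
      simp only [zsmul_eq_mul, mul_one] at hk ⊢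
      exact_mod_cast hk
  let f : Multiplicative K →* Circle :=
    { toFun := fun x => AddCircle.toCircle (ι (c x.toAdd))
      map_one' := by simp
      map_mul' := fun x y => by simp [AddCircle.toCircle_add] }
  let ξ : AddDual K := (⟨f, continuous_of_discreteTopology⟩ : Multiplicative K →ₜ* Circle)
  refine ⟨ξ, fun h => hc (hι _ ?_)⟩
  apply AddCircle.injective_toCircle (one_ne_zero : (1 : ℝ) ≠ 0)
  rw [AddCircle.toCircle_zero]
  exact h

variable [MeasurableSpace (AddDual K)] [BorelSpace (AddDual K)]

lemma haar_zero (mK : Measure (AddDual K)) [mK.IsHaarMeasure] (b : K) (hb : b ≠ 0) :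
    ∫ ξ : AddDual K, ((ξ (Multiplicative.ofAdd b) : Circle) : ℂ) ∂mK = 0 := by
  obtain ⟨η, hη⟩ := exists_char b hb
  have h := integral_mul_left_eq_self (μ := mK)
    (fun ξ : AddDual K => ((ξ (Multiplicative.ofAdd b) : Circle) : ℂ)) η
  have h2 : ∀ ξ : AddDual K, (((η * ξ) (Multiplicative.ofAdd b) : Circle) : ℂ) =
      (η (Multiplicative.ofAdd b) : ℂ) * ((ξ (Multiplicative.ofAdd b) : Circle) : ℂ) :=
    fun ξ => rfl
  simp only [h2] at h
  rw [integral_const_mul] at h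
  by_contra hne
  apply hη
  have := mul_right_cancel₀ hne (h.trans (one_mul _).symm)
  exact Circle.ext (this.trans Circle.coe_one.symm)

lemma sing_zero (mK : Measure (AddDual K)) [mK.IsHaarMeasure] 
    (θ : Measure (Fin r → AddDual K)) (hmarg : ∀ i, θ.map (fun ξ => ξ i) = mK)
    (w : Fin r → K) (i₀ : Fin r) (h0 : w i₀ ≠ 0) (hi : ∀ i, i ≠ i₀ → w i = 0) : phi θ w = 0 := by
  have h1 := haar_zero mK (w i₀) h0
  rw [← hmarg i₀, integral_map (measurable_pi_apply i₀).aemeasurable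
    (continuous_ev (w i₀)).measurable.aestronglyMeasurable] at h1
  rw [← h1, phi]
  congr 1
  funext ξ
  rw [chr, Finset.prod_eq_single i₀]
  · intro i _ hne
    simp [hi i hne]
  · simp

lemma continuous_dualSmul (a : K) : Continuous (dualSmul a : AddDual K → AddDual K) := by
  exact ContinuousMonoidHom.continuous_comp_left (C := Circle) _

lemma inv_phi (θ : Measure (Fin r → AddDual K)) [IsProbabilityMeasure θ] (n : Fin r → ℤ)
    (hinv : ∀ a : Kˣ,
      θ.map (fun (ξ : Fin r → AddDual K) i => dualSmul ((a ^ n i : Kˣ) : K) (ξ i)) = θ)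
    (w : Fin r → K) (x : K) (hx : x ≠ 0) : phi θ (fun i => w i * x ^ (n i)) = phi θ w := by
  have h := hinv (Units.mk0 x hx)
  have hm : Measurable (fun (ξ : Fin r → AddDual K) i =>
      dualSmul (((Units.mk0 x hx) ^ n i : Kˣ) : K) (ξ i)) :=
    measurable_pi_lambda _ fun i => (continuous_dualSmul _).measurable.comp (measurable_pi_apply i)
  conv_rhs => rw [← h, phi, integral_map hm.aemeasurable (measurable_chr w).aestronglyMeasurable]
  rw [phi]
  congr 1
  funext ξ
  refine Finset.prod_congr rfl fun i _ => ?_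
  change _ = ((ξ i (Multiplicative.ofAdd ((((Units.mk0 x hx) ^ n i : Kˣ) : K) * w i)) : Circle) : ℂ)
  rw [mul_comm]
  simp

end haar

end CR

namespace CR

section uniq
variable {K : Type*} [Field K] [TopologicalSpace K] [DiscreteTopology K] {r : ℕ}

open scoped BoundedContinuousFunction

/-- bounded continuous version of `chr` -/
def bchr (w : Fin r → K) : (Fin r → AddDual K) →ᵇ ℂ :=
  BoundedContinuousFunction.ofNormedAddCommGroup (chr w) (continuous_chr w) 1
    fun ξ => (norm_chr w ξ).le

lemma bchr_apply (w : Fin r → K) (ξ : Fin r → AddDual K) : bchr w ξ = chr w ξ := rfl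

lemma chr_neg (w : Fin r → K) (ξ : Fin r → AddDual K) :
    chr (-w) ξ = (starRingEnd ℂ) (chr w ξ) := by
  have := chr_sub 0 w ξ
  rwa [chr_zero, one_mul, zero_sub] at this

lemma chr_add (u v : Fin r → K) (ξ : Fin r → AddDual K) :
    chr (u + v) ξ = chr u ξ * chr v ξ := by
  have := chr_sub u (-v) ξ
  rwa [chr_neg, sub_neg_eq_add, starRingEnd_self_apply] at this

/-- trigonometric polynomials -/
def trig (K : Type*) [Field K] [TopologicalSpace K] [DiscreteTopology K] (r : ℕ) :
    StarSubalgebra ℂ ((Fin r → AddDual K) →ᵇ ℂ) where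
  toSubalgebra := (Submodule.span ℂ (Set.range (bchr (K := K) (r := r)))).toSubalgebra
    (Submodule.subset_span ⟨0, by ext ξ; simp [bchr_apply, chr_zero]⟩)
    (fun f g hf hg => by
      have := Submodule.mul_mem_mul hf hg
      rw [Submodule.span_mul_span] at this
      refine Submodule.span_mono ?_ this
      rintro _ ⟨_, ⟨u, rfl⟩, _, ⟨v, rfl⟩, rfl⟩
      exact ⟨u + v, by ext ξ; simp [bchr_apply, chr_add]⟩)
  star_mem' := by
    intro f hf
    change f ∈ Submodule.span ℂ (Set.range (bchr (K := K) (r := r))) at hf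
    change star f ∈ Submodule.span ℂ (Set.range (bchr (K := K) (r := r)))
    induction hf using Submodule.span_induction with
    | mem x h =>
      obtain ⟨w, rfl⟩ := h
      exact Submodule.subset_span ⟨-w, by ext ξ; simp [bchr_apply, chr_neg]⟩
    | zero => rw [star_zero]; exact Submodule.zero_mem _
    | add x y _ _ hx hy => rw [star_add]; exact Submodule.add_mem _ hx hy
    | smul a x _ hx => rw [star_smul]; exact Submodule.smul_mem _ _ hx

lemma polish [Countable K] : PolishSpace (AddDual K) := by
  have : Countable (Multiplicative K) := inferInstanceAs (Countable K)
  have h1 : SecondCountableTopology (AddDual K) :=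
    (ContinuousMonoidHom.isInducing_toContinuousMap
      (Multiplicative K) Circle).secondCountableTopology
  have h2 : CompactSpace (AddDual K) := inferInstance
  have h3 : T2Space (AddDual K) := inferInstance
  letI := TopologicalSpace.metrizableSpaceMetric (AddDual K)
  infer_instance

variable [MeasurableSpace (AddDual K)] [BorelSpace (AddDual K)]

lemma fourier_ext [Countable K] (θ θ' : Measure (Fin r → AddDual K)) [IsFiniteMeasure θ]
    [IsFiniteMeasure θ'] (h : ∀ w, phi θ w = phi θ' w) : θ = θ' := by
  have := polish (K := K)
  refine ext_of_forall_mem_subalgebra_integral_eq_of_polish (𝕜 := ℂ) (A := trig K r) ?_ ?_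
  · intro ξ η hne
    obtain ⟨i, hi⟩ := Function.ne_iff.1 hne
    obtain ⟨b, hb⟩ := DFunLike.ne_iff.1 hi
    refine ⟨_, ⟨_, ⟨bchr (Pi.single i b.toAdd), Submodule.subset_span ⟨_, rfl⟩, rfl⟩, rfl⟩, ?_⟩
    have key : ∀ ζ : Fin r → AddDual K, chr (Pi.single i b.toAdd) ζ = (ζ i b : ℂ) := by
      intro ζ
      rw [chr, Finset.prod_eq_single i]
      · simp
      · intro j _ hj
        simp [Pi.single_eq_of_ne hj]
      · simp
    change chr _ ξ ≠ chr _ η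
    rw [key, key]
    exact fun h => hb (Circle.ext h)
  · intro g hg
    change g ∈ Submodule.span ℂ (Set.range (bchr (K := K) (r := r))) at hg
    induction hg using Submodule.span_induction with
    | mem x h' =>
      obtain ⟨w, rfl⟩ := h'
      exact h w
    | zero => simp
    | add x y _ _ hx hy =>
      simp only [BoundedContinuousFunction.coe_add, Pi.add_apply]
      rw [integral_add (x.integrable _) (y.integrable _),
        integral_add (x.integrable _) (y.integrable _), hx, hy]
    | smul a x _ hx =>
      simp only [BoundedContinuousFunction.coe_smul]
      rw [integral_smul, integral_smul, hx]

lemma phi_pi (mK : Measure (AddDual K)) [mK.IsHaarMeasure] [IsProbabilityMeasure mK]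
    (w : Fin r → K) (hw : w ≠ 0) : phi (Measure.pi fun _ : Fin r => mK) w = 0 := by
  obtain ⟨i, hi⟩ := Function.ne_iff.1 hw
  have := integral_fintype_prod_eq_prod (ι := Fin r) (𝕜 := ℂ) (μ := fun _ => mK)
    (fun i (ξ : AddDual K) => ((ξ (Multiplicative.ofAdd (w i)) : Circle) : ℂ))
  rw [phi]
  refine Eq.trans this (Finset.prod_eq_zero (Finset.mem_univ i) (haar_zero mK _ hi))

lemma phi_zero (θ : Measure (Fin r → AddDual K)) [IsProbabilityMeasure θ] : phi θ 0 = 1 := by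
  simp [phi, chr_zero]

end uniq

end CR
/-- The moment-curve subgroup `Γ = {(a^{n₁},…,a^{n_r}) : a ∈ K^*}` of `(K^*)^r` is
coupling-resistant: the only `Γ`-invariant probability measure on `K̂^r` with Haar
marginals is the product of Haar measures. -/
theorem statement15
    {K : Type*} [Field K] [Countable K] [Infinite K]
    [TopologicalSpace K] [DiscreteTopology K]
    [MeasurableSpace (AddDual K)] [BorelSpace (AddDual K)]
    (mK : Measure (AddDual K)) [mK.IsHaarMeasure] [IsProbabilityMeasure mK]
    (r : ℕ) (n : Fin r → ℤ) (hninj : Function.Injective n) (hn0 : ∀ i, n i ≠ 0)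
    (hchar : ∀ i, ¬ ((ringChar K : ℤ) ∣ n i))
    (θ : Measure (Fin r → AddDual K)) [IsProbabilityMeasure θ]
    (hmarg : ∀ i, θ.map (fun ξ => ξ i) = mK)
    (hinv : ∀ a : Kˣ,
      θ.map (fun (ξ : Fin r → AddDual K) i => dualSmul ((a ^ n i : Kˣ) : K) (ξ i)) = θ) :
    θ = Measure.pi (fun _ => mK) := by
  refine CR.fourier_ext θ _ fun w => ?_
  by_cases hw : w = 0
  · rw [hw, CR.phi_zero, CR.phi_zero]
  · rw [CR.phi_pi mK w hw]
    exact CR.all_step θ n hninj hn0 hchar (fun w x hx => CR.inv_phi θ n hinv w x hx)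
      (fun w i₀ h0 hi => CR.sing_zero mK θ hmarg w i₀ h0 hi) w hw

end
end

section
/- Let K be a countably infinite field. Then every finite-index subgroup Δ ≤ K* is measure-rigid: the only Δ-invariant and Δ-ergodic Borel probability measures on K̂ (for the dual action) are the point mass δ₁ at the trivial character and the Haar measure m_{K̂}. -/
open MeasureTheory Filter

noncomputable section

set_option linter.unusedSectionVars false

section Aux
variable {K : Type*} [Field K] [TopologicalSpace K] [DiscreteTopology K]

/-- Evaluation of a character at `b`, as a complex number. -/
def evc (b : K) (ξ : AddDual K) : ℂ := ((ξ (Multiplicative.ofAdd b) : Circle) : ℂ)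

theorem dualSmul_apply (a b : K) (ξ : AddDual K) :
    dualSmul a ξ (Multiplicative.ofAdd b) = ξ (Multiplicative.ofAdd (a * b)) := rfl

theorem evc_dualSmul (a b : K) (ξ : AddDual K) : evc b (dualSmul a ξ) = evc (a * b) ξ := rfl

theorem dual_ext {ξ η : AddDual K}
    (h : ∀ b : K, ξ (Multiplicative.ofAdd b) = η (Multiplicative.ofAdd b)) : ξ = η :=
  PontryaginDual.ext h

theorem evc_zero (ξ : AddDual K) : evc 0 ξ = 1 := by
  simp [evc]

theorem evc_add (b c : K) (ξ : AddDual K) : evc (b + c) ξ = evc b ξ * evc c ξ := by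
  simp [evc, ofAdd_add]

theorem evc_neg (b : K) (ξ : AddDual K) : evc (-b) ξ = star (evc b ξ) := by
  have h : ξ (Multiplicative.ofAdd (-b)) = (ξ (Multiplicative.ofAdd b))⁻¹ := by
    rw [ofAdd_neg, map_inv]
  rw [evc, h]
  exact Circle.coe_inv_eq_conj _

theorem evc_mul (b : K) (ξ η : AddDual K) : evc b (ξ * η) = evc b ξ * evc b η := by
  have : (ξ * η) (Multiplicative.ofAdd b) = ξ (Multiplicative.ofAdd b) * η (Multiplicative.ofAdd b) := rfl
  simp [evc, this]

theorem evc_one (b : K) : evc b (1 : AddDual K) = 1 := by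
  simp [evc]

theorem evc_div (b : K) (ξ η : AddDual K) : evc b (ξ / η) = evc b ξ * star (evc b η) := by
  have : (ξ / η) (Multiplicative.ofAdd b) = ξ (Multiplicative.ofAdd b) / η (Multiplicative.ofAdd b) := rfl
  rw [evc, this, div_eq_mul_inv, Circle.coe_mul]
  congr 1
  exact Circle.coe_inv_eq_conj _

theorem norm_evc (b : K) (ξ : AddDual K) : ‖evc b ξ‖ = 1 :=
  Circle.norm_coe _

theorem continuous_eval (b : K) :
    Continuous (fun ξ : AddDual K => ξ (Multiplicative.ofAdd b)) := by
  have h1 : Continuous (fun ξ : AddDual K =>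
      ContinuousMonoidHom.toContinuousMap (ξ : Multiplicative K →ₜ* Circle)) :=
    (ContinuousMonoidHom.isInducing_toContinuousMap (Multiplicative K) Circle).continuous
  exact (continuous_eval_const (F := C(Multiplicative K, Circle)) (Multiplicative.ofAdd b)).comp h1

theorem continuous_evc (b : K) : Continuous (evc b : AddDual K → ℂ) :=
  continuous_subtype_val.comp (continuous_eval b)

theorem continuous_dualSmul (a : K) : Continuous (dualSmul a : AddDual K → AddDual K) :=
  (PontryaginDual.map (⟨AddMonoidHom.toMultiplicative (AddMonoidHom.mulLeft a),
    continuous_of_discreteTopology⟩ : Multiplicative K →ₜ* Multiplicative K)).continuous_toFun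

theorem dualSmul_injective {a : K} (ha : a ≠ 0) :
    Function.Injective (dualSmul a : AddDual K → AddDual K) := by
  intro ξ η h
  refine dual_ext fun b => ?_
  have := congrArg (fun ζ : AddDual K => ζ (Multiplicative.ofAdd (a⁻¹ * b))) h
  simpa [dualSmul_apply, ha] using this

theorem dualSmul_one' (a : K) : dualSmul a (1 : AddDual K) = 1 :=
  dual_ext fun b => by simp [dualSmul_apply]

theorem dualSmul_free {x : AddDual K} (hx : x ≠ 1) {a b : K} (h : dualSmul a x = dualSmul b x) :
    a = b := by
  by_contra hab
  have hab' : a - b ≠ 0 := sub_ne_zero.mpr hab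
  apply hx
  refine dual_ext fun c => ?_
  have h2 := congrArg (fun ζ : AddDual K => ζ (Multiplicative.ofAdd ((a - b)⁻¹ * c))) h
  simp only [dualSmul_apply] at h2
  have h3 : c = a * ((a - b)⁻¹ * c) - b * ((a - b)⁻¹ * c) := by
    field_simp
  rw [h3, ofAdd_sub, map_div, h2, div_self']
  rfl

variable [Countable K]

theorem secondCountable_dual : SecondCountableTopology (AddDual K) := by
  have : Countable (Multiplicative K) := inferInstanceAs (Countable K)
  have : SecondCountableTopology (Multiplicative K) := inferInstance
  have : SecondCountableTopology C(Multiplicative K, Circle) := inferInstance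
  exact (ContinuousMonoidHom.isInducing_toContinuousMap
    (Multiplicative K) Circle).secondCountableTopology

theorem polish_dual : PolishSpace (AddDual K) := by
  have := secondCountable_dual (K := K)
  let := TopologicalSpace.metrizableSpaceMetric (AddDual K)
  infer_instance

variable [MeasurableSpace (AddDual K)] [BorelSpace (AddDual K)]

/-- evaluation as bounded continuous function -/
def evb (b : K) : BoundedContinuousFunction (AddDual K) ℂ :=
  BoundedContinuousFunction.mkOfCompact ⟨evc b, continuous_evc b⟩

/-- The star subalgebra of trigonometric polynomials. -/
def trigAlg (K : Type*) [Field K] [TopologicalSpace K] [DiscreteTopology K] :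
    StarSubalgebra ℂ (BoundedContinuousFunction (AddDual K) ℂ) where
  carrier := {f | f ∈ Submodule.span ℂ (Set.range (evb (K := K)))}
  mul_mem' := by
    intro f g hf hg
    have h := Submodule.mul_mem_mul (show f ∈ Submodule.span ℂ (Set.range (evb (K := K))) from hf)
      (show g ∈ Submodule.span ℂ (Set.range (evb (K := K))) from hg)
    rw [Submodule.span_mul_span] at h
    refine Submodule.span_mono ?_ h
    rintro _ ⟨_, ⟨b, rfl⟩, _, ⟨c, rfl⟩, rfl⟩
    refine ⟨b + c, ?_⟩
    ext ξ
    exact evc_add b c ξ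
  add_mem' := fun hf hg => Submodule.add_mem (Submodule.span ℂ (Set.range (evb (K := K)))) hf hg
  algebraMap_mem' := by
    intro r
    have : algebraMap ℂ (BoundedContinuousFunction (AddDual K) ℂ) r = r • evb (0 : K) := by
      ext ξ
      have h : evb (0 : K) ξ = 1 := evc_zero ξ
      simp [h]
    rw [this]
    exact Submodule.smul_mem (Submodule.span ℂ (Set.range (evb (K := K)))) _
      (Submodule.subset_span ⟨0, rfl⟩)
  star_mem' := by
    intro f hf
    change star f ∈ Submodule.span ℂ (Set.range (evb (K := K)))
    induction hf using Submodule.span_induction with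
    | mem x h =>
      obtain ⟨b, rfl⟩ := h
      refine Submodule.subset_span ⟨-b, ?_⟩
      ext ξ
      exact evc_neg b ξ
    | zero => simp
    | add x y _ _ hx hy => rw [star_add]; exact Submodule.add_mem _ hx hy
    | smul a x _ hx => rw [star_smul]; exact Submodule.smul_mem _ _ hx

theorem integrable_evc (P : Measure (AddDual K)) [IsFiniteMeasure P] (b : K) :
    Integrable (evc b) P :=
  have := secondCountable_dual (K := K)
  Integrable.of_bound (continuous_evc b).aestronglyMeasurable 1
    (Filter.Eventually.of_forall fun ξ => (norm_evc b ξ).le)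

theorem measure_ext_of_evc {P P' : Measure (AddDual K)} [IsFiniteMeasure P] [IsFiniteMeasure P']
    (h : ∀ b : K, ∫ ξ, evc b ξ ∂P = ∫ ξ, evc b ξ ∂P') : P = P' := by
  have := polish_dual (K := K)
  refine ext_of_forall_mem_subalgebra_integral_eq_of_polish (𝕜 := ℂ) (A := trigAlg K) ?_ ?_
  · intro x y hxy
    have : ∃ b : K, evc b x ≠ evc b y := by
      by_contra! hc
      exact hxy (dual_ext fun b => Subtype.ext (hc b))
    obtain ⟨b, hb⟩ := this
    exact ⟨evc b, ⟨_, ⟨evb b, Submodule.subset_span (R := ℂ) (s := Set.range (evb (K := K))) ⟨b, rfl⟩, rfl⟩, rfl⟩, hb⟩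
  · intro g hg
    change g ∈ Submodule.span ℂ (Set.range (evb (K := K))) at hg
    induction hg using Submodule.span_induction with
    | mem x hx => obtain ⟨b, rfl⟩ := hx; exact h b
    | zero => simp
    | add x y _ _ hx hy =>
      simp only [BoundedContinuousFunction.coe_add, Pi.add_apply]
      rw [integral_add (x.integrable P) (y.integrable P),
        integral_add (x.integrable P') (y.integrable P'), hx, hy]
    | smul a x _ hx =>
      simp only [BoundedContinuousFunction.coe_smul]
      rw [integral_smul, integral_smul, hx]

theorem haar_evc (mK : Measure (AddDual K)) [mK.IsHaarMeasure]
    {x : AddDual K} (hx : x ≠ 1) {b : K} (hb : b ≠ 0) : ∫ ξ, evc b ξ ∂mK = 0 := by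
  obtain ⟨y, hy⟩ : ∃ y : AddDual K, evc b y ≠ 1 := by
    by_contra! hc
    apply hx
    refine dual_ext fun c => ?_
    have := hc (dualSmul (c * b⁻¹) x)
    rw [evc_dualSmul, mul_assoc, inv_mul_cancel₀ hb, mul_one] at this
    exact Subtype.ext this
  have h := integral_mul_left_eq_self (μ := mK) (fun ξ => evc b ξ) y
  simp only [evc_mul] at h
  rw [integral_const_mul] at h
  have h2 : (evc b y - 1) * ∫ ξ, evc b ξ ∂mK = 0 := by rw [sub_mul, h]; ring
  exact (mul_eq_zero.mp h2).resolve_left (sub_ne_zero.mpr hy)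

/-- An invariant probability measure giving no mass to the trivial character has no atoms. -/
theorem no_atoms [Infinite K] (Δ : Subgroup Kˣ) [Δ.FiniteIndex]
    (μ : Measure (AddDual K)) [IsProbabilityMeasure μ]
    (hinv : ∀ a ∈ Δ, μ.map (dualSmul ((a : Kˣ) : K)) = μ) (h1 : μ {1} = 0) (x : AddDual K) :
    μ {x} = 0 := by
  by_cases hx : x = 1
  · rw [hx, h1]
  have hinf : Infinite Δ := by
    have hU : Infinite Kˣ := by
      have : Infinite {a : K // a ≠ 0} := (Set.finite_singleton (0:K)).infinite_compl.to_subtype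
      exact unitsEquivNeZero.infinite_iff.mpr this
    by_contra hfin
    rw [not_infinite_iff_finite] at hfin
    have h := Δ.index_mul_card
    rw [Nat.card_eq_zero_of_infinite (α := Kˣ)] at h
    rcases mul_eq_zero.mp h with h | h
    · exact Subgroup.FiniteIndex.index_ne_zero h
    · exact (Nat.card_pos (α := Δ)).ne' h
  by_contra hne
  have hfin := Measure.finite_const_le_meas_of_disjoint_iUnion μ (ε := μ {x})
    (pos_iff_ne_zero.mpr hne)
    (As := fun a : Δ => {dualSmul ((a : Kˣ) : K) x}) (fun a => measurableSet_singleton _)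
    (by
      intro a b hab
      refine Set.disjoint_singleton.mpr fun h => hab ?_
      exact Subtype.ext (Units.ext (dualSmul_free hx h)))
    (measure_ne_top _ _)
  have : {i : Δ | μ {x} ≤ μ {dualSmul ((i : Kˣ) : K) x}} = Set.univ := by
    refine Set.eq_univ_of_forall fun a => ?_
    have e : μ {dualSmul ((a : Kˣ) : K) x} = μ {x} := by
      conv_lhs => rw [← hinv a a.2]
      rw [Measure.map_apply (continuous_dualSmul _).measurable (measurableSet_singleton _)]
      congr 1
      ext z
      simp only [Set.mem_preimage, Set.mem_singleton_iff]
      exact (dualSmul_injective (a : Kˣ).ne_zero).eq_iff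
    exact e.ge
  rw [this] at hfin
  exact Set.infinite_univ hfin

/-- The pushforward of `μ × μ` under `(x, y) ↦ g (x / y)`. -/
def diffMeas (μ : Measure (AddDual K)) (g : K) : Measure (AddDual K) :=
  (μ.prod μ).map (fun p => dualSmul g (p.1 / p.2))

theorem continuous_diff (g : K) :
    Continuous (fun p : AddDual K × AddDual K => dualSmul g (p.1 / p.2)) :=
  (continuous_dualSmul g).comp (continuous_fst.div' continuous_snd)

theorem measurable_diff (g : K) :
    Measurable (fun p : AddDual K × AddDual K => dualSmul g (p.1 / p.2)) := by
  have := secondCountable_dual (K := K)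
  exact (continuous_diff g).measurable

theorem diffMeas_evc (μ : Measure (AddDual K)) [IsProbabilityMeasure μ] (g b : K) :
    ∫ ξ, evc b ξ ∂(diffMeas μ g) = ((‖∫ ξ, evc (g * b) ξ ∂μ‖ ^ 2 : ℝ) : ℂ) := by
  have := secondCountable_dual (K := K)
  rw [diffMeas, integral_map (measurable_diff g).aemeasurable
    (continuous_evc b).aestronglyMeasurable]
  simp only [evc_dualSmul, evc_div]
  rw [integral_prod_mul (fun ξ => evc (g * b) ξ) (fun ξ => star (evc (g * b) ξ))]
  have : ∫ ξ, star (evc (g * b) ξ) ∂μ = star (∫ ξ, evc (g * b) ξ ∂μ) := integral_conj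
  rw [this]
  simpa using Complex.mul_conj' (∫ ξ, evc (g * b) ξ ∂μ)

theorem diffMeas_one (μ : Measure (AddDual K)) [IsProbabilityMeasure μ]
    (h : ∀ x, μ {x} = 0) {g : K} (hg : g ≠ 0) : diffMeas μ g {1} = 0 := by
  have := secondCountable_dual (K := K)
  rw [diffMeas, Measure.map_apply (measurable_diff g) (measurableSet_singleton _),
    Measure.prod_apply ((measurable_diff g) (measurableSet_singleton _))]
  have : ∀ x : AddDual K, Prod.mk x ⁻¹' ((fun p : AddDual K × AddDual K =>
      dualSmul g (p.1 / p.2)) ⁻¹' {1}) = {x} := by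
    intro x
    ext y
    simp only [Set.mem_preimage, Set.mem_singleton_iff]
    rw [← dualSmul_one' g, (dualSmul_injective hg).eq_iff, div_eq_one]
    exact eq_comm
  simp [this, h]

theorem evc_inv (μ : Measure (AddDual K)) {a : K}
    (h : μ.map (dualSmul a) = μ) (b : K) : ∫ ξ, evc (a * b) ξ ∂μ = ∫ ξ, evc b ξ ∂μ := by
  have := secondCountable_dual (K := K)
  conv_rhs => rw [← h, integral_map (continuous_dualSmul a).measurable.aemeasurable
    (continuous_evc b).aestronglyMeasurable]
  rfl

theorem coset_sum (Δ : Subgroup Kˣ) [Fintype (Kˣ ⧸ Δ)] (F : K → ℝ)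
    (hF : ∀ a ∈ Δ, ∀ b, F (((a : Kˣ) : K) * b) = F b) (u : Kˣ) :
    ∑ q : Kˣ ⧸ Δ, F ((q.out : K) * u) = ∑ q : Kˣ ⧸ Δ, F (q.out : K) := by
  have key : ∀ v w : Kˣ, (v : Kˣ ⧸ Δ) = w → F v = F w := by
    intro v w h
    have h' := hF _ (QuotientGroup.eq.mp h) (v : K)
    rw [← h']
    congr 1
    simp [mul_comm]
  rw [← Equiv.sum_comp (Equiv.mulRight (u : Kˣ ⧸ Δ)) (fun q => F (q.out : K))]
  refine Finset.sum_congr rfl fun q _ => ?_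
  rw [← Units.val_mul]
  apply key
  simp

end Aux

/-- Every finite-index subgroup `Δ ≤ K^*` of the multiplicative group of a countably
infinite field is measure-rigid: the only `Δ`-invariant and `Δ`-ergodic Borel probability
measures on `K̂` are the point mass at the trivial character and the Haar measure. -/
theorem statement17
    {K : Type*} [Field K] [Countable K] [Infinite K]
    [TopologicalSpace K] [DiscreteTopology K]
    [MeasurableSpace (AddDual K)] [BorelSpace (AddDual K)]
    (mK : Measure (AddDual K)) [mK.IsHaarMeasure] [IsProbabilityMeasure mK]
    (Δ : Subgroup Kˣ) [Δ.FiniteIndex]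
    (μ : Measure (AddDual K)) [IsProbabilityMeasure μ]
    (hinv : ∀ a ∈ Δ, μ.map (dualSmul ((a : Kˣ) : K)) = μ)
    (herg : ∀ s : Set (AddDual K), MeasurableSet s →
      (∀ a ∈ Δ, dualSmul ((a : Kˣ) : K) ⁻¹' s = s) → μ s = 0 ∨ μ s = 1) :
    μ = MeasureTheory.Measure.dirac 1 ∨ μ = mK := by
  have := secondCountable_dual (K := K)
  have hone : ∀ a ∈ Δ, dualSmul ((a : Kˣ) : K) ⁻¹' {(1 : AddDual K)} = {1} := by
    intro a _
    ext z
    simp only [Set.mem_preimage, Set.mem_singleton_iff]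
    rw [← dualSmul_one' (a : K), (dualSmul_injective a.ne_zero).eq_iff, dualSmul_one']
  rcases herg {1} (measurableSet_singleton _) hone with h1 | h1
  swap
  · left
    have hae : ∀ᵐ x ∂μ, x = 1 := by
      rw [← prob_compl_eq_zero_iff (measurableSet_singleton _)] at h1
      exact h1
    refine measure_ext_of_evc fun b => ?_
    rw [integral_dirac, integral_congr_ae (g := fun _ => evc b (1 : AddDual K))
      (hae.mono fun x hx => by rw [hx])]
    simp
  right
  have hat := no_atoms Δ μ hinv h1
  obtain ⟨x, hx⟩ : ∃ x : AddDual K, x ≠ 1 := by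
    by_contra! hc
    have : ({1} : Set (AddDual K)) = Set.univ := Set.eq_univ_of_forall hc
    rw [this, measure_univ] at h1
    exact one_ne_zero h1
  have : Fintype (Kˣ ⧸ Δ) := Fintype.ofFinite _
  let F : K → ℝ := fun b => ‖∫ ξ, evc b ξ ∂μ‖ ^ 2
  have hF0 : ∀ b, 0 ≤ F b := fun b => sq_nonneg _
  have hF1 : ∀ b, F b ≤ 1 := by
    intro b
    have : ‖∫ ξ, evc b ξ ∂μ‖ ≤ 1 := by
      simpa using norm_integral_le_of_norm_le_const (μ := μ)
        (Filter.Eventually.of_forall fun ξ => (norm_evc b ξ).le)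
    exact pow_le_one₀ (norm_nonneg _) this
  have hFinv : ∀ a ∈ Δ, ∀ b, F (((a : Kˣ) : K) * b) = F b := by
    intro a ha b
    simp only [F]
    rw [evc_inv μ (hinv a ha) b]
  let S : NNReal := ⟨∑ q : Kˣ ⧸ Δ, F (q.out : K), Finset.sum_nonneg fun q _ => hF0 _⟩
  let k : NNReal := (Fintype.card (Kˣ ⧸ Δ) : NNReal)
  have hSk : S ≤ k := by
    rw [← NNReal.coe_le_coe]
    change ∑ q : Kˣ ⧸ Δ, F (q.out : K) ≤ ((Fintype.card (Kˣ ⧸ Δ) : NNReal) : ℝ)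
    calc _ ≤ ∑ q : Kˣ ⧸ Δ, (1 : ℝ) := Finset.sum_le_sum fun q _ => hF1 _
      _ = _ := by simp
  have hpm : ∀ g : K, IsProbabilityMeasure (diffMeas μ g) := fun g =>
    Measure.isProbabilityMeasure_map (measurable_diff g).aemeasurable
  let ν : Measure (AddDual K) := ∑ q : Kˣ ⧸ Δ, diffMeas μ (q.out : K)
  have hν : ∀ b : K, ∫ ξ, evc b ξ ∂ν = ((∑ q : Kˣ ⧸ Δ, F ((q.out : K) * b) : ℝ) : ℂ) := by
    intro b
    simp only [ν]
    rw [integral_finsetSum_measure fun q _ => integrable_evc _ b]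
    simp only [diffMeas_evc]
    rw [Complex.ofReal_sum]
  have hνfin : IsFiniteMeasure ν := by
    refine ⟨?_⟩
    simp [ν, Measure.finsetSum_apply]
  have heq : ν + S • mK = S • Measure.dirac 1 + k • mK := by
    refine measure_ext_of_evc fun b => ?_
    rw [integral_add_measure (integrable_evc _ b) (integrable_evc _ b),
      integral_add_measure (integrable_evc _ b) (integrable_evc _ b),
      integral_smul_nnreal_measure, integral_smul_nnreal_measure, integral_smul_nnreal_measure,
      integral_dirac, hν, evc_one]
    by_cases hb : b = 0
    · subst hb
      have hF0' : F 0 = 1 := by simp [F, evc_zero]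
      simp only [mul_zero, hF0', evc_zero]
      simp [k, NNReal.smul_def, add_comm]
    · rw [haar_evc mK hx hb]
      have := coset_sum Δ F hFinv (Units.mk0 b hb)
      simp only [Units.val_mk0] at this
      rw [this]
      rw [smul_zero, add_zero, smul_zero, add_zero, NNReal.smul_def]
      change _ = ((S : ℝ)) • (1 : ℂ)
      rw [Complex.real_smul, mul_one]
      rfl
  have hS : S = 0 := by
    have h := congrArg (fun m : Measure (AddDual K) => m {1}) heq
    have hν1 : ν {1} = 0 := by
      simp only [ν, Measure.finsetSum_apply]
      exact Finset.sum_eq_zero fun q _ => diffMeas_one μ hat (Units.ne_zero _)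
    simp only [Measure.add_apply, hν1, Measure.smul_apply, Measure.dirac_apply_of_mem
      (Set.mem_singleton (1 : AddDual K)), ENNReal.smul_def, smul_eq_mul, zero_add, mul_one] at h
    have hfin : (k : ENNReal) * mK {1} ≠ ⊤ := ENNReal.mul_ne_top (by simp) (measure_ne_top _ _)
    have hle : (S : ENNReal) + k * mK {1} ≤ 0 + k * mK {1} := by
      rw [← h, zero_add]
      gcongr
    have := (ENNReal.add_le_add_iff_right hfin).mp hle
    simpa using this
  refine measure_ext_of_evc fun b => ?_
  by_cases hb : b = 0
  · subst hb
    simp [evc_zero]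
  · rw [haar_evc mK hx hb]
    have hsum : ∑ q : Kˣ ⧸ Δ, F ((q.out : K) * b) = 0 := by
      have := coset_sum Δ F hFinv (Units.mk0 b hb)
      simp only [Units.val_mk0] at this
      rw [this]
      exact congrArg NNReal.toReal hS
    have h1 := (Finset.sum_eq_zero_iff_of_nonneg fun q _ => hF0 _).mp hsum
      ((1 : Kˣ) : Kˣ ⧸ Δ) (Finset.mem_univ _)
    have hmem : ((1 : Kˣ) : Kˣ ⧸ Δ).out ∈ Δ := by
      have : ((((1 : Kˣ) : Kˣ ⧸ Δ).out : Kˣ) : Kˣ ⧸ Δ) = ((1 : Kˣ) : Kˣ ⧸ Δ) :=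
        Quotient.out_eq _
      simpa using QuotientGroup.eq.mp this
    rw [hFinv _ hmem] at h1
    simpa [F] using h1

end
end

section
/- Let K be a field with characteristic different from 2, and let F ⊆ K² be a set with at least 4 elements. Then for every t ∈ K*, the difference set (F − F) \ {(0,0)} is not contained in the hyperbola H_t = {(a, t/a) : a ∈ K*} ⊆ K². -/
open Pointwise

/-- Hyperbolas do not contain difference sets of sets with at least four elements: if
`char K ≠ 2`, `F ⊆ K²` has at least `4` elements and `t ∈ K^*`, then
`(F − F) \ {0}` is not contained in the hyperbola `H_t = {(a, t/a) : a ∈ K^*}`. -/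
theorem statement18
    {K : Type*} [Field K] (hchar : ringChar K ≠ 2)
    (F : Set (K × K)) (hF : ∃ f : Fin 4 → K × K, Function.Injective f ∧ ∀ i, f i ∈ F) :
    ∀ t : K, t ≠ 0 →
      ¬ ((F - F) \ {((0 : K), (0 : K))} ⊆
          {p : K × K | ∃ a : K, a ≠ 0 ∧ p = (a, t / a)}) := by
  intro t ht hsub
  obtain ⟨f, hinj, hf⟩ := hF
  have key : ∀ i j, i ≠ j → ((f i).1 - (f j).1) * ((f i).2 - (f j).2) = t := by
    intro i j hij
    have hmem : f i - f j ∈ (F - F) \ {((0 : K), (0 : K))} := by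
      refine ⟨Set.sub_mem_sub (hf i) (hf j), ?_⟩
      intro h
      have h' : f i - f j = 0 := h
      exact hij (hinj (sub_eq_zero.mp h'))
    obtain ⟨a, ha, hp⟩ := hsub hmem
    have h1 : (f i).1 - (f j).1 = a := congrArg Prod.fst hp
    have h2 : (f i).2 - (f j).2 = t / a := congrArg Prod.snd hp
    rw [h1, h2]
    field_simp
  have h2 : (2 : K) ≠ 0 := Ring.two_ne_zero hchar
  have e1 := key 1 0 (by decide)
  have e2 := key 2 0 (by decide)
  have e3 := key 3 0 (by decide)
  have e12 := key 1 2 (by decide)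
  have e13 := key 1 3 (by decide)
  have e23 := key 2 3 (by decide)
  have gram : ∀ a b c x y z : K,
      (2 * (a * x)) * ((2 * (b * y)) * (2 * (c * z)) - (b * z + c * y) * (b * z + c * y))
      - (a * y + b * x) * ((a * y + b * x) * (2 * (c * z)) - (b * z + c * y) * (a * z + c * x))
      + (a * z + c * x) * ((a * y + b * x) * (b * z + c * y) - (2 * (b * y)) * (a * z + c * x))
      = 0 := by
    intros
    ring
  have g := gram ((f 1).1 - (f 0).1) ((f 2).1 - (f 0).1) ((f 3).1 - (f 0).1)
    ((f 1).2 - (f 0).2) ((f 2).2 - (f 0).2) ((f 3).2 - (f 0).2)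
  have g12 : ((f 1).1 - (f 0).1) * ((f 2).2 - (f 0).2)
      + ((f 2).1 - (f 0).1) * ((f 1).2 - (f 0).2) = t := by
    linear_combination e1 + e2 - e12
  have g13 : ((f 1).1 - (f 0).1) * ((f 3).2 - (f 0).2)
      + ((f 3).1 - (f 0).1) * ((f 1).2 - (f 0).2) = t := by
    linear_combination e1 + e3 - e13
  have g23 : ((f 2).1 - (f 0).1) * ((f 3).2 - (f 0).2)
      + ((f 3).1 - (f 0).1) * ((f 2).2 - (f 0).2) = t := by
    linear_combination e2 + e3 - e23
  rw [g12, g13, g23, e1, e2, e3] at g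
  have h4 : 2 ^ 2 * t ^ 3 = 0 := by linear_combination g
  exact mul_ne_zero (pow_ne_zero 2 h2) (pow_ne_zero 3 ht) h4
end

section
/- For every pair of continuous characters ξ₁, ξ₂ of the additive group (ℝ,+), the closure in the torus 𝕋² of the set {(ξ₁(t), ξ₂(1/t)) : t ∈ ℝ, t ≠ 0} is a proper subset of 𝕋², i.e., it is not all of 𝕋². -/
lemma char_zero (ξ : ℝ → Circle) (h : ∀ s t : ℝ, ξ (s + t) = ξ s * ξ t) : ξ 0 = 1 := by
  have := h 0 0
  rw [add_zero] at this
  exact left_eq_mul.mp this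

lemma level_countable (ξ : ℝ → Circle) (hc : Continuous ξ)
    (h : ∀ s t : ℝ, ξ (s + t) = ξ s * ξ t) (z : Circle) (hz : z ≠ 1) :
    {t : ℝ | ξ t = z}.Countable := by
  rcases Set.eq_empty_or_nonempty {t : ℝ | ξ t = z} with he | ⟨t0, ht0⟩
  · rw [he]; exact Set.countable_empty
  have h0 := char_zero ξ h
  have hneg : ∀ t, ξ (-t) = (ξ t)⁻¹ := fun t => by
    have := h (-t) t
    rw [neg_add_cancel, h0] at this
    exact eq_inv_of_mul_eq_one_left this.symm
  let H : AddSubgroup ℝ :=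
    { carrier := {t | ξ t = 1}
      zero_mem' := h0
      add_mem' := by
        intro a b ha hb
        simp only [Set.mem_setOf_eq] at *
        rw [h, ha, hb, one_mul]
      neg_mem' := by
        intro a ha
        simp only [Set.mem_setOf_eq] at *
        rw [hneg, ha, inv_one] }
  have hH : ∀ t, t ∈ H ↔ ξ t = 1 := fun t => Iff.rfl
  have hcount : (H : Set ℝ).Countable := by
    rcases AddSubgroup.dense_or_cyclic H with hd | ⟨a, ha⟩
    · exfalso
      have hcl : IsClosed (H : Set ℝ) := isClosed_eq hc continuous_const
      have : t0 ∈ (H : Set ℝ) := by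
        rw [← hcl.closure_eq]; exact hd t0
      exact hz (ht0.symm.trans this)
    · rw [ha]
      refine (Set.countable_range (fun n : ℤ => n • a)).mono ?_
      intro x hx
      exact AddSubgroup.mem_closure_singleton.mp hx
  refine (hcount.image (fun s => s + t0)).mono ?_
  intro t ht
  refine ⟨t - t0, ?_, by simp⟩
  show ξ (t - t0) = 1
  rw [sub_eq_add_neg, h, hneg, ht, ht0, mul_inv_cancel]

lemma near_zero (ξ : ℝ → Circle) (hc : Continuous ξ) (h0 : ξ 0 = 1) (z : Circle) (hz : z ≠ 1) :
    ∃ U : Set Circle, IsOpen U ∧ z ∈ U ∧ ∃ δ > 0, ∀ t : ℝ, |t| < δ → ξ t ∉ U := by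
  obtain ⟨U, V, hU, hV, hzU, h1V, hd⟩ := t2_separation hz
  refine ⟨U, hU, hzU, ?_⟩
  have : ξ ⁻¹' V ∈ nhds (0 : ℝ) := (hV.preimage hc).mem_nhds (by simpa [h0] using h1V)
  obtain ⟨δ, hδ, hb⟩ := Metric.mem_nhds_iff.mp this
  refine ⟨δ, hδ, fun t ht htU => ?_⟩
  have : ξ t ∈ V := hb (by simpa using ht)
  exact Set.disjoint_left.mp hd htU this

lemma circle_not_countable : ¬ (Set.univ : Set Circle).Countable := by
  intro h
  have := Set.countable_univ_iff.mp h
  have h2 : Countable (Set.Ioc (-Real.pi) Real.pi) := Circle.argEquiv.symm.injective.countable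
  have h3 := Cardinal.mk_Ioc_real (show -Real.pi < Real.pi by linarith [Real.pi_pos])
  have h4 := Cardinal.mk_le_aleph0 (α := Set.Ioc (-Real.pi) Real.pi)
  rw [h3] at h4
  exact absurd h4 (not_le.mpr Cardinal.aleph0_lt_continuum)

/-- For continuous characters `ξ₁, ξ₂` of `(ℝ,+)`, the closure in the torus `𝕋²` of
`{(ξ₁(t), ξ₂(1/t)) : t ∈ ℝ^*}` is a proper subset of `𝕋²`. -/
theorem statement19
    (ξ₁ ξ₂ : ℝ → Circle)
    (hξ₁c : Continuous ξ₁) (hξ₁ : ∀ s t : ℝ, ξ₁ (s + t) = ξ₁ s * ξ₁ t)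
    (hξ₂c : Continuous ξ₂) (hξ₂ : ∀ s t : ℝ, ξ₂ (s + t) = ξ₂ s * ξ₂ t) :
    closure {p : Circle × Circle | ∃ t : ℝ, t ≠ 0 ∧ p = (ξ₁ t, ξ₂ t⁻¹)} ≠ Set.univ := by
  intro huniv
  obtain ⟨z, hz⟩ : ∃ z : Circle, z ≠ 1 := by
    by_contra! hall
    exact circle_not_countable ((Set.countable_singleton (1 : Circle)).mono fun z _ => hall z)
  have key : ∀ w : Circle, w ≠ 1 → ∃ t : ℝ, ξ₁ t = z ∧ ξ₂ t⁻¹ = w := by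
    intro w hw
    obtain ⟨U₁, hU₁, hzU, δ₁, hδ₁, h₁⟩ := near_zero ξ₁ hξ₁c (char_zero _ hξ₁) z hz
    obtain ⟨U₂, hU₂, hwU, δ₂, hδ₂, h₂⟩ := near_zero ξ₂ hξ₂c (char_zero _ hξ₂) w hw
    let K : Set ℝ := Metric.closedBall 0 δ₂⁻¹ ∩ {t | δ₁ ≤ |t|}
    have hK : IsCompact K := (isCompact_closedBall _ _).inter_right
      (isClosed_le continuous_const continuous_abs)
    have hf : ContinuousOn (fun t : ℝ => (ξ₁ t, ξ₂ t⁻¹)) K := by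
      refine hξ₁c.continuousOn.prodMk (hξ₂c.comp_continuousOn (continuousOn_inv₀.mono ?_))
      rintro t ⟨-, ht⟩ h0
      simp only [Set.mem_setOf_eq] at ht h0
      rw [h0, abs_zero] at ht
      linarith
    have hcl : IsClosed ((fun t : ℝ => (ξ₁ t, ξ₂ t⁻¹)) '' K) := (hK.image_of_continuousOn hf).isClosed
    have hmem : (z, w) ∈ closure ((fun t : ℝ => (ξ₁ t, ξ₂ t⁻¹)) '' K) := by
      rw [mem_closure_iff]
      intro O hO hzO
      have hx : (z, w) ∈ closure {p : Circle × Circle | ∃ t : ℝ, t ≠ 0 ∧ p = (ξ₁ t, ξ₂ t⁻¹)} := by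
        rw [huniv]; trivial
      obtain ⟨p, ⟨hpO, hp1, hp2⟩, t, ht, rfl⟩ := mem_closure_iff.mp hx (O ∩ U₁ ×ˢ U₂)
        (hO.inter (hU₁.prod hU₂)) ⟨hzO, hzU, hwU⟩
      refine ⟨_, hpO, t, ⟨?_, ?_⟩, rfl⟩
      · have : δ₂ ≤ |t⁻¹| := not_lt.mp fun hl => h₂ _ hl hp2
        rw [abs_inv] at this
        simpa using (le_inv_comm₀ hδ₂ (abs_pos.mpr ht)).mp this
      · exact not_lt.mp fun hl => h₁ _ hl hp1
    rw [hcl.closure_eq] at hmem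
    obtain ⟨t, -, ht⟩ := hmem
    exact ⟨t, congrArg Prod.fst ht, congrArg Prod.snd ht⟩
  apply circle_not_countable
  refine (((level_countable ξ₁ hξ₁c hξ₁ z hz).image (fun t => ξ₂ t⁻¹)).insert 1).mono ?_
  intro w _
  by_cases hw : w = 1
  · exact Or.inl hw
  · obtain ⟨t, h1, h2⟩ := key w hw
    exact Or.inr ⟨t, h1, h2⟩
end
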